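/- arXiv:2308.07917 — 3 statements merged into one kernel-verified Lean document; each statement's English description precedes it below -/
import Mathlib

section
/- Assume the Felli–Schneider condition Λ = 4(d−1)/(q²−4), and let the setting be as in the quartic expansion lemma, with constant C < ∞ and decomposition u_n = λ_n(u + μ_n(u^{q/2}ω_d + R_n))(· − t_n, D_n ·). Expand R_n(s,ω) = Σ_{l,m} a_{l,m}(s) Y_{l,m}(ω) in an L²(𝕊^{d−1})-orthonormal basis of spherical harmonics of degree l, with Y_{0,0} := |𝕊^{d−1}|^{−1/2} and Y_{2,0}(ω) := √(d²(d+2)/(2(d−1)|𝕊^{d−1}|)) (ω_d² − 1/d). Then for all sufficiently large n: (A) ≥ μ_n⁴ Σ_{l∈{0,2}} 𝓔^{(l)}(a_{l,0}/μ_n), where for g ∈ H¹(ℝ), 𝓔^{(l)}(g) := ∫_ℝ ((1 − C|μ_n|^{min(q−2,1)})((g′)² + (2d·𝟙_{l=2} + Λ)g²) − (q−1)u^{q−2}g² − 2 f^{(l)} g) ds, with f^{(l)} := M u^{2q−3}(√(2(d−1)/(d+2))·𝟙_{l=2} + 𝟙_{l=0}) and M := (q−1)(q−2)√|𝕊^{d−1}|/(2d).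 -/
/-!
The quadratic part of (A) splits orthogonally along the spherical harmonics, and the linear part
only sees the components along `Y_{0,0}` and `Y_{2,0}`, because `ω_d²` is a combination of the two
(`linear_eq`). The contribution of these two components is exactly the right-hand side
(`energy_scale`), so it remains to see that all other components contribute a nonnegative amount
once the damping constant `c = C |μ_n| ^ min (q - 2) 1` is small.

* Degree one. The Felli–Schneider condition gives `d - 1 + Λ = q² Λ / 4`, for which the
  Pöschl–Teller operator `-∂² + q² Λ / 4 - (q - 1) u^{q-2}` is nonnegative with ground state
  `u^{q/2}`. The orthogonality of `R_n` to `u^{q/2} ω_i` makes the coefficient orthogonal to the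
  ground state (`coef_orth`), and the resulting spectral gap absorbs the damping
  (`pt_orth_loss`). The gap comes from completing squares on the two half-lines for functions
  vanishing at the origin.
* Everything else. No basis of spherical harmonics is needed: with the components along
  `Y_{0,0}`, `Y_{2,0}` and `ω_1, …, ω_d` split off, the remainder `rest` is treated on almost every
  line `{ω = const}` with zeroth-order coefficient `2 d + Λ`, which lies strictly above the critical
  value (`pt_high`, `rest_bound`). That the angular energy provides this coefficient is the
  Poincaré inequality with second eigenvalue `2 d` on the sphere (`sph_poincare`,
  `angular_bound`). It is proved first for polynomials, by induction on the degree through the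
  action of the Laplace–Beltrami operator on the leading part (`poly_poincare`), and then for `C¹`
  functions by projecting onto polynomials and the Stone–Weierstrass theorem. Integration by parts
  uses the infinitesimal rotations `x_i ∂_j - x_j ∂_i` and the rotation invariance of the surface
  measure (`integral_Lop`).

Parseval's identity for the split-off family (`parseval`) puts the pieces together in `main_bound`.
-/

open MeasureTheory Real Filter Topology Set
open scoped RealInnerProductSpace

noncomputable section

/-- Euclidean space ℝ^d. -/
abbrev Ed (d : ℕ) : Type := EuclideanSpace ℝ (Fin d)

/-- The unit sphere 𝕊^{d-1}. -/
abbrev Sph (d : ℕ) := Metric.sphere (0 : Ed d) 1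

/-- The surface measure on the unit sphere. -/
def sphMeasure (d : ℕ) : Measure (Sph d) := (volume : Measure (Ed d)).toSphere

/-- The natural measure on the cylinder 𝒞 = ℝ × 𝕊^{d-1}. -/
def cylMeasure (d : ℕ) : Measure (ℝ × Sph d) := (volume : Measure ℝ).prod (sphMeasure d)

/-- The total surface measure |𝕊^{d-1}|. -/
def sphVol (d : ℕ) : ℝ := (sphMeasure d Set.univ).toReal

/-- The last Cartesian coordinate on ℝ^d. -/
def coordLast (d : ℕ) (x : Ed d) : ℝ :=
  if h : 0 < d then x ⟨d - 1, Nat.sub_lt h one_pos⟩ else 0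

/-- Value of a function of the ambient variables at a point of the cylinder. -/
def cylVal (d : ℕ) (φ : ℝ × Ed d → ℝ) (p : ℝ × Sph d) : ℝ := φ (p.1, (p.2 : Ed d))

/-- The partial derivative in the axial direction. -/
def dS (d : ℕ) (φ : ℝ × Ed d → ℝ) (p : ℝ × Sph d) : ℝ :=
  deriv (fun s => φ (s, (p.2 : Ed d))) p.1

/-- The tangential (spherical) gradient: the spatial gradient minus its radial component. -/
def sgrad (d : ℕ) (φ : ℝ × Ed d → ℝ) (p : ℝ × Sph d) : Ed d :=
  gradient (fun x => φ (p.1, x)) (p.2 : Ed d) -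
    ⟪gradient (fun x => φ (p.1, x)) (p.2 : Ed d), (p.2 : Ed d)⟫ • (p.2 : Ed d)

/-- The squared H¹(𝒞)-norm with parameter Λ. -/
def h1NormSq (d : ℕ) (Λ : ℝ) (φ : ℝ × Ed d → ℝ) : ℝ :=
  ∫ p, (dS d φ p ^ 2 + ‖sgrad d φ p‖ ^ 2 + Λ * cylVal d φ p ^ 2) ∂(cylMeasure d)

/-- The H¹(𝒞)-inner product with parameter Λ. -/
def h1Inner (d : ℕ) (Λ : ℝ) (φ ψ : ℝ × Ed d → ℝ) : ℝ :=
  ∫ p, (dS d φ p * dS d ψ p + ⟪sgrad d φ p, sgrad d ψ p⟫ +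
    Λ * cylVal d φ p * cylVal d ψ p) ∂(cylMeasure d)

/-- The L^q(𝒞)-norm. -/
def lqNorm (d : ℕ) (q : ℝ) (φ : ℝ × Ed d → ℝ) : ℝ :=
  (∫ p, |cylVal d φ p| ^ q ∂(cylMeasure d)) ^ (1 / q)

/-- Surrogate for membership in H¹(𝒞): a C¹ function of the ambient variables with
finite H¹-energy and finite L^q-norm on the cylinder. -/
def MemH1 (d : ℕ) (Λ q : ℝ) (φ : ℝ × Ed d → ℝ) : Prop :=
  ContDiff ℝ 1 φ ∧
  Integrable (fun p => dS d φ p ^ 2 + ‖sgrad d φ p‖ ^ 2 + Λ * cylVal d φ p ^ 2) (cylMeasure d) ∧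
  Integrable (fun p => |cylVal d φ p| ^ q) (cylMeasure d)

/-- The optimal constant C_* in the inequality ‖φ‖² ≥ C_* ‖φ‖_q². -/
def Cstar (d : ℕ) (Λ q : ℝ) : ℝ :=
  sSup {c : ℝ | ∀ φ, MemH1 d Λ q φ → c * lqNorm d q φ ^ 2 ≤ h1NormSq d Λ φ}

/-- α = ((q-2)/2)√Λ. -/
def alphaV (q Λ : ℝ) : ℝ := (q - 2) / 2 * Real.sqrt Λ

/-- β = (qΛ/2)^{1/(q-2)}. -/
def betaV (q Λ : ℝ) : ℝ := (q * Λ / 2) ^ (1 / (q - 2))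

/-- The radial optimizer u(s) = β cosh(αs)^{-2/(q-2)}. -/
def Ufun (q Λ : ℝ) (s : ℝ) : ℝ := betaV q Λ * Real.cosh (alphaV q Λ * s) ^ (-(2 / (q - 2)))

/-- u viewed as a function of the ambient cylinder variables. -/
def Ucyl (d : ℕ) (q Λ : ℝ) : ℝ × Ed d → ℝ := fun z => Ufun q Λ z.1

/-- The H¹-distance to the manifold ℳ = {λ u(· - t)} of optimizers. -/
def distM (d : ℕ) (Λ q : ℝ) (φ : ℝ × Ed d → ℝ) : ℝ :=
  ⨅ lt : ℝ × ℝ, Real.sqrt (h1NormSq d Λ fun z => φ z - lt.1 * Ufun q Λ (z.1 - lt.2))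

/-- The deficit functional F. -/
def deficitF (d : ℕ) (Λ q : ℝ) (φ : ℝ × Ed d → ℝ) : ℝ :=
  h1NormSq d Λ φ - Cstar d Λ q * lqNorm d q φ ^ 2

end

noncomputable section

/-- The quadratic-in-R_n term (A) of the quartic expansion, with constant C. -/
def Aterm (d : ℕ) (q Λ C μn : ℝ) (Rn : ℝ × Ed d → ℝ) : ℝ :=
  μn ^ 2 * ((1 - C * |μn| ^ min (q - 2) 1) * h1NormSq d Λ Rn -
    (q - 1) * ∫ p, (Ufun q Λ p.1 ^ (q - 2) * cylVal d Rn p ^ 2 +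
      (q - 2) * μn * Ufun q Λ p.1 ^ (2 * q - 3) * coordLast d (p.2 : Ed d) ^ 2 * cylVal d Rn p)
      ∂(cylMeasure d))

/-- The constant quartic term (B) of the quartic expansion. -/
def Bterm (d : ℕ) (q Λ μn : ℝ) : ℝ :=
  μn ^ 4 * ((q - 1) * (q - 2) / 4) *
    ((q - 1) / (∫ p, Ufun q Λ p.1 ^ q ∂(cylMeasure d)) *
        (∫ p, Ufun q Λ p.1 ^ (2 * q - 2) * coordLast d (p.2 : Ed d) ^ 2 ∂(cylMeasure d)) ^ 2 -
      (q - 3) / 3 *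
        ∫ p, Ufun q Λ p.1 ^ (3 * q - 4) * coordLast d (p.2 : Ed d) ^ 4 ∂(cylMeasure d))

end

noncomputable section

/-- M = (q-1)(q-2)√|𝕊^{d-1}|/(2d). -/
def Mconst (d : ℕ) (q : ℝ) : ℝ := (q - 1) * (q - 2) * Real.sqrt (sphVol d) / (2 * d)

/-- The inhomogeneity f⁽⁰⁾ = M u^{2q-3}. -/
def f0fun (d : ℕ) (q Λ : ℝ) (s : ℝ) : ℝ := Mconst d q * Ufun q Λ s ^ (2 * q - 3)

/-- The inhomogeneity f⁽²⁾ = M u^{2q-3} √(2(d-1)/(d+2)). -/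
def f2fun (d : ℕ) (q Λ : ℝ) (s : ℝ) : ℝ :=
  Mconst d q * Ufun q Λ s ^ (2 * q - 3) * Real.sqrt (2 * ((d : ℝ) - 1) / ((d : ℝ) + 2))

/-- The energy functional 𝓔 with damping constant c, zeroth-order coefficient κ and
inhomogeneity f. -/
def Energy (q Λ c κ : ℝ) (f g : ℝ → ℝ) : ℝ :=
  ∫ s, ((1 - c) * (deriv g s ^ 2 + κ * g s ^ 2) - (q - 1) * Ufun q Λ s ^ (q - 2) * g s ^ 2
    - 2 * f s * g s)

/-- The normalized spherical harmonic of degree 0. -/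
def Y00 (d : ℕ) : Sph d → ℝ := fun _ => (Real.sqrt (sphVol d))⁻¹

/-- The normalized spherical harmonic Y_{2,0} of degree 2. -/
def Y20 (d : ℕ) : Sph d → ℝ := fun ω =>
  Real.sqrt ((d : ℝ) ^ 2 * ((d : ℝ) + 2) / (2 * ((d : ℝ) - 1) * sphVol d)) *
    (coordLast d (ω : Ed d) ^ 2 - 1 / (d : ℝ))

/-- The coefficient s ↦ ⟨R_n(s,·), Y⟩_{L²(𝕊^{d-1})} of the expansion of R_n in spherical
harmonics. -/
def sphCoef (d : ℕ) (Rn : ℝ × Ed d → ℝ) (Y : Sph d → ℝ) (s : ℝ) : ℝ :=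
  ∫ ω, Rn (s, (ω : Ed d)) * Y ω ∂(sphMeasure d)

end

/-! ### The surface measure and integration by parts on the sphere -/

instance sphMeasure_finite (d : ℕ) : IsFiniteMeasure (sphMeasure d) := by
  unfold sphMeasure; infer_instance

theorem sphVol_pos (d : ℕ) (hd : 2 ≤ d) : 0 < sphVol d := by
  have : Nonempty (Fin d) := ⟨⟨0, by omega⟩⟩
  have h : (volume : Measure (Ed d)).toSphere ≠ 0 := Measure.toSphere_ne_zero _
  unfold sphVol
  refine ENNReal.toReal_pos ?_ (measure_ne_top _ _)
  unfold sphMeasure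
  rwa [Ne, Measure.measure_univ_eq_zero]

/-- The action of a linear isometry on the unit sphere. -/
noncomputable def sphRot {d : ℕ} (e : Ed d ≃ₗᵢ[ℝ] Ed d) (ω : Sph d) : Sph d :=
  ⟨e ω, by simp⟩

open scoped Pointwise in
theorem sphRot_measurePreserving {d : ℕ} (e : Ed d ≃ₗᵢ[ℝ] Ed d) :
    MeasurePreserving (sphRot e) (sphMeasure d) (sphMeasure d) := by
  have hm : Measurable (sphRot e) := by
    refine Continuous.measurable ?_
    unfold sphRot
    fun_prop
  refine ⟨hm, ?_⟩
  ext s hs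
  rw [Measure.map_apply hm hs]
  unfold sphMeasure
  rw [Measure.toSphere_apply' _ hs, Measure.toSphere_apply' _ (hm hs)]
  congr 1
  have : (Ioo (0 : ℝ) 1 • ((fun x : Sph d => (x : Ed d)) '' (sphRot e ⁻¹' s))) =
      e ⁻¹' (Ioo (0 : ℝ) 1 • ((fun x : Sph d => (x : Ed d)) '' s)) := by
    ext x
    simp only [Set.mem_smul, Set.mem_preimage, Set.mem_image]
    constructor
    · rintro ⟨r, hr, y, ⟨z, hz, rfl⟩, rfl⟩
      exact ⟨r, hr, _, ⟨_, hz, rfl⟩, by simp [sphRot]⟩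
    · rintro ⟨r, hr, y, ⟨z, hz, rfl⟩, h⟩
      refine ⟨r, hr, _, ⟨sphRot e.symm z, ?_, rfl⟩, ?_⟩
      · have : sphRot e (sphRot e.symm z) = z := by ext1; simp [sphRot]
        rwa [this]
      · apply e.injective
        simp [sphRot, ← h]
  rw [this]
  exact e.measurePreserving.measure_preimage_equiv (f := e.toMeasurableEquiv) _

theorem integral_sphRot {d : ℕ} (e : Ed d ≃ₗᵢ[ℝ] Ed d) (F : Ed d → ℝ) :
    ∫ ω : Sph d, F (e ω) ∂(sphMeasure d) = ∫ ω : Sph d, F ω ∂(sphMeasure d) := by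
  have hemb : MeasurableEmbedding (sphRot e) := by
    refine MeasurableEquiv.measurableEmbedding
      ⟨⟨sphRot e, sphRot e.symm, fun z => ?_, fun z => ?_⟩, ?_, ?_⟩
    · ext1; simp [sphRot]
    · ext1; simp [sphRot]
    · exact (sphRot_measurePreserving e).measurable
    · exact (sphRot_measurePreserving e.symm).measurable
  exact (sphRot_measurePreserving e).integral_comp hemb (fun ω => F (ω : Ed d))

theorem sph_integrable {d : ℕ} {f : Sph d → ℝ} (hf : Continuous f) :
    Integrable f (sphMeasure d) := by
  have := hf.continuousOn.integrableOn_compact (μ := sphMeasure d) isCompact_univ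
  simpa using this


theorem hasDerivAt_slice {d : ℕ} {G : ℝ × Ed d → ℝ} (hG : ContDiff ℝ 1 G) (s : ℝ) (x : Ed d) :
    HasDerivAt (fun s => G (s, x)) (fderiv ℝ G (s, x) (1, 0)) s := by
  have h1 : HasFDerivAt G (fderiv ℝ G (s, x)) (s, x) :=
    (hG.differentiable one_ne_zero).differentiableAt.hasFDerivAt
  have h2 : HasDerivAt (fun s : ℝ => (s, x)) ((1 : ℝ), (0 : Ed d)) s :=
    (hasDerivAt_id s).prodMk (hasDerivAt_const s x)
  exact h1.comp_hasDerivAt s h2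

theorem continuous_fderiv_apply {d : ℕ} {G : ℝ × Ed d → ℝ} (hG : ContDiff ℝ 1 G) :
    Continuous (fun z : ℝ × Ed d => fderiv ℝ G z (1, 0)) :=
  (hG.continuous_fderiv one_ne_zero).clm_apply continuous_const

/-- Differentiation under the integral sign over the sphere. -/
theorem hasDerivAt_sph_integral {d : ℕ} {G : ℝ × Ed d → ℝ} (hG : ContDiff ℝ 1 G)
    {Y : Sph d → ℝ} (hY : Continuous Y) (s : ℝ) :
    HasDerivAt (fun s => ∫ ω : Sph d, G (s, (ω : Ed d)) * Y ω ∂(sphMeasure d))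
      (∫ ω : Sph d, fderiv ℝ G (s, (ω : Ed d)) (1, 0) * Y ω ∂(sphMeasure d)) s := by
  have hc : Continuous (fun p : ℝ × Sph d => fderiv ℝ G (p.1, (p.2 : Ed d)) (1, 0) * Y p.2) := by
    have := continuous_fderiv_apply hG
    exact (this.comp (by fun_prop : Continuous fun p : ℝ × Sph d => (p.1, (p.2 : Ed d)))).mul
      (hY.comp continuous_snd)
  have hcG := hG.continuous
  obtain ⟨B, hB⟩ := ((isCompact_Icc (a := s - 1) (b := s + 1)).prod
    (isCompact_univ (X := Sph d))).exists_bound_of_continuousOn hc.continuousOn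
  refine (hasDerivAt_integral_of_dominated_loc_of_deriv_le
    (F := fun s (ω : Sph d) => G (s, (ω : Ed d)) * Y ω)
    (F' := fun s (ω : Sph d) => fderiv ℝ G (s, (ω : Ed d)) (1, 0) * Y ω)
    (bound := fun _ => B) (Icc_mem_nhds (by linarith) (by linarith) : Icc (s - 1) (s + 1) ∈ 𝓝 s)
    ?_ ?_ ?_ ?_ ?_ ?_).2
  · refine Eventually.of_forall fun t => Continuous.aestronglyMeasurable ?_
    fun_prop
  · exact sph_integrable (by fun_prop)
  · refine Continuous.aestronglyMeasurable ?_
    exact hc.comp (by fun_prop : Continuous fun ω : Sph d => (s, ω))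
  · exact Eventually.of_forall fun ω t ht => hB (t, ω) ⟨ht, mem_univ _⟩
  · exact integrable_const _
  · exact Eventually.of_forall fun ω t _ => (hasDerivAt_slice hG t ω).mul_const _

/-- The standard basis vector `e_i` of `ℝ^d`. -/
noncomputable def ei {d : ℕ} (i : Fin d) : Ed d := EuclideanSpace.single i 1

/-- The infinitesimal rotation `x_i ∂_j - x_j ∂_i` applied to `f`. -/
noncomputable def Lop {d : ℕ} (i j : Fin d) (f : Ed d → ℝ) (x : Ed d) : ℝ :=
  x i * fderiv ℝ f x (ei j) - x j * fderiv ℝ f x (ei i)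

theorem continuous_Lop {d : ℕ} (i j : Fin d) {f : Ed d → ℝ} (hf : ContDiff ℝ 1 f) :
    Continuous (Lop i j f) := by
  have := hf.continuous_fderiv one_ne_zero
  unfold Lop
  fun_prop

/-- Rotation invariance of the surface measure, in infinitesimal form. -/
theorem integral_Lop {d : ℕ} (i j : Fin d) {f : Ed d → ℝ} (hf : ContDiff ℝ 1 f) :
    ∫ ω : Sph d, Lop i j f ω ∂(sphMeasure d) = 0 := by
  let A : Ed d →L[ℝ] Ed d := InnerProductSpace.rankOne ℝ (ei j) (ei i)
    - InnerProductSpace.rankOne ℝ (ei i) (ei j)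
  have hA : ∀ x, A x = x i • ei j - x j • ei i := by
    intro x
    simp [A, ei, EuclideanSpace.inner_single_left]
  have hskew : ∀ t : ℝ, t • A ∈ skewAdjoint (Ed d →L[ℝ] Ed d) := by
    intro t
    rw [skewAdjoint.mem_iff, ContinuousLinearMap.star_eq_adjoint]
    simp only [A, map_smulₛₗ, map_sub, InnerProductSpace.adjoint_rankOne, conj_trivial]
    ext x k
    simp
    ring
  let _ : NormedAlgebra ℚ (Ed d →L[ℝ] Ed d) := NormedAlgebra.restrictScalars ℚ ℝ _
  have hexp0 : NormedSpace.exp ((0 : ℝ) • A) = 1 := by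
    have : (0 : ℝ) • A = 0 := by ext x; simp
    rw [this]
    exact NormedSpace.exp_zero
  have hunit : ∀ t : ℝ, NormedSpace.exp (t • A) ∈ unitary (Ed d →L[ℝ] Ed d) := fun t =>
    NormedSpace.exp_mem_unitary_of_mem_skewAdjoint (hskew t)
  let G : ℝ × Ed d → ℝ := fun z => f (NormedSpace.exp (z.1 • A) z.2)
  have hexp : ContDiff ℝ 1 (fun z : ℝ × Ed d => NormedSpace.exp (z.1 • A)) := by
    have h1 : ContDiff ℝ 1 (NormedSpace.exp : (Ed d →L[ℝ] Ed d) → (Ed d →L[ℝ] Ed d)) := by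
      rw [contDiff_iff_contDiffAt]
      intro x
      exact (NormedSpace.exp_analytic (𝕂 := ℝ) x).contDiffAt
    exact h1.comp (by fun_prop)
  have hG : ContDiff ℝ 1 G := hf.comp (hexp.clm_apply contDiff_snd)
  have hconst : ∀ t, ∫ ω : Sph d, G (t, ω) * 1 ∂(sphMeasure d)
      = ∫ ω : Sph d, f ω ∂(sphMeasure d) := by
    intro t
    have := integral_sphRot (Unitary.linearIsometryEquiv ⟨_, hunit t⟩) f
    simp only [mul_one]
    exact this
  have hd := hasDerivAt_sph_integral hG (Y := fun _ => 1) continuous_const 0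
  simp only [hconst] at hd
  have h0 := hd.unique (hasDerivAt_const _ _)
  rw [← h0]
  refine integral_congr_ae (Eventually.of_forall fun ω => ?_)
  have h1 := hasDerivAt_slice hG 0 (ω : Ed d)
  have h2 : HasDerivAt (fun t : ℝ => NormedSpace.exp (t • A) (ω : Ed d)) (A ω) 0 := by
    have := (hasDerivAt_exp_smul_const (𝕂 := ℝ) A 0).clm_apply (hasDerivAt_const 0 (ω : Ed d))
    rw [hexp0] at this
    simpa using this
  have h3 : HasFDerivAt f (fderiv ℝ f ω) (NormedSpace.exp ((0 : ℝ) • A) (ω : Ed d)) := by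
    rw [hexp0]
    simpa using (hf.differentiable one_ne_zero (ω : Ed d)).hasFDerivAt
  have h4 := h1.unique (h3.comp_hasDerivAt 0 h2)
  simp only [mul_one]
  rw [h4, hA]
  simp [Lop]

theorem Lop_mul {d : ℕ} (i j : Fin d) {f g : Ed d → ℝ} (hf : ContDiff ℝ 1 f)
    (hg : ContDiff ℝ 1 g) (x : Ed d) :
    Lop i j (fun y => f y * g y) x = Lop i j f x * g x + f x * Lop i j g x := by
  unfold Lop
  rw [fderiv_fun_mul (hf.differentiable one_ne_zero x) (hg.differentiable one_ne_zero x)]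
  simp only [add_apply, smul_apply, smul_eq_mul]
  ring

/-- Integration by parts on the sphere. -/
theorem integral_Lop_mul {d : ℕ} (i j : Fin d) {f g : Ed d → ℝ} (hf : ContDiff ℝ 1 f)
    (hg : ContDiff ℝ 1 g) :
    ∫ ω : Sph d, Lop i j f ω * g ω ∂(sphMeasure d) =
      - ∫ ω : Sph d, f ω * Lop i j g ω ∂(sphMeasure d) := by
  have h := integral_Lop i j (hf.mul hg)
  have hcf := hf.continuous
  have hcg := hg.continuous
  have hLf := continuous_Lop i j hf
  have hLg := continuous_Lop i j hg
  simp only [Lop_mul i j hf hg] at h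
  rw [integral_add (sph_integrable (by fun_prop)) (sph_integrable (by fun_prop))] at h
  linarith

/-! ### Polynomials on the sphere and the Laplace–Beltrami operator -/

/-- Evaluation of a polynomial as a function on `ℝ^d`. -/
noncomputable def ev {d : ℕ} (p : MvPolynomial (Fin d) ℝ) (x : Ed d) : ℝ :=
  MvPolynomial.eval x.ofLp p

theorem ev_add {d : ℕ} (p r : MvPolynomial (Fin d) ℝ) (x : Ed d) :
    ev (p + r) x = ev p x + ev r x := by simp [ev]

theorem ev_sub {d : ℕ} (p r : MvPolynomial (Fin d) ℝ) (x : Ed d) :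
    ev (p - r) x = ev p x - ev r x := by simp [ev]

theorem ev_mul {d : ℕ} (p r : MvPolynomial (Fin d) ℝ) (x : Ed d) :
    ev (p * r) x = ev p x * ev r x := by simp [ev]

theorem contDiff_ev {d : ℕ} (p : MvPolynomial (Fin d) ℝ) : ContDiff ℝ 1 (ev p) := by
  induction p using MvPolynomial.induction_on with
  | C a =>
    have : (ev (MvPolynomial.C a) : Ed d → ℝ) = fun _ => a := by ext; simp [ev]
    rw [this]; exact contDiff_const
  | add p r hp hr =>
    have : ev (p + r) = fun x => ev p x + ev r x := funext (ev_add p r)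
    rw [this]; exact hp.add hr
  | mul_X p i hp =>
    have : (ev (p * MvPolynomial.X i) : Ed d → ℝ) = fun y => ev p y * y i := by
      ext y; simp [ev]
    rw [this]; exact hp.mul (by fun_prop)

theorem continuous_ev {d : ℕ} (p : MvPolynomial (Fin d) ℝ) : Continuous (ev p) :=
  (contDiff_ev p).continuous

theorem fderiv_ev {d : ℕ} (p : MvPolynomial (Fin d) ℝ) (x : Ed d) (j : Fin d) :
    fderiv ℝ (ev p) x (ei j) = ev (MvPolynomial.pderiv j p) x := by
  have hdiff : ∀ p : MvPolynomial (Fin d) ℝ, DifferentiableAt ℝ (ev p) x := fun p =>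
    (contDiff_ev p).differentiable one_ne_zero x
  induction p using MvPolynomial.induction_on with
  | C a =>
    have : (ev (MvPolynomial.C a) : Ed d → ℝ) = fun _ => a := by ext; simp [ev]
    rw [this]
    simp [ev]
  | add p r hp hr =>
    have : ev (p + r) = fun x => ev p x + ev r x := funext (ev_add p r)
    rw [this, fderiv_fun_add (hdiff p) (hdiff r), map_add, ev_add, ← hp, ← hr]
    rfl
  | mul_X p i hp =>
    have : (ev (p * MvPolynomial.X i) : Ed d → ℝ) = fun y => ev p y * y i := by
      ext y; simp [ev]
    have h1 : HasFDerivAt (fun y : Ed d => y i) (EuclideanSpace.proj i : Ed d →L[ℝ] ℝ) x :=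
      (EuclideanSpace.proj i : Ed d →L[ℝ] ℝ).hasFDerivAt
    rw [this, fderiv_fun_mul (hdiff p) h1.differentiableAt, h1.fderiv, MvPolynomial.pderiv_mul,
      ev_add, ev_mul, ev_mul, ← hp]
    simp only [add_apply, smul_apply, smul_eq_mul]
    rcases eq_or_ne i j with rfl | hij
    · simp [ev, ei]; ring
    · simp [ev, ei, MvPolynomial.pderiv_X_of_ne hij, hij]; ring

/-- The infinitesimal rotation `x_i ∂_j - x_j ∂_i` acting on polynomials. -/
noncomputable def LP {d : ℕ} (i j : Fin d) (p : MvPolynomial (Fin d) ℝ) :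
    MvPolynomial (Fin d) ℝ :=
  MvPolynomial.X i * MvPolynomial.pderiv j p - MvPolynomial.X j * MvPolynomial.pderiv i p

theorem Lop_ev {d : ℕ} (i j : Fin d) (p : MvPolynomial (Fin d) ℝ) (x : Ed d) :
    Lop i j (ev p) x = ev (LP i j p) x := by
  simp [Lop, fderiv_ev, LP, ev]

/-- `∑_{i,j} (x_i ∂_j - x_j ∂_i)²`, that is, twice the Laplace–Beltrami operator of the sphere. -/
noncomputable def DP {d : ℕ} (p : MvPolynomial (Fin d) ℝ) : MvPolynomial (Fin d) ℝ :=
  ∑ i, ∑ j, LP i j (LP i j p)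

theorem LP_add {d : ℕ} (i j : Fin d) (p r : MvPolynomial (Fin d) ℝ) :
    LP i j (p + r) = LP i j p + LP i j r := by
  simp only [LP, map_add]; ring

theorem DP_add {d : ℕ} (p r : MvPolynomial (Fin d) ℝ) : DP (p + r) = DP p + DP r := by
  simp only [DP, LP_add, Finset.sum_add_distrib]

/-- Polynomials of total degree at most `k`. -/
noncomputable abbrev Wk (d k : ℕ) : Submodule ℝ (MvPolynomial (Fin d) ℝ) :=
  MvPolynomial.restrictTotalDegree (Fin d) ℝ k

theorem Wk_mono {d k l : ℕ} (h : k ≤ l) {p : MvPolynomial (Fin d) ℝ} (hp : p ∈ Wk d k) :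
    p ∈ Wk d l := by
  rw [MvPolynomial.mem_restrictTotalDegree] at *
  omega

/-- An additive property of homogeneous polynomials of degree at most `k` holds on `Wk d k`. -/
theorem Wk_induction {d k : ℕ} {P : MvPolynomial (Fin d) ℝ → Prop} (h0 : P 0)
    (hadd : ∀ p r, P p → P r → P (p + r))
    (hmon : ∀ m ≤ k, ∀ p : MvPolynomial (Fin d) ℝ, p.IsHomogeneous m → P p)
    {p : MvPolynomial (Fin d) ℝ} (hp : p ∈ Wk d k) : P p := by
  rw [MvPolynomial.mem_restrictTotalDegree] at hp
  rw [← MvPolynomial.sum_homogeneousComponent p]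
  have : ∀ s : Finset ℕ, (∀ i ∈ s, i ≤ k) →
      P (∑ i ∈ s, MvPolynomial.homogeneousComponent i p) := by
    intro s
    induction s using Finset.induction_on with
    | empty => intro _; simpa using h0
    | insert a s ha ih =>
      intro h
      rw [Finset.sum_insert ha]
      refine hadd _ _ (hmon a (h a (by simp)) _
        (MvPolynomial.homogeneousComponent_isHomogeneous a p)) (ih fun i hi => h i (by simp [hi]))
  refine this _ fun i hi => ?_
  have := Finset.mem_range.1 hi
  omega

theorem pderiv_mem {d k : ℕ} (i : Fin d) {p : MvPolynomial (Fin d) ℝ} (hp : p ∈ Wk d k) :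
    MvPolynomial.pderiv i p ∈ Wk d (k - 1) := by
  refine Wk_induction (P := fun p => MvPolynomial.pderiv i p ∈ Wk d (k - 1)) ?_ ?_ ?_ hp
  · simp
  · intro p r hp hr
    rw [map_add]; exact Submodule.add_mem _ hp hr
  · intro m hm p hp
    rw [MvPolynomial.mem_restrictTotalDegree]
    have := (hp.pderiv (i := i)).totalDegree_le
    omega

theorem X_mul_pderiv_mem {d k : ℕ} (i j : Fin d) {p : MvPolynomial (Fin d) ℝ}
    (hp : p ∈ Wk d k) : MvPolynomial.X j * MvPolynomial.pderiv i p ∈ Wk d k := by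
  rcases Nat.eq_zero_or_pos k with rfl | hk
  · rw [MvPolynomial.mem_restrictTotalDegree, Nat.le_zero,
      MvPolynomial.totalDegree_eq_zero_iff_eq_C] at hp
    rw [hp]; simp
  · have h := pderiv_mem i hp
    rw [MvPolynomial.mem_restrictTotalDegree] at *
    refine (MvPolynomial.totalDegree_mul _ _).trans ?_
    rw [MvPolynomial.totalDegree_X]
    omega

theorem LP_mem {d k : ℕ} (i j : Fin d) {p : MvPolynomial (Fin d) ℝ} (hp : p ∈ Wk d k) :
    LP i j p ∈ Wk d k :=
  Submodule.sub_mem _ (X_mul_pderiv_mem _ _ hp) (X_mul_pderiv_mem _ _ hp)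

theorem DP_mem {d k : ℕ} {p : MvPolynomial (Fin d) ℝ} (hp : p ∈ Wk d k) : DP p ∈ Wk d k :=
  Submodule.sum_mem _ fun _ _ => Submodule.sum_mem _ fun _ _ => LP_mem _ _ (LP_mem _ _ hp)

theorem pderiv_comm' {d : ℕ} (i j : Fin d) (p : MvPolynomial (Fin d) ℝ) :
    MvPolynomial.pderiv i (MvPolynomial.pderiv j p)
      = MvPolynomial.pderiv j (MvPolynomial.pderiv i p) := by
  have : ⁅(MvPolynomial.pderiv i : Derivation ℝ (MvPolynomial (Fin d) ℝ) (MvPolynomial (Fin d) ℝ)),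
      (MvPolynomial.pderiv j : Derivation ℝ (MvPolynomial (Fin d) ℝ) (MvPolynomial (Fin d) ℝ))⁆ = 0 := by
    apply MvPolynomial.derivation_ext
    intro k
    simp [Derivation.commutator_apply, MvPolynomial.pderiv_X, Pi.single_apply, apply_ite]
  have := congrArg (fun D => D p) this
  simpa [Derivation.commutator_apply, sub_eq_zero] using this

open MvPolynomial in
/-- In terms of the Euler operator `E = ∑ x_i ∂_i`, twice the Laplace–Beltrami operator is
`2 (|x|² Δ - E² - (d-2) E)`; on homogeneous polynomials `E` is multiplication by the degree. -/
theorem DP_homogeneous {d k : ℕ} {p : MvPolynomial (Fin d) ℝ} (hp : p.IsHomogeneous k) :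
    DP p = 2 * ((∑ i, X i * X i) * ∑ j, pderiv j (pderiv j p))
      - C (2 * (k : ℝ) * (k + d - 2)) * p := by
  have hE : ∑ i, X i * pderiv i p = C (k : ℝ) * p := by
    rw [hp.sum_X_mul_pderiv, nsmul_eq_mul]; simp
  have hEE : ∑ i, ∑ j, X i * (X j * pderiv j (pderiv i p))
      = C ((k : ℝ) * k - k) * p := by
    have h1 : ∀ i, pderiv i (∑ j, X j * pderiv j p) = C (k : ℝ) * pderiv i p := by
      intro i; rw [hE, pderiv_C_mul]
    have h2 : ∀ i, pderiv i (∑ j, X j * pderiv j p) =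
        pderiv i p + ∑ j, X j * pderiv j (pderiv i p) := by
      intro i
      rw [map_sum]
      simp only [pderiv_mul, pderiv_X, Finset.sum_add_distrib, Pi.single_apply, ite_mul, one_mul,
        zero_mul, Finset.mem_univ, if_true, Finset.sum_ite_eq']
      congr 1
      exact Finset.sum_congr rfl fun j _ => by rw [pderiv_comm']
    have h3 : ∀ i, ∑ j, X i * (X j * pderiv j (pderiv i p))
        = C (k : ℝ) * (X i * pderiv i p) - X i * pderiv i p := by
      intro i
      rw [← Finset.mul_sum]
      have := (h2 i).symm.trans (h1 i)
      rw [← eq_sub_iff_add_eq'] at this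
      rw [this]; ring
    simp only [h3, Finset.sum_sub_distrib, ← Finset.mul_sum, hE, map_sub, map_mul]
    ring
  have hterm : ∀ i j : Fin d, LP i j (LP i j p) =
      X i * X i * pderiv j (pderiv j p) + X j * X j * pderiv i (pderiv i p)
      - X i * (X j * pderiv j (pderiv i p)) - X i * (X j * pderiv j (pderiv i p))
      - X i * pderiv i p - X j * pderiv j p
      + (if i = j then X i * pderiv j p + X j * pderiv i p else 0) := by
    intro i j
    rcases eq_or_ne i j with rfl | hij
    · simp only [LP, if_true]
      simp
      ring
    · simp only [LP, map_sub, pderiv_mul, pderiv_X_self, pderiv_X_of_ne hij,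
        pderiv_X_of_ne hij.symm, if_neg hij, pderiv_comm' i j]
      ring
  have hd : (∑ _i : Fin d, (1 : MvPolynomial (Fin d) ℝ)) = C (d : ℝ) := by simp
  unfold DP
  simp only [hterm, Finset.sum_add_distrib, Finset.sum_sub_distrib, Finset.sum_ite_eq,
    Finset.mem_univ, if_true, hEE, hE]
  simp only [Finset.sum_const, Finset.card_univ, Fintype.card_fin, nsmul_eq_mul, hE,
    ← Finset.mul_sum, ← Finset.sum_mul]
  simp only [map_mul, map_sub, map_add, map_ofNat, map_natCast]
  ring

theorem ev_sq_sum {d : ℕ} (ω : Sph d) :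
    ev (∑ i, MvPolynomial.X i * MvPolynomial.X i : MvPolynomial (Fin d) ℝ) (ω : Ed d) = 1 := by
  have h : ‖(ω : Ed d)‖ ^ 2 = 1 := by simp
  rw [EuclideanSpace.norm_sq_eq] at h
  simpa [ev, pow_two] using h

/-- On the sphere, `DP` acts on degree `k + 1` as a scalar up to terms of lower degree. -/
theorem DP_leading {d k : ℕ} {p : MvPolynomial (Fin d) ℝ} (hp : p ∈ Wk d (k + 1)) :
    ∃ r ∈ Wk d k, ∀ ω : Sph d,
      ev (DP p) ω = -(2 * ((k : ℝ) + 1) * (k + d - 1)) * ev p ω + ev r ω := by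
  generalize hc : -(2 * ((k : ℝ) + 1) * (k + d - 1)) = c
  let P : MvPolynomial (Fin d) ℝ → Prop := fun p => ∃ r ∈ Wk d k, ∀ ω : Sph d,
      ev (DP p) ω = c * ev p ω + ev r ω
  have key : P 0 → (∀ p r, P p → P r → P (p + r)) →
      (∀ m ≤ k + 1, ∀ p : MvPolynomial (Fin d) ℝ, p.IsHomogeneous m → P p) → P p :=
    fun h1 h2 h3 => Wk_induction h1 h2 h3 hp
  refine key ?_ ?_ ?_
  · exact ⟨0, Submodule.zero_mem _, fun ω => by simp [ev, DP, LP]⟩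
  · rintro p s ⟨r, hr, h⟩ ⟨r', hr', h'⟩
    refine ⟨r + r', Submodule.add_mem _ hr hr', fun ω => ?_⟩
    rw [DP_add, ev_add, ev_add, ev_add, h, h']
    ring
  · intro m hm p hp
    rcases Nat.lt_or_ge m (k + 1) with hlt | hge
    · have hpk : p ∈ Wk d k := by
        rw [MvPolynomial.mem_restrictTotalDegree]
        exact hp.totalDegree_le.trans (by omega)
      refine ⟨DP p + MvPolynomial.C (-c) * p,
        Submodule.add_mem _ (DP_mem hpk) ?_, fun ω => ?_⟩
      · rw [← MvPolynomial.smul_eq_C_mul]; exact Submodule.smul_mem _ _ hpk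
      · rw [ev_add, ev_mul]; simp [ev]
    · obtain rfl : m = k + 1 := by omega
      have hpk : p ∈ Wk d (k + 1) := by
        rw [MvPolynomial.mem_restrictTotalDegree]
        exact hp.totalDegree_le
      refine ⟨MvPolynomial.C 2 * ∑ j, MvPolynomial.pderiv j (MvPolynomial.pderiv j p), ?_,
        fun ω => ?_⟩
      · rw [← MvPolynomial.smul_eq_C_mul]
        refine Submodule.smul_mem _ _ (Submodule.sum_mem _ fun j _ => ?_)
        exact Wk_mono (by omega) (pderiv_mem j (pderiv_mem j hpk))
      · rw [DP_homogeneous hp, ev_sub, ev_mul, ev_mul, ev_sq_sum, ev_mul, ev_mul]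
        simp only [ev, MvPolynomial.eval_C, map_ofNat, ← hc]
        push_cast
        ring

/-- Polynomials of degree at most one are affine. -/
theorem Wk_one {d : ℕ} {p : MvPolynomial (Fin d) ℝ} (hp : p ∈ Wk d 1) :
    ∃ (c : ℝ) (v : Fin d → ℝ),
      p = MvPolynomial.C c + ∑ i, MvPolynomial.C (v i) * MvPolynomial.X i := by
  refine Wk_induction (P := fun p => ∃ (c : ℝ) (v : Fin d → ℝ),
      p = MvPolynomial.C c + ∑ i, MvPolynomial.C (v i) * MvPolynomial.X i) ?_ ?_ ?_ hp
  · exact ⟨0, 0, by simp⟩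
  · rintro p r ⟨c, v, rfl⟩ ⟨c', v', rfl⟩
    refine ⟨c + c', v + v', ?_⟩
    simp only [Pi.add_apply, map_add, add_mul, Finset.sum_add_distrib]
    ring
  · intro m hm p hp
    interval_cases m
    · have := hp.totalDegree_le
      rw [Nat.le_zero, MvPolynomial.totalDegree_eq_zero_iff_eq_C] at this
      exact ⟨MvPolynomial.coeff 0 p, 0, by simpa using this⟩
    · have h := hp.sum_X_mul_pderiv
      have hv : ∀ i, ∃ a : ℝ, MvPolynomial.pderiv i p = MvPolynomial.C a := by
        intro i
        have := (hp.pderiv (i := i)).totalDegree_le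
        exact ⟨_, MvPolynomial.totalDegree_eq_zero_iff_eq_C.1 (Nat.le_zero.1 this)⟩
      choose v hv using hv
      refine ⟨0, v, ?_⟩
      rw [one_smul] at h
      rw [← h]
      simp only [hv, map_zero, zero_add]
      exact Finset.sum_congr rfl fun i _ => mul_comm _ _

/-! ### Surface integrals of polynomials, projection and approximation -/

/-- The surface integral of a polynomial. -/
noncomputable def Jint {d : ℕ} (p : MvPolynomial (Fin d) ℝ) : ℝ :=
  ∫ ω : Sph d, ev p ω ∂(sphMeasure d)

theorem ev_integrable {d : ℕ} (p : MvPolynomial (Fin d) ℝ) :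
    Integrable (fun ω : Sph d => ev p ω) (sphMeasure d) :=
  sph_integrable ((continuous_ev p).comp continuous_subtype_val)

theorem Jint_add {d : ℕ} (p r : MvPolynomial (Fin d) ℝ) : Jint (p + r) = Jint p + Jint r := by
  simp only [Jint, ev_add]
  exact integral_add (ev_integrable p) (ev_integrable r)

theorem Jint_C_mul {d : ℕ} (c : ℝ) (p : MvPolynomial (Fin d) ℝ) :
    Jint (MvPolynomial.C c * p) = c * Jint p := by
  simp only [Jint, ev_mul]
  rw [← integral_const_mul]
  simp [ev]

theorem Jint_sub {d : ℕ} (p r : MvPolynomial (Fin d) ℝ) : Jint (p - r) = Jint p - Jint r := by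
  simp only [Jint, ev_sub]
  exact integral_sub (ev_integrable p) (ev_integrable r)

theorem Jint_sum {d : ℕ} {ι : Type*} (s : Finset ι) (p : ι → MvPolynomial (Fin d) ℝ) :
    Jint (∑ i ∈ s, p i) = ∑ i ∈ s, Jint (p i) := by
  classical
  induction s using Finset.induction_on with
  | empty => simp [Jint, ev]
  | insert a s ha ih => rw [Finset.sum_insert ha, Finset.sum_insert ha, Jint_add, ih]

theorem Jint_congr {d : ℕ} {p r : MvPolynomial (Fin d) ℝ}
    (h : ∀ ω : Sph d, ev p ω = ev r ω) : Jint p = Jint r := by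
  simp only [Jint, h]

theorem Jint_C {d : ℕ} (c : ℝ) : Jint (MvPolynomial.C c : MvPolynomial (Fin d) ℝ)
    = c * sphVol d := by
  simp [Jint, ev, sphVol, Measure.real, mul_comm]

theorem Jint_LP {d : ℕ} (i j : Fin d) (p : MvPolynomial (Fin d) ℝ) : Jint (LP i j p) = 0 := by
  have := integral_Lop i j (contDiff_ev p)
  simp only [Lop_ev] at this
  exact this

theorem Jint_odd {d : ℕ} (p : MvPolynomial (Fin d) ℝ) (h : ∀ x : Ed d, ev p (-x) = - ev p x) :
    Jint p = 0 := by
  have h1 := integral_sphRot (LinearIsometryEquiv.neg ℝ) (ev p)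
  simp only [LinearIsometryEquiv.coe_neg, h, integral_neg] at h1
  unfold Jint
  linarith

theorem Jint_X {d : ℕ} (i : Fin d) : Jint (MvPolynomial.X i) = 0 :=
  Jint_odd _ fun x => by simp [ev]

theorem Jint_X_mul_X_ne {d : ℕ} {i j : Fin d} (hij : i ≠ j) :
    Jint (MvPolynomial.X i * MvPolynomial.X j) = 0 := by
  have h := Jint_LP i j (MvPolynomial.X i * MvPolynomial.X i)
  have e : LP i j (MvPolynomial.X i * MvPolynomial.X i)
      = MvPolynomial.C (-2) * (MvPolynomial.X i * MvPolynomial.X j) := by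
    simp only [LP, MvPolynomial.pderiv_mul, MvPolynomial.pderiv_X_self,
      MvPolynomial.pderiv_X_of_ne hij, map_neg, map_ofNat]
    ring
  rw [e, Jint_C_mul] at h
  linarith

theorem Jint_X_sq_eq {d : ℕ} (i j : Fin d) :
    Jint (MvPolynomial.X i * MvPolynomial.X i) = Jint (MvPolynomial.X j * MvPolynomial.X j) := by
  rcases eq_or_ne i j with rfl | hij
  · rfl
  have h := Jint_LP i j (MvPolynomial.X i * MvPolynomial.X j)
  have e : LP i j (MvPolynomial.X i * MvPolynomial.X j)
      = MvPolynomial.X i * MvPolynomial.X i - MvPolynomial.X j * MvPolynomial.X j := by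
    simp only [LP, MvPolynomial.pderiv_mul, MvPolynomial.pderiv_X_self,
      MvPolynomial.pderiv_X_of_ne hij, MvPolynomial.pderiv_X_of_ne hij.symm]
    ring
  rw [e, Jint_sub] at h
  linarith

theorem Jint_sphere {d : ℕ} (p : MvPolynomial (Fin d) ℝ) :
    ∑ i, Jint (MvPolynomial.X i * MvPolynomial.X i * p) = Jint p := by
  rw [← Jint_sum, ← Finset.sum_mul]
  refine Jint_congr fun ω => ?_
  rw [ev_mul, ev_sq_sum, one_mul]

theorem Jint_X_sq {d : ℕ} (hd : 2 ≤ d) (i : Fin d) :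
    Jint (MvPolynomial.X i * MvPolynomial.X i) = sphVol d / d := by
  have h := Jint_sphere (d := d) (MvPolynomial.C 1)
  simp only [map_one, mul_one] at h
  rw [Finset.sum_congr rfl fun j _ => Jint_X_sq_eq j i] at h
  have h1 := Jint_C (d := d) 1
  rw [map_one, one_mul] at h1
  rw [h1] at h
  have : (d : ℝ) ≠ 0 := by positivity
  simp at h
  field_simp
  linarith

theorem Jint_X_four {d : ℕ} (hd : 2 ≤ d) (i : Fin d) :
    Jint ((MvPolynomial.X i * MvPolynomial.X i) * (MvPolynomial.X i * MvPolynomial.X i))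
      = 3 * sphVol d / (d * (d + 2)) := by
  have h := Jint_sphere (d := d) (MvPolynomial.X i * MvPolynomial.X i)
  set Q := Jint ((MvPolynomial.X i * MvPolynomial.X i) * (MvPolynomial.X i * MvPolynomial.X i))
    with hQ
  have h3 : ∀ j, j ≠ i → Jint (MvPolynomial.X j * MvPolynomial.X j *
      (MvPolynomial.X i * MvPolynomial.X i)) = Q / 3 := by
    intro j hj
    have h := Jint_LP i j (MvPolynomial.X j *
      (MvPolynomial.X i * (MvPolynomial.X i * MvPolynomial.X i)))
    have e : LP i j (MvPolynomial.X j *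
        (MvPolynomial.X i * (MvPolynomial.X i * MvPolynomial.X i)))
        = (MvPolynomial.X i * MvPolynomial.X i) * (MvPolynomial.X i * MvPolynomial.X i)
          - MvPolynomial.C 3 * (MvPolynomial.X j * MvPolynomial.X j *
      (MvPolynomial.X i * MvPolynomial.X i)) := by
      simp only [LP, MvPolynomial.pderiv_mul, MvPolynomial.pderiv_X_self,
        MvPolynomial.pderiv_X_of_ne hj, MvPolynomial.pderiv_X_of_ne hj.symm, map_ofNat]
      ring
    rw [e, Jint_sub, Jint_C_mul, ← hQ] at h
    linarith
  rw [← Finset.add_sum_erase _ _ (Finset.mem_univ i), ← hQ,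
    Finset.sum_congr rfl fun j hj => h3 j (Finset.ne_of_mem_erase hj), Jint_X_sq hd] at h
  simp only [Finset.sum_const, Finset.card_erase_of_mem (Finset.mem_univ i), Finset.card_univ,
    Fintype.card_fin, nsmul_eq_mul] at h
  rw [Nat.cast_sub (by omega)] at h
  have hd0 : (0 : ℝ) < d := by positivity
  field_simp
  field_simp at h
  push_cast at h
  linarith

/-- Symmetry of the Dirichlet form between a `C¹` function and a polynomial. -/
theorem integral_Lop_ev {d : ℕ} {f : Ed d → ℝ} (hf : ContDiff ℝ 1 f)
    (p : MvPolynomial (Fin d) ℝ) :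
    ∫ ω : Sph d, ∑ i, ∑ j, Lop i j f ω * Lop i j (ev p) ω ∂(sphMeasure d) =
      - ∫ ω : Sph d, f ω * ev (DP p) ω ∂(sphMeasure d) := by
  have hcf := hf.continuous
  have hL := fun i j => continuous_Lop i j hf
  have hev := fun p : MvPolynomial (Fin d) ℝ => continuous_ev p
  have hLe := fun i j => continuous_Lop i j (contDiff_ev p)
  have e : ∀ ω : Sph d, f ω * ev (DP p) ω = ∑ i, ∑ j, f ω * Lop i j (ev (LP i j p)) ω := by
    intro ω
    simp only [Lop_ev, ← Finset.mul_sum]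
    simp [DP, ev]
  simp only [e]
  rw [integral_finsetSum _ fun i _ => sph_integrable (by fun_prop),
    integral_finsetSum _ fun i _ => sph_integrable ?_, ← Finset.sum_neg_distrib]
  · refine Finset.sum_congr rfl fun i _ => ?_
    rw [integral_finsetSum _ fun j _ => sph_integrable (by fun_prop),
      integral_finsetSum _ fun j _ => sph_integrable ?_, ← Finset.sum_neg_distrib]
    · refine Finset.sum_congr rfl fun j _ => ?_
      have := integral_Lop_mul i j hf (contDiff_ev (LP i j p))
      rw [← this]
      simp only [Lop_ev]
    · have := fun j => continuous_Lop i j (contDiff_ev (LP i j p))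
      fun_prop
  · have := fun j => continuous_Lop i j (contDiff_ev (LP i j p))
    fun_prop

theorem Jint_DP_symm {d : ℕ} (p r : MvPolynomial (Fin d) ℝ) :
    Jint (p * DP r) = Jint (r * DP p) := by
  have h1 := integral_Lop_ev (contDiff_ev p) r
  have h2 := integral_Lop_ev (contDiff_ev r) p
  have : ∫ ω : Sph d, ∑ i, ∑ j, Lop i j (ev p) ω * Lop i j (ev r) ω ∂(sphMeasure d)
      = ∫ ω : Sph d, ∑ i, ∑ j, Lop i j (ev r) ω * Lop i j (ev p) ω ∂(sphMeasure d) := by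
    simp only [mul_comm]
  simp only [Jint, ev_mul]
  linarith

theorem Jint_sq_nonneg {d : ℕ} (p : MvPolynomial (Fin d) ℝ) : 0 ≤ Jint (p * p) := by
  simp only [Jint, ev_mul]
  exact integral_nonneg fun ω => mul_self_nonneg _

/-- Restriction of polynomials to the sphere, as continuous functions. -/
noncomputable def sphRestr (d : ℕ) : MvPolynomial (Fin d) ℝ →ₐ[ℝ] C(Sph d, ℝ) :=
  MvPolynomial.aeval fun i => ⟨fun ω : Sph d => (ω : Ed d) i, by fun_prop⟩

theorem sphRestr_apply {d : ℕ} (p : MvPolynomial (Fin d) ℝ) (ω : Sph d) :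
    sphRestr d p ω = ev p ω := by
  induction p using MvPolynomial.induction_on with
  | C a => simp [sphRestr, ev]
  | add p r hp hr => rw [map_add, ev_add, ← hp, ← hr]; rfl
  | mul_X p i hp =>
    rw [map_mul, ev_mul, ContinuousMap.mul_apply, hp]
    simp [sphRestr, ev]

/-- `L²` projection of a continuous function on polynomials of degree at most `k`. -/
theorem exists_proj {d : ℕ} (k : ℕ) {f : Sph d → ℝ} (hf : Continuous f) :
    ∃ g ∈ Wk d k, ∀ r ∈ Wk d k,
      ∫ ω : Sph d, (f ω - ev g ω) * ev r ω ∂(sphMeasure d) = 0 := by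
  let T : MvPolynomial (Fin d) ℝ →ₗ[ℝ] Lp ℝ 2 (sphMeasure d) :=
    (ContinuousMap.toLp (E := ℝ) 2 (sphMeasure d) ℝ).toLinearMap.comp (sphRestr d).toLinearMap
  let U : Submodule ℝ (Lp ℝ 2 (sphMeasure d)) := (Wk d k).map T
  have : FiniteDimensional ℝ U := inferInstanceAs (FiniteDimensional ℝ ((Wk d k).map T))
  let F : C(Sph d, ℝ) := ⟨f, hf⟩
  let v := ContinuousMap.toLp (E := ℝ) 2 (sphMeasure d) ℝ F
  obtain ⟨g, hg, hgv⟩ := (U.starProjection_apply_mem v : U.starProjection v ∈ U)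
  refine ⟨g, hg, fun r hr => ?_⟩
  have h := U.starProjection_inner_eq_zero v (T r) ⟨r, hr, rfl⟩
  rw [← hgv] at h
  have e : v - T g = ContinuousMap.toLp (E := ℝ) 2 (sphMeasure d) ℝ (F - sphRestr d g) := by
    simp [v, T]
  rw [e] at h
  have h2 := ContinuousMap.inner_toLp (𝕜 := ℝ) (sphMeasure d) (F - sphRestr d g) (sphRestr d r)
  have h3 := h2.symm.trans h
  rw [← h3]
  refine integral_congr_ae (Eventually.of_forall fun ω => ?_)
  simp [F, sphRestr_apply, mul_comm]

theorem exists_poly_approx {d : ℕ} {f : Sph d → ℝ} (hf : Continuous f) {ε : ℝ} (hε : 0 < ε) :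
    ∃ p : MvPolynomial (Fin d) ℝ, ∀ ω : Sph d, |f ω - ev p ω| ≤ ε := by
  have hsep : ((sphRestr d).range).SeparatesPoints := by
    intro x y hxy
    have : ∃ i, (x : Ed d) i ≠ (y : Ed d) i := by
      by_contra! h
      exact hxy (Subtype.ext (by ext i; exact h i))
    obtain ⟨i, hi⟩ := this
    refine ⟨_, ⟨sphRestr d (MvPolynomial.X i), ⟨_, rfl⟩, rfl⟩, ?_⟩
    simpa [sphRestr_apply, ev] using hi
  obtain ⟨⟨g, p, rfl⟩, hg⟩ := ContinuousMap.exists_mem_subalgebra_near_continuous_of_separatesPoints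
    _ hsep f hf ε hε
  refine ⟨p, fun ω => ?_⟩
  have := (hg ω).le
  rw [Real.norm_eq_abs, abs_sub_comm] at this
  simpa [← sphRestr_apply] using this

/-! ### The Poincaré inequality on the sphere -/

theorem DP_C {d : ℕ} (c : ℝ) : DP (MvPolynomial.C c : MvPolynomial (Fin d) ℝ) = 0 := by
  simp [DP, LP]

theorem DP_linear {d : ℕ} (v : Fin d → ℝ) :
    DP (∑ i, MvPolynomial.C (v i) * MvPolynomial.X i)
      = MvPolynomial.C (-(2 * ((d : ℝ) - 1))) * ∑ i, MvPolynomial.C (v i) * MvPolynomial.X i := by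
  have hh : (∑ i, MvPolynomial.C (v i) * MvPolynomial.X i : MvPolynomial (Fin d) ℝ).IsHomogeneous
      1 := by
    refine MvPolynomial.IsHomogeneous.sum _ _ _ fun i _ => ?_
    have := (MvPolynomial.isHomogeneous_C (Fin d) (v i)).mul
      (MvPolynomial.isHomogeneous_X ℝ i)
    simpa using this
  rw [DP_homogeneous hh]
  have h0 : ∀ j, MvPolynomial.pderiv j (MvPolynomial.pderiv j
      (∑ i, MvPolynomial.C (v i) * MvPolynomial.X i : MvPolynomial (Fin d) ℝ)) = 0 := by
    intro j
    have : MvPolynomial.pderiv j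
      (∑ i, MvPolynomial.C (v i) * MvPolynomial.X i : MvPolynomial (Fin d) ℝ)
        = MvPolynomial.C (v j) := by
      rw [map_sum]
      simp [MvPolynomial.pderiv_X, Pi.single_apply]
    rw [this, MvPolynomial.pderiv_C]
  simp only [h0, Finset.sum_const_zero, mul_zero, zero_sub, ← neg_mul, ← map_neg]
  congr 2
  push_cast
  ring

theorem Jint_linear_X {d : ℕ} (hd : 2 ≤ d) (v : Fin d → ℝ) (k : Fin d) :
    Jint ((∑ i, MvPolynomial.C (v i) * MvPolynomial.X i) * MvPolynomial.X k)
      = v k * (sphVol d / d) := by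
  rw [Finset.sum_mul, Jint_sum, Finset.sum_eq_single k]
  · rw [mul_assoc, Jint_C_mul, Jint_X_sq hd]
  · intro i _ hi
    rw [mul_assoc, Jint_C_mul, Jint_X_mul_X_ne hi, mul_zero]
  · simp

theorem Jint_linear {d : ℕ} (v : Fin d → ℝ) :
    Jint (∑ i, MvPolynomial.C (v i) * MvPolynomial.X i) = 0 := by
  rw [Jint_sum]
  exact Finset.sum_eq_zero fun i _ => by rw [Jint_C_mul, Jint_X, mul_zero]

/-- The Poincaré inequality with second eigenvalue `2d` for polynomials on the sphere, by
induction on the degree: on the sphere, the part of `p` orthogonal to lower degrees is an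
eigenfunction of `DP` up to lower-degree terms, to which it is orthogonal. -/
theorem poly_poincare {d : ℕ} (hd : 2 ≤ d) (k : ℕ) {p : MvPolynomial (Fin d) ℝ}
    (hp : p ∈ Wk d (k + 1)) :
    4 * d * Jint (p * p) ≤ - Jint (p * DP p) + 4 * d * (Jint p ^ 2 / sphVol d)
      + 2 * (d + 1) * (d / sphVol d * ∑ i, Jint (p * MvPolynomial.X i) ^ 2) := by
  have hV := sphVol_pos d hd
  have hd0 : (2 : ℝ) ≤ d := by exact_mod_cast hd
  induction k generalizing p with
  | zero =>
    obtain ⟨c, v, rfl⟩ := Wk_one hp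
    set l : MvPolynomial (Fin d) ℝ := ∑ i, MvPolynomial.C (v i) * MvPolynomial.X i with hl
    have hll : Jint (l * l) = (∑ i, v i ^ 2) * (sphVol d / d) := by
      have : l * l = ∑ i, MvPolynomial.C (v i) * (l * MvPolynomial.X i) := by
        conv_lhs => rw [hl, Finset.sum_mul]
        exact Finset.sum_congr rfl fun i _ => by rw [← hl]; ring
      rw [this, Jint_sum, Finset.sum_mul]
      refine Finset.sum_congr rfl fun i _ => ?_
      rw [Jint_C_mul, hl, Jint_linear_X hd]; ring
    have hJl : Jint l = 0 := Jint_linear v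
    have h1 : Jint ((MvPolynomial.C c + l) * (MvPolynomial.C c + l))
        = c ^ 2 * sphVol d + (∑ i, v i ^ 2) * (sphVol d / d) := by
      have : (MvPolynomial.C c + l) * (MvPolynomial.C c + l) = MvPolynomial.C (c ^ 2)
          + MvPolynomial.C (2 * c) * l + l * l := by
        simp only [map_pow, map_mul, map_ofNat]; ring
      rw [this, Jint_add, Jint_add, Jint_C, Jint_C_mul, hJl, hll]; ring
    have h2 : Jint ((MvPolynomial.C c + l) * DP (MvPolynomial.C c + l))
        = -(2 * ((d : ℝ) - 1)) * ((∑ i, v i ^ 2) * (sphVol d / d)) := by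
      rw [DP_add, DP_C, hl, DP_linear, ← hl]
      have : (MvPolynomial.C c + l) * (0 + MvPolynomial.C (-(2 * ((d : ℝ) - 1))) * l)
          = MvPolynomial.C (-(2 * ((d : ℝ) - 1))) * (MvPolynomial.C c * l + l * l) := by ring
      rw [this, Jint_C_mul, Jint_add, Jint_C_mul, hJl, hll]; ring
    have h3 : Jint (MvPolynomial.C c + l) = c * sphVol d := by
      rw [Jint_add, Jint_C, hJl, add_zero]
    have h4 : ∀ i, Jint ((MvPolynomial.C c + l) * MvPolynomial.X i) = v i * (sphVol d / d) := by
      intro i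
      rw [add_mul, Jint_add, Jint_C_mul, Jint_X, hl, Jint_linear_X hd]; ring
    rw [h1, h2, h3]
    simp only [h4, mul_pow, ← Finset.sum_mul]
    apply le_of_eq
    field_simp
    ring
  | succ k ih =>
    obtain ⟨g, hg, hgr⟩ := exists_proj (d := d) (k + 1)
      ((continuous_ev p).comp continuous_subtype_val)
    obtain ⟨h, rfl⟩ : ∃ h, p = g + h := ⟨p - g, by ring⟩
    have hh : h ∈ Wk d (k + 1 + 1) := by
      have := Submodule.sub_mem _ hp (Wk_mono (Nat.le_succ _) hg)
      simpa using this
    have horth : ∀ r ∈ Wk d (k + 1), Jint (h * r) = 0 := by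
      intro r hr
      rw [← hgr r hr]
      simp [Jint, ev_mul, ev_add]
    obtain ⟨r, hr, hrω⟩ := DP_leading hh
    have hhDh : Jint (h * DP h) = -(2 * ((k : ℝ) + 1 + 1) * (k + 1 + d - 1)) * Jint (h * h) := by
      rw [← Jint_C_mul, ← add_zero (Jint (MvPolynomial.C _ * (h * h))), ← horth r hr, ← Jint_add]
      refine Jint_congr fun ω => ?_
      rw [ev_mul, hrω, ev_add, ev_mul, ev_mul, ev_mul]
      simp [ev]
      ring
    have hgDh : Jint (g * DP h) = 0 := by
      rw [Jint_DP_symm]; exact horth _ (DP_mem hg)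
    have hhDg : Jint (h * DP g) = 0 := horth _ (DP_mem hg)
    have hgh : Jint (h * g) = 0 := horth _ hg
    have e1 : Jint ((g + h) * (g + h)) = Jint (g * g) + Jint (h * h) := by
      have : (g + h) * (g + h) = g * g + h * h + (h * g + h * g) := by ring
      rw [this, Jint_add, Jint_add, Jint_add, hgh]; ring
    have e2 : Jint ((g + h) * DP (g + h)) = Jint (g * DP g) + Jint (h * DP h) := by
      rw [DP_add]
      have : (g + h) * (DP g + DP h) = g * DP g + h * DP h + (g * DP h + h * DP g) := by ring
      rw [this, Jint_add, Jint_add, Jint_add, hgDh, hhDg]; ring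
    have e3 : Jint (g + h) = Jint g := by
      have := horth (MvPolynomial.C 1) (by simp [MvPolynomial.mem_restrictTotalDegree])
      rw [map_one, mul_one] at this
      rw [Jint_add, this, add_zero]
    have e4 : ∀ i, Jint ((g + h) * MvPolynomial.X i) = Jint (g * MvPolynomial.X i) := by
      intro i
      have := horth (MvPolynomial.X i) (by simp [MvPolynomial.mem_restrictTotalDegree])
      rw [add_mul, Jint_add, this, add_zero]
    have hi := ih hg
    rw [e1, e2, e3, hhDh]
    simp only [e4]
    have hk : (0 : ℝ) ≤ k := by positivity
    have hnn := Jint_sq_nonneg h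
    have : 4 * (d : ℝ) * Jint (h * h) ≤
        (2 * ((k : ℝ) + 1 + 1) * (k + 1 + d - 1)) * Jint (h * h) := by
      apply mul_le_mul_of_nonneg_right _ hnn
      nlinarith
    linarith

/-- The Poincaré inequality with second eigenvalue on the sphere, for `C¹` functions: the mean
and the first moments account for the eigenvalues `0` and `d - 1`. -/
theorem sph_poincare {d : ℕ} (hd : 2 ≤ d) {f : Ed d → ℝ} (hf : ContDiff ℝ 1 f) :
    4 * d * ∫ ω : Sph d, f ω ^ 2 ∂(sphMeasure d) ≤
      ∫ ω : Sph d, ∑ i, ∑ j, Lop i j f ω ^ 2 ∂(sphMeasure d)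
      + 4 * d * ((∫ ω : Sph d, f ω ∂(sphMeasure d)) ^ 2 / sphVol d)
      + 2 * (d + 1) * (d / sphVol d *
        ∑ i, (∫ ω : Sph d, f ω * (ω : Ed d) i ∂(sphMeasure d)) ^ 2) := by
  have hV := sphVol_pos d hd
  have hcf := hf.continuous
  have hev := fun p : MvPolynomial (Fin d) ℝ => continuous_ev p
  have hL := fun i j => continuous_Lop i j hf
  have hLe := fun (p : MvPolynomial (Fin d) ℝ) i j => continuous_Lop i j (contDiff_ev p)
  refine le_of_forall_pos_le_add fun δ hδ => ?_
  obtain ⟨ε, hε, hεδ⟩ : ∃ ε : ℝ, 0 < ε ∧ 4 * d * (ε ^ 2 * sphVol d) ≤ δ := by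
    refine ⟨Real.sqrt (δ / (4 * d * sphVol d)), by positivity, ?_⟩
    rw [Real.sq_sqrt (by positivity)]
    apply le_of_eq
    field_simp
  obtain ⟨p0, hp0⟩ := exists_poly_approx (hcf.comp continuous_subtype_val : Continuous
    fun ω : Sph d => f ω) hε
  simp only [Function.comp_apply] at hp0
  set k := p0.totalDegree
  have hp0k : p0 ∈ Wk d (k + 1) := by
    rw [MvPolynomial.mem_restrictTotalDegree]; omega
  obtain ⟨p, hp, hproj⟩ := exists_proj (d := d) (k + 1) (hcf.comp continuous_subtype_val :
    Continuous fun ω : Sph d => f ω)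
  have hfr : ∀ r ∈ Wk d (k + 1), ∫ ω : Sph d, f ω * ev r ω ∂(sphMeasure d) = Jint (p * r) := by
    intro r hr
    have := hproj r hr
    simp only [Function.comp_apply, sub_mul] at this
    rw [integral_sub (sph_integrable (by fun_prop)) (sph_integrable (by fun_prop))] at this
    simp only [Jint, ev_mul]
    linarith
  have hpp := poly_poincare hd k hp
  -- the distance of `f` to its projection is at most that to the approximation `p0`
  have hdist : ∫ ω : Sph d, f ω ^ 2 ∂(sphMeasure d) ≤ Jint (p * p) + ε ^ 2 * sphVol d := by
    have h1 : ∫ ω : Sph d, (f ω - ev p0 ω) ^ 2 ∂(sphMeasure d) ≤ ε ^ 2 * sphVol d := by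
      calc _ ≤ ∫ _ω : Sph d, ε ^ 2 ∂(sphMeasure d) := by
            refine integral_mono (sph_integrable (by fun_prop)) (integrable_const _) fun ω => ?_
            exact sq_le_sq' (abs_le.1 (hp0 ω)).1 (abs_le.1 (hp0 ω)).2
        _ = _ := by simp [sphVol, Measure.real, mul_comm]
    have h2 : ∫ ω : Sph d, (f ω - ev p0 ω) ^ 2 ∂(sphMeasure d) =
        ∫ ω : Sph d, f ω ^ 2 ∂(sphMeasure d) - 2 * ∫ ω : Sph d, f ω * ev p0 ω ∂(sphMeasure d)
        + Jint (p0 * p0) := by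
      rw [Jint, ← integral_const_mul, ← integral_sub (sph_integrable (by fun_prop))
        (sph_integrable (by fun_prop)), ← integral_add (sph_integrable (by fun_prop))
        (sph_integrable (by fun_prop))]
      refine integral_congr_ae (Eventually.of_forall fun ω => ?_)
      simp only [ev_mul]; ring
    have h3 := Jint_sq_nonneg (p - p0)
    have h4 : (p - p0) * (p - p0) = p * p - (p * p0 + p * p0) + p0 * p0 := by ring
    rw [h4, Jint_add, Jint_sub, Jint_add] at h3
    rw [h2, hfr p0 hp0k] at h1
    linarith
  have hgrad : - Jint (p * DP p) ≤
      ∫ ω : Sph d, ∑ i, ∑ j, Lop i j f ω ^ 2 ∂(sphMeasure d) := by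
    have h1 := integral_Lop_ev hf p
    have h2 := integral_Lop_ev (contDiff_ev p) p
    rw [hfr _ (DP_mem hp)] at h1
    have h2' : ∫ ω : Sph d, ev p ω * ev (DP p) ω ∂(sphMeasure d) = Jint (p * DP p) := by
      simp only [Jint, ev_mul]
    rw [h2'] at h2
    have h3 : 0 ≤ ∫ ω : Sph d, ∑ i, ∑ j, (Lop i j f ω - Lop i j (ev p) ω) ^ 2 ∂(sphMeasure d) :=
      integral_nonneg fun ω => Finset.sum_nonneg fun i _ => Finset.sum_nonneg fun j _ =>
        sq_nonneg _
    have h4 : ∫ ω : Sph d, ∑ i, ∑ j, (Lop i j f ω - Lop i j (ev p) ω) ^ 2 ∂(sphMeasure d)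
        = ∫ ω : Sph d, ∑ i, ∑ j, Lop i j f ω ^ 2 ∂(sphMeasure d)
          - 2 * ∫ ω : Sph d, ∑ i, ∑ j, Lop i j f ω * Lop i j (ev p) ω ∂(sphMeasure d)
          + ∫ ω : Sph d, ∑ i, ∑ j, Lop i j (ev p) ω * Lop i j (ev p) ω ∂(sphMeasure d) := by
      rw [← integral_const_mul, ← integral_sub (sph_integrable (by fun_prop))
        (sph_integrable (by fun_prop)), ← integral_add (sph_integrable (by fun_prop))
        (sph_integrable (by fun_prop))]
      refine integral_congr_ae (Eventually.of_forall fun ω => ?_)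
      simp only [Finset.mul_sum, ← Finset.sum_sub_distrib, ← Finset.sum_add_distrib]
      refine Finset.sum_congr rfl fun i _ => Finset.sum_congr rfl fun j _ => by ring
    linarith
  have hmean : ∫ ω : Sph d, f ω ∂(sphMeasure d) = Jint p := by
    have := hfr (MvPolynomial.C 1) (by simp [MvPolynomial.mem_restrictTotalDegree])
    simpa [ev] using this
  have hlin : ∀ i, ∫ ω : Sph d, f ω * (ω : Ed d) i ∂(sphMeasure d)
      = Jint (p * MvPolynomial.X i) := by
    intro i
    have := hfr (MvPolynomial.X i) (by simp [MvPolynomial.mem_restrictTotalDegree])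
    simpa [ev] using this
  simp only [hmean, hlin]
  have hd0 : (0 : ℝ) < 4 * d := by positivity
  have := mul_le_mul_of_nonneg_left hdist hd0.le
  linarith

/-! ### The soliton profile -/

/-- `tanh (α s)`, in terms of which the potential and the zero mode have simple derivatives. -/
noncomputable def tht (q Λ s : ℝ) : ℝ := tanh (alphaV q Λ * s)

theorem one_sub_tanh_sq' (x : ℝ) : 1 - tanh x ^ 2 = (cosh x ^ 2)⁻¹ := by
  have := cosh_pos x
  rw [tanh_eq_sinh_div_cosh]
  field_simp
  linarith [cosh_sq x]

theorem hasDerivAt_tht (q Λ s : ℝ) :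
    HasDerivAt (tht q Λ) (alphaV q Λ * (1 - tht q Λ s ^ 2)) s := by
  have h0 : HasDerivAt (fun x : ℝ => alphaV q Λ * x) (alphaV q Λ) s := by
    simpa using (hasDerivAt_id s).const_mul (alphaV q Λ)
  have hc := (cosh_pos (alphaV q Λ * s)).ne'
  have h1 := (h0.sinh).div (h0.cosh) hc
  have h2 : ((fun x => sinh (alphaV q Λ * x)) / fun x => cosh (alphaV q Λ * x)) = tht q Λ := by
    funext x; rw [tht, tanh_eq_sinh_div_cosh, Pi.div_apply]
  rw [h2] at h1
  refine h1.congr_deriv ?_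
  rw [tht, one_sub_tanh_sq']
  field_simp
  rw [cosh_sq]; ring

theorem continuous_tht (q Λ : ℝ) : Continuous (tht q Λ) :=
  continuous_iff_continuousAt.2 fun s => (hasDerivAt_tht q Λ s).continuousAt

theorem tht_sq_lt (q Λ s : ℝ) : tht q Λ s ^ 2 < 1 := by
  have := one_sub_tanh_sq' (alphaV q Λ * s)
  have h2 := cosh_pos (alphaV q Λ * s)
  have h3 : 0 < (cosh (alphaV q Λ * s) ^ 2)⁻¹ := by positivity
  rw [tht]; linarith

theorem abs_tht_le (q Λ s : ℝ) : |tht q Λ s| ≤ 1 := (abs_tanh_lt_one _).le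

theorem alphaV_pos {q Λ : ℝ} (hq : 2 < q) (hΛ : 0 < Λ) : 0 < alphaV q Λ := by
  have : 0 < q - 2 := by linarith
  unfold alphaV; positivity

theorem betaV_pos {q Λ : ℝ} (hq : 2 < q) (hΛ : 0 < Λ) : 0 < betaV q Λ := by
  unfold betaV; positivity

theorem Ufun_pos {q Λ : ℝ} (hq : 2 < q) (hΛ : 0 < Λ) (s : ℝ) : 0 < Ufun q Λ s := by
  have := betaV_pos hq hΛ
  have := cosh_pos (alphaV q Λ * s)
  unfold Ufun; positivity

theorem Ufun_le {q Λ : ℝ} (hq : 2 < q) (hΛ : 0 < Λ) (s : ℝ) : Ufun q Λ s ≤ betaV q Λ := by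
  unfold Ufun
  have h : cosh (alphaV q Λ * s) ^ (-(2 / (q - 2))) ≤ 1 :=
    rpow_le_one_of_one_le_of_nonpos (one_le_cosh _) (by
      have : 0 < q - 2 := by linarith
      have : 0 < 2 / (q - 2) := by positivity
      linarith)
  nlinarith [betaV_pos hq hΛ]

theorem continuous_Ufun (q Λ : ℝ) : Continuous (Ufun q Λ) := by
  unfold Ufun
  refine continuous_const.mul (Continuous.rpow_const (by fun_prop) fun s => Or.inl (cosh_pos _).ne')

theorem continuous_Ufun_rpow {q Λ : ℝ} (hq : 2 < q) (hΛ : 0 < Λ) (r : ℝ) :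
    Continuous fun s => Ufun q Λ s ^ r :=
  (continuous_Ufun q Λ).rpow_const fun s => Or.inl (Ufun_pos hq hΛ s).ne'

/-- The potential `u^{q-2}` is a multiple of `sech² (α s)`. -/
theorem Ufun_potential {q Λ : ℝ} (hq : 2 < q) (hΛ : 0 < Λ) (s : ℝ) :
    Ufun q Λ s ^ (q - 2) = q * Λ / 2 * (1 - tht q Λ s ^ 2) := by
  have hq2 : q - 2 ≠ 0 := by linarith
  have hc := cosh_pos (alphaV q Λ * s)
  rw [tht, one_sub_tanh_sq', Ufun, mul_rpow (betaV_pos hq hΛ).le (by positivity), betaV,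
    ← rpow_mul (by positivity), ← rpow_mul hc.le]
  congr 1
  · rw [one_div_mul_cancel hq2, rpow_one]
  · rw [show -(2 / (q - 2)) * (q - 2) = -(2 : ℕ) by field_simp; norm_num, rpow_neg hc.le,
      rpow_natCast]

theorem integrable_potential {q Λ : ℝ} (hq : 2 < q) (hΛ : 0 < Λ) :
    Integrable fun s => Ufun q Λ s ^ (q - 2) := by
  have h1 := (integrable_inv_one_add_sq.comp_mul_left' (alphaV_pos hq hΛ).ne').const_mul (q * Λ / 2)
  refine h1.mono' (continuous_Ufun_rpow hq hΛ _).aestronglyMeasurable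
    (Eventually.of_forall fun s => ?_)
  rw [norm_of_nonneg (rpow_nonneg (Ufun_pos hq hΛ s).le _), Ufun_potential hq hΛ, tht,
    one_sub_tanh_sq']
  refine mul_le_mul_of_nonneg_left ?_ (by positivity)
  refine inv_anti₀ (by positivity) ?_
  rw [cosh_sq, add_comm]
  have h : ∀ x : ℝ, x ^ 2 ≤ sinh x ^ 2 := by
    intro x
    rw [sq_le_sq]
    rcases le_total 0 x with hx | hx
    · rw [abs_of_nonneg hx]
      exact (self_le_sinh_iff.2 hx).trans (le_abs_self _)
    · rw [abs_of_nonpos hx, ← abs_neg (sinh x), ← sinh_neg]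
      exact (self_le_sinh_iff.2 (by linarith)).trans (le_abs_self _)
  linarith [h (alphaV q Λ * s)]

theorem Ufun_rpow_le {q Λ : ℝ} (hq : 2 < q) (hΛ : 0 < Λ) {r : ℝ} (hr : 0 ≤ r) (s : ℝ) :
    Ufun q Λ s ^ r ≤ betaV q Λ ^ r :=
  rpow_le_rpow (Ufun_pos hq hΛ s).le (Ufun_le hq hΛ s) hr

theorem integrable_Ufun_rpow {q Λ : ℝ} (hq : 2 < q) (hΛ : 0 < Λ) {r : ℝ} (hr : q - 2 ≤ r) :
    Integrable fun s => Ufun q Λ s ^ r := by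
  refine ((integrable_potential hq hΛ).const_mul (betaV q Λ ^ (r - (q - 2)))).mono'
    (continuous_Ufun_rpow hq hΛ _).aestronglyMeasurable (Eventually.of_forall fun s => ?_)
  have h0 := Ufun_pos hq hΛ s
  rw [norm_of_nonneg (rpow_nonneg h0.le _)]
  calc Ufun q Λ s ^ r = Ufun q Λ s ^ (r - (q - 2)) * Ufun q Λ s ^ (q - 2) := by
        rw [← rpow_add h0]; congr 1; ring
    _ ≤ _ := mul_le_mul_of_nonneg_right (Ufun_rpow_le hq hΛ (by linarith) s) (rpow_nonneg h0.le _)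

/-- The zero mode `w = u^{q/2}` satisfies `w' = -T w` with
`T = (q √Λ / 2) tanh (α s)`. -/
theorem hasDerivAt_zeroMode {q Λ : ℝ} (hq : 2 < q) (hΛ : 0 < Λ) (s : ℝ) :
    HasDerivAt (fun s => Ufun q Λ s ^ (q / 2))
      (-(q * √Λ / 2 * tht q Λ s) * Ufun q Λ s ^ (q / 2)) s := by
  have hq2 : q - 2 ≠ 0 := by linarith
  have h0 : HasDerivAt (fun x : ℝ => alphaV q Λ * x) (alphaV q Λ) s := by
    simpa using (hasDerivAt_id s).const_mul (alphaV q Λ)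
  have hc := cosh_pos (alphaV q Λ * s)
  have h1 := ((h0.cosh).rpow_const (p := -(q / (q - 2))) (Or.inl hc.ne')).const_mul
    (betaV q Λ ^ (q / 2))
  have h2 : ∀ s, Ufun q Λ s ^ (q / 2) =
      betaV q Λ ^ (q / 2) * cosh (alphaV q Λ * s) ^ (-(q / (q - 2))) := by
    intro s
    have hc := cosh_pos (alphaV q Λ * s)
    rw [Ufun, mul_rpow (betaV_pos hq hΛ).le (by positivity), ← rpow_mul hc.le]
    congr 2
    field_simp
  rw [funext h2]
  refine h1.congr_deriv ?_
  rw [h2 s, tht, tanh_eq_sinh_div_cosh, rpow_sub_one hc.ne', alphaV]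
  field_simp

/-! ### One-dimensional Hardy-type inequalities by completing squares -/

theorem integrable_mul_of_sq {X : Type*} [MeasurableSpace X] {ν : Measure X} {f g : X → ℝ}
    (hf : AEStronglyMeasurable f ν) (hg : AEStronglyMeasurable g ν)
    (hf2 : Integrable (fun x => f x ^ 2) ν) (hg2 : Integrable (fun x => g x ^ 2) ν) :
    Integrable (fun x => f x * g x) ν :=
  ((memLp_two_iff_integrable_sq hf).2 hf2).integrable_mul ((memLp_two_iff_integrable_sq hg).2 hg2)

/-- Integration by parts for `(T φ²)' = T' φ² + 2 T φ φ'` in the ground-state representation. -/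
theorem riccati_line {φ φ' T T' : ℝ → ℝ} {A B : ℝ} (h1 : ∀ s, HasDerivAt φ (φ' s) s)
    (hφ' : Continuous φ') (hT : ∀ s, HasDerivAt T (T' s) s) (hT' : Continuous T')
    (hTb : ∀ s, |T s| ≤ A) (hTb' : ∀ s, |T' s| ≤ B)
    (i1 : Integrable fun s => φ s ^ 2) (i2 : Integrable fun s => φ' s ^ 2) :
    ∫ s, (φ' s ^ 2 + (T s ^ 2 - T' s) * φ s ^ 2) = ∫ s, (φ' s + T s * φ s) ^ 2 := by
  have cφ : Continuous φ := continuous_iff_continuousAt.2 fun s => (h1 s).continuousAt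
  have cT : Continuous T := continuous_iff_continuousAt.2 fun s => (hT s).continuousAt
  have i3 := integrable_mul_of_sq cφ.aestronglyMeasurable hφ'.aestronglyMeasurable i1 i2
  have j1 : Integrable fun s => T s * φ s ^ 2 :=
    i1.bdd_mul cT.aestronglyMeasurable (Eventually.of_forall hTb)
  have j2 : Integrable fun s => T s * (T s * φ s ^ 2) :=
    j1.bdd_mul cT.aestronglyMeasurable (Eventually.of_forall hTb)
  have j3 : Integrable fun s => T' s * φ s ^ 2 :=
    i1.bdd_mul hT'.aestronglyMeasurable (Eventually.of_forall hTb')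
  have j4 : Integrable fun s => T s * (φ s * φ' s) :=
    i3.bdd_mul cT.aestronglyMeasurable (Eventually.of_forall hTb)
  have hz := integral_eq_zero_of_hasDerivAt_of_integrable (f := fun s => T s * φ s ^ 2)
    (f' := fun s => T' s * φ s ^ 2 + 2 * (T s * (φ s * φ' s)))
    (fun s => by
      refine ((hT s).mul ((h1 s).pow 2)).congr_deriv ?_
      simp; ring) (j3.add (j4.const_mul 2)) j1
  rw [← sub_eq_zero, ← integral_sub]
  · rw [← neg_eq_zero, ← integral_neg, ← hz]
    congr 1; funext s; ring
  · exact (i2.add (j2.sub j3)).congr (Eventually.of_forall fun s => by simp; ring)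
  · exact (i2.add (j2.add (j4.const_mul 2))).congr (Eventually.of_forall fun s => by simp; ring)

/-- Half-line version: the boundary term at `0` vanishes because `φ 0 = 0`. -/
theorem riccati_half {φ φ' T T' : ℝ → ℝ} {A B : ℝ} (h1 : ∀ s, HasDerivAt φ (φ' s) s)
    (hφ' : Continuous φ') (hT : ∀ s, HasDerivAt T (T' s) s) (hT' : Continuous T')
    (hTb : ∀ s ∈ Ioi (0 : ℝ), |T s| ≤ A) (hTb' : ∀ s ∈ Ioi (0 : ℝ), |T' s| ≤ B)
    (i1 : Integrable fun s => φ s ^ 2) (i2 : Integrable fun s => φ' s ^ 2) (h0 : φ 0 = 0) :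
    0 ≤ ∫ s in Ioi (0 : ℝ), (φ' s ^ 2 + (T s ^ 2 - T' s) * φ s ^ 2) := by
  have cφ : Continuous φ := continuous_iff_continuousAt.2 fun s => (h1 s).continuousAt
  have cT : Continuous T := continuous_iff_continuousAt.2 fun s => (hT s).continuousAt
  have i3 := integrable_mul_of_sq cφ.aestronglyMeasurable hφ'.aestronglyMeasurable i1 i2
  have i1 := i1.integrableOn (s := Ioi (0 : ℝ))
  have i2 := i2.integrableOn (s := Ioi (0 : ℝ))
  have i3 := i3.integrableOn (s := Ioi (0 : ℝ))
  have bT : ∀ᵐ s ∂(volume.restrict (Ioi (0 : ℝ))), ‖T s‖ ≤ A :=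
    (ae_restrict_iff' measurableSet_Ioi).2 (Eventually.of_forall hTb)
  have bT' : ∀ᵐ s ∂(volume.restrict (Ioi (0 : ℝ))), ‖T' s‖ ≤ B :=
    (ae_restrict_iff' measurableSet_Ioi).2 (Eventually.of_forall hTb')
  have j1 : IntegrableOn (fun s => T s * φ s ^ 2) (Ioi (0 : ℝ)) :=
    Integrable.bdd_mul i1 cT.aestronglyMeasurable bT
  have j2 : IntegrableOn (fun s => T s * (T s * φ s ^ 2)) (Ioi (0 : ℝ)) :=
    Integrable.bdd_mul j1 cT.aestronglyMeasurable bT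
  have j3 : IntegrableOn (fun s => T' s * φ s ^ 2) (Ioi (0 : ℝ)) :=
    Integrable.bdd_mul i1 hT'.aestronglyMeasurable bT'
  have j4 : IntegrableOn (fun s => T s * (φ s * φ' s)) (Ioi (0 : ℝ)) :=
    Integrable.bdd_mul i3 cT.aestronglyMeasurable bT
  have hder : ∀ s ∈ Ioi (0 : ℝ), HasDerivAt (fun s => T s * φ s ^ 2)
      (T' s * φ s ^ 2 + 2 * (T s * (φ s * φ' s))) s := fun s _ => by
    refine ((hT s).mul ((h1 s).pow 2)).congr_deriv ?_
    simp; ring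
  have j5 : IntegrableOn (fun s => T' s * φ s ^ 2 + 2 * (T s * (φ s * φ' s))) (Ioi (0 : ℝ)) :=
    Integrable.add j3 (Integrable.const_mul j4 2)
  have hlim := tendsto_zero_of_hasDerivAt_of_integrableOn_Ioi hder j5 j1
  have hz := integral_Ioi_of_hasDerivAt_of_tendsto
    (Continuous.continuousWithinAt (by fun_prop)) hder j5 hlim
  rw [h0] at hz
  have hsq : 0 ≤ ∫ s in Ioi (0 : ℝ), (φ' s + T s * φ s) ^ 2 := integral_nonneg fun s => sq_nonneg _
  have hsplit : ∫ s in Ioi (0 : ℝ), (φ' s + T s * φ s) ^ 2 =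
      (∫ s in Ioi (0 : ℝ), (φ' s ^ 2 + (T s ^ 2 - T' s) * φ s ^ 2)) +
      ∫ s in Ioi (0 : ℝ), (T' s * φ s ^ 2 + 2 * (T s * (φ s * φ' s))) := by
    rw [← integral_add _ j5]
    · congr 1; funext s; ring
    · exact (Integrable.add i2 (Integrable.sub j2 j3)).congr
        (Eventually.of_forall fun s => by simp; ring)
  rw [hz] at hsplit
  simp at hsplit
  linarith

/-! ### Pöschl–Teller inequalities for the modes -/

theorem integrable_potential_mul_sq {q Λ : ℝ} (hq : 2 < q) (hΛ : 0 < Λ) {X : Type*}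
    [MeasurableSpace X] {ν : Measure X} {r : ℝ} (hr : 0 ≤ r) {S : X → ℝ} (hS : Measurable S)
    {g : X → ℝ} (hg : Integrable g ν) :
    Integrable (fun x => Ufun q Λ (S x) ^ r * g x) ν :=
  hg.bdd_mul (c := betaV q Λ ^ r)
    (((continuous_Ufun_rpow hq hΛ r).measurable.comp hS).aestronglyMeasurable)
    (Eventually.of_forall fun x => by
      rw [norm_of_nonneg (rpow_nonneg (Ufun_pos hq hΛ _).le _)]
      exact Ufun_rpow_le hq hΛ hr _)

theorem integral_add_sub3 {X : Type*} [MeasurableSpace X] {ν : Measure X} {f g h : X → ℝ}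
    (hf : Integrable f ν) (hg : Integrable g ν) (hh : Integrable h ν) :
    ∫ x, (f x + g x - h x) ∂ν = (∫ x, f x ∂ν) + (∫ x, g x ∂ν) - ∫ x, h x ∂ν := by
  rw [integral_sub (f := fun x => f x + g x) (hf.add hg) hh, integral_add hf hg]

/-- Supersymmetric factorization of the Pöschl–Teller operator whose ground state is `u^{q/2}`. -/
theorem pt_line {q Λ : ℝ} (hq : 2 < q) (hΛ : 0 < Λ) {φ φ' : ℝ → ℝ}
    (h1 : ∀ s, HasDerivAt φ (φ' s) s) (hφ' : Continuous φ')
    (i1 : Integrable fun s => φ s ^ 2) (i2 : Integrable fun s => φ' s ^ 2) :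
    (∫ s, φ' s ^ 2) + q ^ 2 * Λ / 4 * (∫ s, φ s ^ 2)
      - (q - 1) * (∫ s, Ufun q Λ s ^ (q - 2) * φ s ^ 2) =
    ∫ s, (φ' s + q * √Λ / 2 * tht q Λ s * φ s) ^ 2 := by
  have ct := continuous_tht q Λ
  have i3 := integrable_potential_mul_sq hq hΛ (r := q - 2) (by linarith) measurable_id i1
  simp only [id] at i3
  rw [← riccati_line (A := q * √Λ / 2) (B := q * √Λ / 2 * alphaV q Λ)
    (T' := fun s => q * √Λ / 2 * (alphaV q Λ * (1 - tht q Λ s ^ 2))) h1 hφ'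
    (fun s => (hasDerivAt_tht q Λ s).const_mul _) (by fun_prop) ?_ ?_ i1 i2]
  · rw [← integral_const_mul, ← integral_const_mul,
      ← integral_add_sub3 i2 (i1.const_mul _) (i3.const_mul _)]
    congr 1; funext s
    have hs : √Λ ^ 2 = Λ := sq_sqrt hΛ.le
    rw [Ufun_potential hq hΛ, alphaV]
    have : (q * √Λ / 2 * tht q Λ s) ^ 2 = q ^ 2 * √Λ ^ 2 / 4 * tht q Λ s ^ 2 := by ring
    rw [this]
    have : q * √Λ / 2 * ((q - 2) / 2 * √Λ * (1 - tht q Λ s ^ 2)) =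
      q * (q - 2) / 4 * √Λ ^ 2 * (1 - tht q Λ s ^ 2) := by ring
    rw [this, hs]
    ring
  · intro s
    rw [abs_mul, abs_of_nonneg (by positivity)]
    exact mul_le_of_le_one_right (by positivity) (abs_tht_le q Λ s)
  · intro s
    have h := tht_sq_lt q Λ s
    have ha := alphaV_pos hq hΛ
    have h' : 0 ≤ 1 - tht q Λ s ^ 2 := by linarith
    rw [abs_of_nonneg (by positivity)]
    refine mul_le_mul_of_nonneg_left ?_ (by positivity)
    nlinarith [sq_nonneg (tht q Λ s)]

/-- Above the critical mass `q² Λ / 4` the quadratic form stays nonnegative after a small loss. -/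
theorem pt_high {q Λ : ℝ} (hq : 2 < q) (hΛ : 0 < Λ) {φ φ' : ℝ → ℝ}
    (h1 : ∀ s, HasDerivAt φ (φ' s) s) (hφ' : Continuous φ')
    (i1 : Integrable fun s => φ s ^ 2) (i2 : Integrable fun s => φ' s ^ 2)
    {c κ : ℝ} (hc0 : 0 ≤ c) (hc1 : c ≤ 1)
    (hc : c * ((q - 1) * (q * Λ / 2)) ≤ (1 - c) * (κ - q ^ 2 * Λ / 4)) :
    (q - 1) * (∫ s, Ufun q Λ s ^ (q - 2) * φ s ^ 2) ≤
      (1 - c) * ((∫ s, φ' s ^ 2) + κ * ∫ s, φ s ^ 2) := by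
  have h := pt_line hq hΛ h1 hφ' i1 i2
  have h0 : 0 ≤ ∫ s, (φ' s + q * √Λ / 2 * tht q Λ s * φ s) ^ 2 :=
    integral_nonneg fun s => sq_nonneg _
  have i3 := integrable_potential_mul_sq hq hΛ (r := q - 2) (by linarith) measurable_id i1
  simp only [id] at i3
  have hV : (∫ s, Ufun q Λ s ^ (q - 2) * φ s ^ 2) ≤ q * Λ / 2 * ∫ s, φ s ^ 2 := by
    rw [← integral_const_mul]
    refine integral_mono i3 (i1.const_mul _) fun s => ?_
    refine mul_le_mul_of_nonneg_right ?_ (sq_nonneg _)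
    rw [Ufun_potential hq hΛ]
    exact mul_le_of_le_one_right (by positivity) (by linarith [sq_nonneg (tht q Λ s)])
  have hI : 0 ≤ ∫ s, φ s ^ 2 := integral_nonneg fun s => sq_nonneg _
  rw [← h] at h0
  have e1 := mul_nonneg (sub_nonneg.2 hc1) h0
  have e2 := mul_le_mul_of_nonneg_right hc hI
  have e3 := mul_le_mul_of_nonneg_left hV (mul_nonneg hc0 (by linarith : 0 ≤ q - 1))
  nlinarith

/-- A function vanishing at `0` gains a multiple of the potential on the right half-line. -/
theorem pt_half {q Λ : ℝ} (hq : 2 < q) (hΛ : 0 < Λ) {φ φ' : ℝ → ℝ}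
    (h1 : ∀ s, HasDerivAt φ (φ' s) s) (hφ' : Continuous φ')
    (i1 : Integrable fun s => φ s ^ 2) (i2 : Integrable fun s => φ' s ^ 2) (h0 : φ 0 = 0) :
    alphaV q Λ ^ 2 / (2 * q * Λ) * (∫ s in Ioi (0 : ℝ), Ufun q Λ s ^ (q - 2) * φ s ^ 2) ≤
    ∫ s in Ioi (0 : ℝ), (φ' s ^ 2 + q ^ 2 * Λ / 4 * φ s ^ 2
      - (q - 1) * (Ufun q Λ s ^ (q - 2) * φ s ^ 2)) := by
  have ct := continuous_tht q Λ
  have cφ : Continuous φ := continuous_iff_continuousAt.2 fun s => (h1 s).continuousAt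
  have ha := alphaV_pos hq hΛ
  have i3 := integrable_potential_mul_sq hq hΛ (r := q - 2) (by linarith) measurable_id i1
  simp only [id] at i3
  -- the Riccati function is lowered by `(α/2)(1 - tanh)`, which is admissible for `s > 0`
  set T : ℝ → ℝ := fun s => q * √Λ / 2 * tht q Λ s - alphaV q Λ / 2 * (1 - tht q Λ s) with hT
  set T' : ℝ → ℝ := fun s => q * √Λ / 2 * (alphaV q Λ * (1 - tht q Λ s ^ 2)) +
    alphaV q Λ / 2 * (alphaV q Λ * (1 - tht q Λ s ^ 2)) with hT'
  have cT : Continuous T := by fun_prop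
  have cT' : Continuous T' := by fun_prop
  have bT : ∀ s, |T s| ≤ q * √Λ / 2 + alphaV q Λ := by
    intro s
    have h := abs_le.1 (abs_tht_le q Λ s)
    have : 0 ≤ q * √Λ / 2 := by positivity
    simp only [hT]
    rw [abs_le]; constructor <;> nlinarith
  have bT' : ∀ s, |T' s| ≤ q * √Λ / 2 * alphaV q Λ + alphaV q Λ / 2 * alphaV q Λ := by
    intro s
    have h := tht_sq_lt q Λ s
    have h' : 0 ≤ 1 - tht q Λ s ^ 2 := by linarith
    have h'' : alphaV q Λ * (1 - tht q Λ s ^ 2) ≤ alphaV q Λ := by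
      nlinarith [sq_nonneg (tht q Λ s)]
    simp only [hT']
    rw [abs_of_nonneg (by positivity)]
    exact add_le_add (mul_le_mul_of_nonneg_left h'' (by positivity))
      (mul_le_mul_of_nonneg_left h'' (by positivity))
  have hmain := riccati_half (T := T) (T' := T') h1 hφ' (fun s => by
    refine (((hasDerivAt_tht q Λ s).const_mul (q * √Λ / 2)).sub
      (((hasDerivAt_tht q Λ s).const_sub 1).const_mul (alphaV q Λ / 2))).congr_deriv ?_
    simp only [hT']; ring) cT' (fun s _ => bT s) (fun s _ => bT' s) i1 i2 h0
  have j1 : Integrable fun s => (T s ^ 2 - T' s) * φ s ^ 2 := by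
    refine i1.bdd_mul (c := (q * √Λ / 2 + alphaV q Λ) ^ 2 +
      (q * √Λ / 2 * alphaV q Λ + alphaV q Λ / 2 * alphaV q Λ))
      (Continuous.aestronglyMeasurable (by fun_prop)) (Eventually.of_forall fun s => ?_)
    refine (abs_sub _ _).trans (add_le_add ?_ (bT' s))
    rw [abs_pow]
    exact pow_le_pow_left₀ (abs_nonneg _) (bT s) 2
  rw [← sub_nonneg, ← integral_const_mul, ← integral_sub]
  · refine hmain.trans (setIntegral_mono_on (i2.add j1).integrableOn ?_ measurableSet_Ioi
      fun s hs => ?_)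
    · exact (((i2.add (i1.const_mul _)).sub (i3.const_mul _)).sub (i3.const_mul _)).integrableOn
    · have ht0 : 0 ≤ tht q Λ s := by
        rw [tht, tanh_eq_sinh_div_cosh]
        exact div_nonneg (sinh_nonneg_iff.2 (mul_nonneg ha.le (le_of_lt hs))) (cosh_pos _).le
      have ht1 := (abs_le.1 (abs_tht_le q Λ s)).2
      have key : T s ^ 2 - T' s ≤ q ^ 2 * Λ / 4 - (q - 1) * Ufun q Λ s ^ (q - 2)
          - alphaV q Λ ^ 2 / (2 * q * Λ) * Ufun q Λ s ^ (q - 2) := by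
        have hs : √Λ ^ 2 = Λ := sq_sqrt hΛ.le
        rw [Ufun_potential hq hΛ]
        have e1 : alphaV q Λ ^ 2 / (2 * q * Λ) * (q * Λ / 2 * (1 - tht q Λ s ^ 2)) =
            alphaV q Λ ^ 2 / 4 * (1 - tht q Λ s ^ 2) := by field_simp; ring
        rw [e1]
        simp only [hT, hT']
        generalize tht q Λ s = t at *
        have e2 : alphaV q Λ = (q - 2) / 2 * √Λ := rfl
        have e3 : 0 ≤ √Λ * (alphaV q Λ * (t * (1 - t))) :=
          mul_nonneg (sqrt_nonneg _) (mul_nonneg ha.le (mul_nonneg ht0 (by linarith)))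
        have e4 : 0 ≤ alphaV q Λ ^ 2 * (t * (1 - t)) :=
          mul_nonneg (sq_nonneg _) (mul_nonneg ht0 (by linarith))
        have e5 : q * √Λ / 2 * (alphaV q Λ * (1 - t ^ 2)) = q * (q - 2) / 4 * Λ * (1 - t ^ 2) := by
          rw [e2]; linear_combination q * (q - 2) / 4 * (1 - t ^ 2) * hs
        have e6 : (q * √Λ / 2 * t) ^ 2 = q ^ 2 * Λ / 4 * t ^ 2 := by
          rw [mul_pow, div_pow, mul_pow, hs]; ring
        rw [e5, sub_sq, e6]
        nlinarith
      have := mul_le_mul_of_nonneg_right key (sq_nonneg (φ s))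
      linarith
  · exact ((i2.add (i1.const_mul _)).sub (i3.const_mul _)).integrableOn
  · exact (i3.const_mul _).integrableOn

theorem tht_neg (q Λ s : ℝ) : tht q Λ (-s) = -tht q Λ s := by
  rw [tht, tht, mul_neg, tanh_neg]

theorem Ufun_neg (q Λ s : ℝ) : Ufun q Λ (-s) = Ufun q Λ s := by
  rw [Ufun, Ufun, mul_neg, cosh_neg]

theorem pt_vanish {q Λ : ℝ} (hq : 2 < q) (hΛ : 0 < Λ) {φ φ' : ℝ → ℝ}
    (h1 : ∀ s, HasDerivAt φ (φ' s) s) (hφ' : Continuous φ')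
    (i1 : Integrable fun s => φ s ^ 2) (i2 : Integrable fun s => φ' s ^ 2) (h0 : φ 0 = 0) :
    alphaV q Λ ^ 2 / (2 * q * Λ) * (∫ s, Ufun q Λ s ^ (q - 2) * φ s ^ 2) ≤
    (∫ s, φ' s ^ 2) + q ^ 2 * Λ / 4 * (∫ s, φ s ^ 2)
      - (q - 1) * (∫ s, Ufun q Λ s ^ (q - 2) * φ s ^ 2) := by
  have i3 := integrable_potential_mul_sq hq hΛ (r := q - 2) (by linarith) measurable_id i1
  simp only [id] at i3
  have hp := pt_half hq hΛ h1 hφ' i1 i2 h0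
  have hn := pt_half hq hΛ (φ := fun s => φ (-s)) (φ' := fun s => - φ' (-s))
    (fun s => ((h1 (-s)).comp s (hasDerivAt_neg s)).congr_deriv (by ring)) (by fun_prop)
    i1.comp_neg (by simpa using i2.comp_neg) (by simpa using h0)
  have e1 := integral_comp_neg_Ioi 0 fun s => Ufun q Λ s ^ (q - 2) * φ s ^ 2
  have e2 := integral_comp_neg_Ioi 0 fun s => (φ' s ^ 2 + q ^ 2 * Λ / 4 * φ s ^ 2
      - (q - 1) * (Ufun q Λ s ^ (q - 2) * φ s ^ 2))
  simp only [Ufun_neg, neg_zero] at e1 e2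
  simp only [neg_sq] at hn
  rw [e1, e2] at hn
  have i4 : Integrable fun s => φ' s ^ 2 + q ^ 2 * Λ / 4 * φ s ^ 2
      - (q - 1) * (Ufun q Λ s ^ (q - 2) * φ s ^ 2) :=
    (i2.add (i1.const_mul _)).sub (i3.const_mul _)
  have s1 := intervalIntegral.integral_Iic_add_Ioi (b := (0 : ℝ)) i3.integrableOn i3.integrableOn
  have s2 := intervalIntegral.integral_Iic_add_Ioi (b := (0 : ℝ)) i4.integrableOn i4.integrableOn
  have s3 : ∫ s, (φ' s ^ 2 + q ^ 2 * Λ / 4 * φ s ^ 2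
      - (q - 1) * (Ufun q Λ s ^ (q - 2) * φ s ^ 2)) = (∫ s, φ' s ^ 2)
      + q ^ 2 * Λ / 4 * (∫ s, φ s ^ 2) - (q - 1) * (∫ s, Ufun q Λ s ^ (q - 2) * φ s ^ 2) := by
    rw [← integral_const_mul, ← integral_const_mul,
      ← integral_add_sub3 i2 (i1.const_mul _) (i3.const_mul _)]
  rw [← s3, ← s1, ← s2]
  linarith

theorem integrable_zeroMode_sq {q Λ : ℝ} (hq : 2 < q) (hΛ : 0 < Λ) :
    Integrable fun s => (Ufun q Λ s ^ (q / 2)) ^ 2 := by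
  have : ∀ s, (Ufun q Λ s ^ (q / 2)) ^ 2 = Ufun q Λ s ^ q := fun s => by
    rw [← rpow_natCast, ← rpow_mul (Ufun_pos hq hΛ s).le]
    congr 1; push_cast; ring
  simp only [this]
  exact integrable_Ufun_rpow hq hΛ (by linarith)

/-- Spectral gap: a function orthogonal in `H¹` (with mass `q² Λ / 4`) to the ground state
`u^{q/2}` gains a multiple of the potential. Subtracting the multiple of the ground state which
makes the function vanish at `0` does not change the form, and only increases the potential
term. -/
theorem pt_orth {q Λ : ℝ} (hq : 2 < q) (hΛ : 0 < Λ) {b b' : ℝ → ℝ}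
    (h1 : ∀ s, HasDerivAt b (b' s) s) (hb' : Continuous b')
    (i1 : Integrable fun s => b s ^ 2) (i2 : Integrable fun s => b' s ^ 2)
    (ho : ∫ s, (b' s * (-(q * √Λ / 2 * tht q Λ s) * Ufun q Λ s ^ (q / 2)) +
      q ^ 2 * Λ / 4 * (b s * Ufun q Λ s ^ (q / 2))) = 0) :
    alphaV q Λ ^ 2 / (2 * q * Λ) * (∫ s, Ufun q Λ s ^ (q - 2) * b s ^ 2) ≤
    (∫ s, b' s ^ 2) + q ^ 2 * Λ / 4 * (∫ s, b s ^ 2)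
      - (q - 1) * (∫ s, Ufun q Λ s ^ (q - 2) * b s ^ 2) := by
  have ct := continuous_tht q Λ
  have cb : Continuous b := continuous_iff_continuousAt.2 fun s => (h1 s).continuousAt
  set w : ℝ → ℝ := fun s => Ufun q Λ s ^ (q / 2) with hw
  set T : ℝ → ℝ := fun s => q * √Λ / 2 * tht q Λ s with hT
  have hwd : ∀ s, HasDerivAt w (-T s * w s) s := fun s => hasDerivAt_zeroMode hq hΛ s
  have cw : Continuous w := continuous_Ufun_rpow hq hΛ _
  have cT : Continuous T := by fun_prop
  have bT : ∀ s, |T s| ≤ q * √Λ / 2 := fun s => by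
    simp only [hT]
    rw [abs_mul, abs_of_nonneg (by positivity)]
    exact mul_le_of_le_one_right (by positivity) (abs_tht_le q Λ s)
  have iw : Integrable fun s => w s ^ 2 := integrable_zeroMode_sq hq hΛ
  have iTw : Integrable fun s => (-T s * w s) ^ 2 := by
    have := (iw.bdd_mul cT.aestronglyMeasurable (Eventually.of_forall bT)).bdd_mul
      cT.aestronglyMeasurable (Eventually.of_forall bT)
    exact this.congr (Eventually.of_forall fun s => by simp only; ring)
  have mb := cb.aestronglyMeasurable (μ := volume)
  have mb' := hb'.aestronglyMeasurable (μ := volume)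
  have mw := cw.aestronglyMeasurable (μ := volume)
  have mTw : AEStronglyMeasurable (fun s => -T s * w s) volume :=
    Continuous.aestronglyMeasurable (by fun_prop)
  have ibw := integrable_mul_of_sq mb mw i1 iw
  have ib'w := integrable_mul_of_sq mb' mTw i2 iTw
  have iVbw := integrable_potential_mul_sq hq hΛ (r := q - 2) (by linarith) measurable_id ibw
  have iVww := integrable_potential_mul_sq hq hΛ (r := q - 2) (by linarith) measurable_id iw
  have iVbb := integrable_potential_mul_sq hq hΛ (r := q - 2) (by linarith) measurable_id i1
  simp only [id] at iVbw iVww iVbb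
  have hpot : ∀ s, T s ^ 2 - q * √Λ / 2 * (alphaV q Λ * (1 - tht q Λ s ^ 2)) =
      q ^ 2 * Λ / 4 - (q - 1) * Ufun q Λ s ^ (q - 2) := fun s => by
    have hs : √Λ ^ 2 = Λ := sq_sqrt hΛ.le
    rw [Ufun_potential hq hΛ]
    have e5 : q * √Λ / 2 * (alphaV q Λ * (1 - tht q Λ s ^ 2)) =
        q * (q - 2) / 4 * √Λ ^ 2 * (1 - tht q Λ s ^ 2) := by
      rw [alphaV]; ring
    have e6 : T s ^ 2 = q ^ 2 * √Λ ^ 2 / 4 * tht q Λ s ^ 2 := by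
      simp only [hT]; ring
    rw [e5, e6, hs]; ring
  -- orthogonality gives `∫ V b w = 0`, by the eigenvalue equation for `w`
  have hVbw : ∫ s, Ufun q Λ s ^ (q - 2) * (b s * w s) = 0 := by
    have ibTw := integrable_mul_of_sq mb mTw i1 iTw
    have hz := integral_eq_zero_of_hasDerivAt_of_integrable
      (f := fun s => b s * (-T s * w s))
      (f' := fun s => (b' s * (-T s * w s) + q ^ 2 * Λ / 4 * (b s * w s)) -
        (q - 1) * (Ufun q Λ s ^ (q - 2) * (b s * w s)))
      (fun s => by
        refine ((h1 s).mul ((((hasDerivAt_tht q Λ s).const_mul (q * √Λ / 2)).neg).mul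
          (hwd s))).congr_deriv ?_
        have := hpot s
        simp only [hT, Pi.neg_apply, Pi.mul_apply] at this ⊢
        linear_combination b s * w s * this)
      ((ib'w.add (ibw.const_mul _)).sub (iVbw.const_mul _)) ibTw
    rw [integral_add_sub3 ib'w (ibw.const_mul _) (iVbw.const_mul _),
      ← integral_add ib'w (ibw.const_mul _), ho, integral_const_mul] at hz
    have : q - 1 ≠ 0 := by linarith
    have h0 : (q - 1) * ∫ s, Ufun q Λ s ^ (q - 2) * (b s * w s) = 0 := by linarith
    exact (mul_eq_zero.1 h0).resolve_left this
  set k := b 0 / w 0 with hk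
  have hw0 : w 0 ≠ 0 := (rpow_pos_of_pos (Ufun_pos hq hΛ 0) _).ne'
  set φ : ℝ → ℝ := fun s => b s - k * w s with hφ
  set φ' : ℝ → ℝ := fun s => b' s - k * (-T s * w s) with hφ'
  have hφd : ∀ s, HasDerivAt φ (φ' s) s := fun s => (h1 s).sub ((hwd s).const_mul k)
  have j1 : Integrable fun s => φ s ^ 2 :=
    ((i1.sub (ibw.const_mul (2 * k))).add (iw.const_mul (k ^ 2))).congr
      (Eventually.of_forall fun s => by simp [hφ]; ring)
  have j2 : Integrable fun s => φ' s ^ 2 :=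
    ((i2.sub (ib'w.const_mul (2 * k))).add (iTw.const_mul (k ^ 2))).congr
      (Eventually.of_forall fun s => by simp [hφ']; ring)
  have cφ' : Continuous φ' := by fun_prop
  have hA := pt_line hq hΛ h1 hb' i1 i2
  have hB := pt_line hq hΛ hφd cφ' j1 j2
  have hAB : ∫ s, (φ' s + q * √Λ / 2 * tht q Λ s * φ s) ^ 2 =
      ∫ s, (b' s + q * √Λ / 2 * tht q Λ s * b s) ^ 2 := by
    congr 1; funext s; simp only [hφ, hφ', hT]; ring
  have hC := pt_vanish hq hΛ hφd cφ' j1 j2 (by simp only [hφ, hk]; field_simp; ring)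
  rw [hB, hAB, ← hA] at hC
  refine le_trans ?_ hC
  refine mul_le_mul_of_nonneg_left ?_ (by positivity)
  have hexp : ∫ s, Ufun q Λ s ^ (q - 2) * φ s ^ 2 =
      (∫ s, Ufun q Λ s ^ (q - 2) * b s ^ 2)
      - 2 * k * (∫ s, Ufun q Λ s ^ (q - 2) * (b s * w s))
      + k ^ 2 * ∫ s, Ufun q Λ s ^ (q - 2) * w s ^ 2 := by
    have : ∀ s, Ufun q Λ s ^ (q - 2) * φ s ^ 2 = Ufun q Λ s ^ (q - 2) * b s ^ 2
        + k ^ 2 * (Ufun q Λ s ^ (q - 2) * w s ^ 2)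
        - 2 * k * (Ufun q Λ s ^ (q - 2) * (b s * w s)) := fun s => by
      simp only [hφ]; ring
    simp only [this]
    rw [integral_add_sub3 iVbb (iVww.const_mul _) (iVbw.const_mul _), integral_const_mul,
      integral_const_mul]
    ring
  have hnn : 0 ≤ ∫ s, Ufun q Λ s ^ (q - 2) * w s ^ 2 := integral_nonneg fun s =>
    mul_nonneg (rpow_nonneg (Ufun_pos hq hΛ s).le _) (sq_nonneg _)
  rw [hexp, hVbw]
  nlinarith [sq_nonneg k]

/-- The form stays nonnegative on the orthogonal complement of the ground state after a small
loss, thanks to the spectral gap. -/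
theorem pt_orth_loss {q Λ : ℝ} (hq : 2 < q) (hΛ : 0 < Λ) {b b' : ℝ → ℝ}
    (h1 : ∀ s, HasDerivAt b (b' s) s) (hb' : Continuous b')
    (i1 : Integrable fun s => b s ^ 2) (i2 : Integrable fun s => b' s ^ 2)
    (ho : ∫ s, (b' s * (-(q * √Λ / 2 * tht q Λ s) * Ufun q Λ s ^ (q / 2)) +
      q ^ 2 * Λ / 4 * (b s * Ufun q Λ s ^ (q / 2))) = 0)
    {c : ℝ} (hc1 : c ≤ 1)
    (hc : c * (q - 1) ≤ (1 - c) * (alphaV q Λ ^ 2 / (2 * q * Λ))) :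
    (q - 1) * (∫ s, Ufun q Λ s ^ (q - 2) * b s ^ 2) ≤
      (1 - c) * ((∫ s, b' s ^ 2) + q ^ 2 * Λ / 4 * ∫ s, b s ^ 2) := by
  have h := pt_orth hq hΛ h1 hb' i1 i2 ho
  have hnn : 0 ≤ ∫ s, Ufun q Λ s ^ (q - 2) * b s ^ 2 := integral_nonneg fun s =>
    mul_nonneg (rpow_nonneg (Ufun_pos hq hΛ s).le _) (sq_nonneg _)
  have e1 := mul_le_mul_of_nonneg_left h (sub_nonneg.2 hc1)
  have e2 := mul_le_mul_of_nonneg_right hc hnn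
  nlinarith

/-! ### The orthonormal family `Y_{0,0}`, `Y_{2,0}`, `Y_{1,i}` -/

/-- The index of the last coordinate. -/
def lastIx {d : ℕ} (hd : 2 ≤ d) : Fin d := ⟨d - 1, Nat.sub_lt (by omega) one_pos⟩

theorem coordLast_eq {d : ℕ} (hd : 2 ≤ d) (x : Ed d) : coordLast d x = x (lastIx hd) := by
  rw [coordLast, dif_pos (by omega)]; rfl

/-- The spherical harmonics which are split off: `Y_{0,0}`, `Y_{2,0}` and the normalized
coordinates, which span the harmonics of degree one. -/
noncomputable def Yfam (d : ℕ) : Bool ⊕ Fin d → Sph d → ℝ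
  | Sum.inl false => Y00 d
  | Sum.inl true => Y20 d
  | Sum.inr i => fun ω => √(d / sphVol d) * (ω : Ed d) i

/-- The normalization constant of `Y_{2,0}`. -/
noncomputable def K20 (d : ℕ) : ℝ :=
  √((d : ℝ) ^ 2 * ((d : ℝ) + 2) / (2 * ((d : ℝ) - 1) * sphVol d))

/-- Polynomials representing the members of `Yfam` on the sphere. -/
noncomputable def Ypoly {d : ℕ} (hd : 2 ≤ d) : Bool ⊕ Fin d → MvPolynomial (Fin d) ℝ
  | Sum.inl false => MvPolynomial.C (√(sphVol d))⁻¹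
  | Sum.inl true => MvPolynomial.C (K20 d) *
      (MvPolynomial.X (lastIx hd) * MvPolynomial.X (lastIx hd) - MvPolynomial.C (1 / (d : ℝ)))
  | Sum.inr i => MvPolynomial.C √(d / sphVol d) * MvPolynomial.X i

theorem Yfam_eq {d : ℕ} (hd : 2 ≤ d) (k : Bool ⊕ Fin d) (ω : Sph d) :
    Yfam d k ω = ev (Ypoly hd k) ω := by
  rcases k with (_ | _) | i
  · simp [Yfam, Y00, Ypoly, ev]
  · simp [Yfam, Y20, Ypoly, ev, coordLast_eq hd, K20, pow_two]
  · simp [Yfam, Ypoly, ev]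

theorem continuous_Yfam {d : ℕ} (hd : 2 ≤ d) (k : Bool ⊕ Fin d) : Continuous (Yfam d k) := by
  rw [funext (Yfam_eq hd k)]
  exact (continuous_ev _).comp continuous_subtype_val

theorem sq_K20 {d : ℕ} (hd : 2 ≤ d) :
    K20 d ^ 2 = (d : ℝ) ^ 2 * ((d : ℝ) + 2) / (2 * ((d : ℝ) - 1) * sphVol d) := by
  have := sphVol_pos d hd
  have h2 : (2 : ℝ) ≤ d := by exact_mod_cast hd
  have : (0 : ℝ) < (d : ℝ) - 1 := by linarith
  rw [K20, sq_sqrt (by positivity)]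

theorem Yfam_orthonormal {d : ℕ} (hd : 2 ≤ d) (k l : Bool ⊕ Fin d) :
    ∫ ω, Yfam d k ω * Yfam d l ω ∂(sphMeasure d) = if k = l then 1 else 0 := by
  have hV := sphVol_pos d hd
  have h2 : (2 : ℝ) ≤ d := by exact_mod_cast hd
  have hd0 : (d : ℝ) ≠ 0 := by positivity
  have hK := sq_K20 hd
  have hs : √(sphVol d) ^ 2 = sphVol d := sq_sqrt hV.le
  have hr : √(d / sphVol d) ^ 2 = d / sphVol d := sq_sqrt (by positivity)
  have hx := Jint_X_sq hd (lastIx hd)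
  have hsym : ∀ p r : MvPolynomial (Fin d) ℝ, Jint (p * r) = Jint (r * p) := fun p r => by
    rw [mul_comm]
  have h02 : Jint (Ypoly hd (Sum.inl false) * Ypoly hd (Sum.inl true)) = 0 := by
    simp only [Ypoly]
    rw [Jint_C_mul, Jint_C_mul, Jint_sub, hx, Jint_C]
    field_simp; ring
  have h01 : ∀ i, Jint (Ypoly hd (Sum.inl false) * Ypoly hd (Sum.inr i)) = 0 := fun i => by
    simp only [Ypoly]
    rw [Jint_C_mul, Jint_C_mul, Jint_X]; simp
  have h21 : ∀ i, Jint (Ypoly hd (Sum.inl true) * Ypoly hd (Sum.inr i)) = 0 := fun i => by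
    refine Jint_odd _ fun x => ?_
    simp only [Ypoly, ev_mul, ev_sub]
    simp [ev]
  simp only [Yfam_eq hd, ← ev_mul]
  change Jint (Ypoly hd k * Ypoly hd l) = _
  rcases k with (_ | _) | i <;> rcases l with (_ | _) | j
  · simp only [Ypoly, if_true]
    rw [Jint_C_mul, Jint_C, ← mul_assoc, ← pow_two, inv_pow, hs]
    field_simp
  · simpa using h02
  · simpa using h01 j
  · rw [hsym]; simpa using h02
  · simp only [Ypoly, if_true]
    have : ∀ X a b : MvPolynomial (Fin d) ℝ, a * (X * X - b) * (a * (X * X - b)) =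
      a * (a * (X * X * (X * X) - b * (X * X) - b * (X * X) + b * b)) := fun _ _ _ => by ring
    rw [this, Jint_C_mul, Jint_C_mul, Jint_add, Jint_sub, Jint_sub, Jint_C_mul, Jint_C_mul, Jint_C,
      Jint_X_four hd, hx, ← mul_assoc, ← pow_two, hK]
    have : (0 : ℝ) < (d : ℝ) - 1 := by linarith
    field_simp; ring
  · simpa using h21 j
  · rw [hsym]; simpa using h01 i
  · rw [hsym]; simpa using h21 i
  · simp only [Ypoly]
    have : ∀ X Y a : MvPolynomial (Fin d) ℝ, a * X * (a * Y) = a * (a * (X * Y)) :=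
      fun _ _ _ => by ring
    rw [this, Jint_C_mul, Jint_C_mul]
    by_cases hij : i = j
    · subst hij
      rw [Jint_X_sq hd, ← mul_assoc, ← pow_two, hr, if_pos rfl]
      field_simp
    · rw [Jint_X_mul_X_ne hij, if_neg (by simpa using hij)]; simp

/-- Bessel's identity for the finite orthonormal family. -/
theorem bessel {d : ℕ} (hd : 2 ≤ d) {f : Sph d → ℝ} (hf : Continuous f) :
    ∫ ω, (f ω - ∑ k, (∫ η, f η * Yfam d k η ∂(sphMeasure d)) * Yfam d k ω) ^ 2 ∂(sphMeasure d) =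
    ∫ ω, f ω ^ 2 ∂(sphMeasure d) - ∑ k, (∫ η, f η * Yfam d k η ∂(sphMeasure d)) ^ 2 := by
  have hY := continuous_Yfam hd
  set a : Bool ⊕ Fin d → ℝ := fun k => ∫ η, f η * Yfam d k η ∂(sphMeasure d) with ha
  have e : ∀ ω, (f ω - ∑ k, a k * Yfam d k ω) ^ 2 = f ω ^ 2
      + (∑ k, ∑ l, a k * (a l * (Yfam d k ω * Yfam d l ω)))
      - ∑ k, 2 * (a k * (f ω * Yfam d k ω)) := fun ω => by
    rw [sub_sq, pow_two (∑ k, a k * Yfam d k ω), Finset.sum_mul_sum, ← Finset.mul_sum]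
    have e1 : ∑ k, ∑ l, a k * Yfam d k ω * (a l * Yfam d l ω) =
      ∑ k, ∑ l, a k * (a l * (Yfam d k ω * Yfam d l ω)) :=
      Finset.sum_congr rfl fun k _ => Finset.sum_congr rfl fun l _ => by ring
    have e2 : f ω * ∑ k, a k * Yfam d k ω = ∑ k, a k * (f ω * Yfam d k ω) := by
      rw [Finset.mul_sum]; exact Finset.sum_congr rfl fun k _ => by ring
    rw [e1, mul_assoc 2, e2]; ring
  have hintg : ∀ ω, (f ω - ∑ k, (∫ η, f η * Yfam d k η ∂(sphMeasure d)) * Yfam d k ω) ^ 2 = _ := e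
  simp only [hintg]
  rw [integral_add_sub3 (sph_integrable (by fun_prop)) (sph_integrable (by fun_prop))
    (sph_integrable (by fun_prop))]
  have e3 : ∫ ω, ∑ k, ∑ l, a k * (a l * (Yfam d k ω * Yfam d l ω)) ∂(sphMeasure d)
      = ∑ k, a k ^ 2 := by
    rw [integral_finsetSum _ fun k _ => sph_integrable (by fun_prop)]
    refine Finset.sum_congr rfl fun k _ => ?_
    rw [integral_finsetSum _ fun l _ => sph_integrable (by fun_prop)]
    simp only [integral_const_mul, Yfam_orthonormal hd]
    simp [pow_two]
  have e4 : ∫ ω, ∑ k, 2 * (a k * (f ω * Yfam d k ω)) ∂(sphMeasure d) = 2 * ∑ k, a k ^ 2 := by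
    rw [integral_finsetSum _ fun k _ => sph_integrable (by fun_prop), Finset.mul_sum]
    refine Finset.sum_congr rfl fun k _ => ?_
    simp only [integral_const_mul]
    rw [pow_two]
  rw [e3, e4]; ring

/-! ### The spherical gradient through infinitesimal rotations -/

theorem gradient_coord {d : ℕ} (f : Ed d → ℝ) (x : Ed d) (i : Fin d) :
    gradient f x i = fderiv ℝ f x (ei i) := by
  rw [← inner_gradient_left, ei, EuclideanSpace.inner_single_right]
  simp

theorem sum_sq_sph {d : ℕ} (ω : Sph d) : ∑ i, (ω : Ed d) i ^ 2 = 1 := by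
  rw [← EuclideanSpace.real_norm_sq_eq]; simp

theorem inner_coord {d : ℕ} (x y : Ed d) : ⟪x, y⟫ = ∑ i, x i * y i := by
  simp [PiLp.inner_apply, mul_comm]

/-- Lagrange's identity. -/
theorem norm_sgrad_sq {d : ℕ} (φ : ℝ × Ed d → ℝ) (p : ℝ × Sph d) :
    ‖sgrad d φ p‖ ^ 2 = (∑ i, ∑ j, Lop i j (fun x => φ (p.1, x)) p.2 ^ 2) / 2 := by
  set g := gradient (fun x => φ (p.1, x)) (p.2 : Ed d) with hg
  have h1 : ‖sgrad d φ p‖ ^ 2 = ∑ i, g i ^ 2 - (∑ i, g i * (p.2 : Ed d) i) ^ 2 := by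
    have : sgrad d φ p = g - ⟪g, (p.2 : Ed d)⟫ • (p.2 : Ed d) := rfl
    rw [this, norm_sub_sq_real, inner_smul_right, norm_smul, mul_pow,
      EuclideanSpace.real_norm_sq_eq, inner_coord]
    simp
    ring
  have h2 : ∑ i, ∑ j, Lop i j (fun x => φ (p.1, x)) p.2 ^ 2 =
      2 * ((∑ i, (p.2 : Ed d) i ^ 2) * ∑ i, g i ^ 2) - 2 * (∑ i, g i * (p.2 : Ed d) i) ^ 2 := by
    have e : ∀ i j, Lop i j (fun x => φ (p.1, x)) p.2 ^ 2 =
        (p.2 : Ed d) i ^ 2 * g j ^ 2 + g i ^ 2 * (p.2 : Ed d) j ^ 2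
        - 2 * ((g i * (p.2 : Ed d) i) * (g j * (p.2 : Ed d) j)) := fun i j => by
      rw [Lop, ← gradient_coord, ← gradient_coord, ← hg]; ring
    simp only [e, Finset.sum_sub_distrib, Finset.sum_add_distrib, ← Finset.mul_sum,
      ← Finset.sum_mul]
    ring
  rw [h1, h2, sum_sq_sph]; ring

theorem contDiff_sliceX {d : ℕ} {G : ℝ × Ed d → ℝ} (hG : ContDiff ℝ 1 G) (s : ℝ) :
    ContDiff ℝ 1 fun x => G (s, x) := hG.comp (contDiff_prodMk_right s)

theorem Lop_slice {d : ℕ} {G : ℝ × Ed d → ℝ} (hG : ContDiff ℝ 1 G) (i j : Fin d) (s : ℝ)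
    (x : Ed d) : Lop i j (fun x => G (s, x)) x =
      x i * fderiv ℝ G (s, x) (0, ei j) - x j * fderiv ℝ G (s, x) (0, ei i) := by
  have h1 : HasFDerivAt G (fderiv ℝ G (s, x)) (s, x) :=
    (hG.differentiable one_ne_zero).differentiableAt.hasFDerivAt
  have h2 : HasFDerivAt (fun y : Ed d => (s, y)) (ContinuousLinearMap.inr ℝ ℝ (Ed d)) x :=
    hasFDerivAt_prodMk_right s x
  have h3 := (h1.comp x h2).fderiv
  have h4 : fderiv ℝ (fun x => G (s, x)) x = (fderiv ℝ G (s, x)).comp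
    (ContinuousLinearMap.inr ℝ ℝ (Ed d)) := h3
  rw [Lop, h4]; simp

theorem continuous_Lop_slice {d : ℕ} {G : ℝ × Ed d → ℝ} (hG : ContDiff ℝ 1 G) (i j : Fin d) :
    Continuous fun p : ℝ × Sph d => Lop i j (fun x => G (p.1, x)) p.2 := by
  have := hG.continuous_fderiv one_ne_zero
  simp only [Lop_slice hG]
  fun_prop

/-- Pairing with the spherical gradient of a multiple of a coordinate. -/
theorem inner_sgrad_coord {d : ℕ} (φ : ℝ × Ed d → ℝ) (w : ℝ → ℝ) (i : Fin d) (p : ℝ × Sph d) :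
    ⟪sgrad d φ p, sgrad d (fun z => w z.1 * z.2 i) p⟫ =
      w p.1 * ∑ j, (p.2 : Ed d) j * Lop j i (fun x => φ (p.1, x)) p.2 := by
  set g := gradient (fun x => φ (p.1, x)) (p.2 : Ed d) with hg
  have hgr : gradient (fun x : Ed d => w p.1 * x i) (p.2 : Ed d) = w p.1 • ei i := by
    ext j
    rw [gradient_coord]
    have h : HasFDerivAt (fun x : Ed d => w p.1 * x i)
        (w p.1 • (EuclideanSpace.proj i : Ed d →L[ℝ] ℝ)) (p.2 : Ed d) :=
      ((EuclideanSpace.proj i : Ed d →L[ℝ] ℝ).hasFDerivAt (x := (p.2 : Ed d))).const_mul (w p.1)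
    rw [h.fderiv]
    simp [ei, eq_comm]
  have h1 : sgrad d φ p = g - ⟪g, (p.2 : Ed d)⟫ • (p.2 : Ed d) := rfl
  have h2 : sgrad d (fun z => w z.1 * z.2 i) p = w p.1 • ei i -
      ⟪w p.1 • ei i, (p.2 : Ed d)⟫ • (p.2 : Ed d) := by rw [← hgr]; rfl
  have hn : ⟪(p.2 : Ed d), (p.2 : Ed d)⟫ = 1 := by
    rw [real_inner_self_eq_norm_sq]; simp
  have hei : ∀ x : Ed d, ⟪x, ei i⟫ = x i := fun x => by
    rw [ei, EuclideanSpace.inner_single_right]; simp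
  have h3 : ∑ j, (p.2 : Ed d) j * Lop j i (fun x => φ (p.1, x)) p.2 =
      (∑ j, (p.2 : Ed d) j ^ 2) * g i - (p.2 : Ed d) i * ⟪g, (p.2 : Ed d)⟫ := by
    rw [inner_coord, Finset.sum_mul, Finset.mul_sum, ← Finset.sum_sub_distrib]
    refine Finset.sum_congr rfl fun j _ => ?_
    rw [Lop, ← gradient_coord, ← gradient_coord, ← hg]; ring
  rw [h3, sum_sq_sph, h1, h2]
  simp only [inner_sub_left, inner_sub_right, inner_smul_left, inner_smul_right, hn, hei,
    real_inner_comm (p.2 : Ed d) (ei i), conj_trivial, PiLp.sub_apply, PiLp.smul_apply,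
    smul_eq_mul]
  ring

/-- The coordinates are eigenfunctions of the spherical Laplacian with eigenvalue `d - 1`. -/
theorem integral_Lop_coord {d : ℕ} {f : Ed d → ℝ} (hf : ContDiff ℝ 1 f) (i : Fin d) :
    ∫ ω : Sph d, ∑ j, (ω : Ed d) j * Lop j i f ω ∂(sphMeasure d) =
      ((d : ℝ) - 1) * ∫ ω : Sph d, f ω * (ω : Ed d) i ∂(sphMeasure d) := by
  have hL := fun j => continuous_Lop j i hf
  have hcf := hf.continuous
  have hX : ∀ j : Fin d, ContDiff ℝ 1 fun x : Ed d => x j := fun j =>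
    (EuclideanSpace.proj j : Ed d →L[ℝ] ℝ).contDiff
  have hcoord : ∀ (j k : Fin d) (x : Ed d), fderiv ℝ (fun x : Ed d => x j) x (ei k) =
      if j = k then 1 else 0 := fun j k x => by
    have h : HasFDerivAt (fun x : Ed d => x j) (EuclideanSpace.proj j : Ed d →L[ℝ] ℝ) x :=
      (EuclideanSpace.proj j : Ed d →L[ℝ] ℝ).hasFDerivAt
    rw [h.fderiv]; simp [ei]
  rw [integral_finsetSum _ fun j _ => sph_integrable (by fun_prop)]
  have : ∀ j, ∫ ω : Sph d, (ω : Ed d) j * Lop j i f ω ∂(sphMeasure d) =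
      (1 - if j = i then 1 else 0) * ∫ ω : Sph d, f ω * (ω : Ed d) i ∂(sphMeasure d) := fun j => by
    simp only [mul_comm ((_ : Ed d) j)]
    rw [integral_Lop_mul j i hf (hX j), ← integral_neg, ← integral_const_mul]
    congr 1; funext ω
    rw [Lop, hcoord, hcoord]
    rw [if_pos rfl]
    split_ifs with h
    · subst h; simp
    · ring
  rw [Finset.sum_congr rfl fun j _ => this j, ← Finset.sum_mul]
  simp

/-! ### Decomposition of square-integrable functions on the cylinder -/

theorem cyl_integral {d : ℕ} {F : ℝ × Sph d → ℝ} (hF : Integrable F (cylMeasure d)) :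
    ∫ p, F p ∂(cylMeasure d) = ∫ s, ∫ ω, F (s, ω) ∂(sphMeasure d) := integral_prod F hF

theorem cyl_integral_symm {d : ℕ} {F : ℝ × Sph d → ℝ} (hF : Integrable F (cylMeasure d)) :
    ∫ p, F p ∂(cylMeasure d) = ∫ ω, (∫ s, F (s, ω)) ∂(sphMeasure d) := integral_prod_symm F hF

theorem cyl_integrable_left {d : ℕ} {F : ℝ × Sph d → ℝ} (hF : Integrable F (cylMeasure d)) :
    Integrable fun s => ∫ ω, F (s, ω) ∂(sphMeasure d) := Integrable.integral_prod_left hF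

/-- The coefficient of a function on the cylinder along a member of `Yfam`. -/
noncomputable def coef {d : ℕ} (F : ℝ × Sph d → ℝ) (k : Bool ⊕ Fin d) (s : ℝ) : ℝ :=
  ∫ ω, F (s, ω) * Yfam d k ω ∂(sphMeasure d)

/-- What remains of a function on the cylinder after splitting off the members of `Yfam`. -/
noncomputable def rest {d : ℕ} (F : ℝ × Sph d → ℝ) (p : ℝ × Sph d) : ℝ :=
  F p - ∑ k, coef F k p.1 * Yfam d k p.2

theorem continuous_coef {d : ℕ} (hd : 2 ≤ d) {F : ℝ × Sph d → ℝ} (hF : Continuous F)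
    (k : Bool ⊕ Fin d) : Continuous (coef F k) := by
  have hY := continuous_Yfam hd k
  have h : Continuous (Function.uncurry fun (s : ℝ) (ω : Sph d) => F (s, ω) * Yfam d k ω) := by
    unfold Function.uncurry; fun_prop
  have := continuous_parametric_integral_of_continuous (μ := sphMeasure d) h
    (isCompact_univ (X := Sph d))
  simp only [Measure.restrict_univ] at this
  exact this

theorem continuous_rest {d : ℕ} (hd : 2 ≤ d) {F : ℝ × Sph d → ℝ} (hF : Continuous F) :
    Continuous (rest F) := by
  have hY := continuous_Yfam hd
  have hc := continuous_coef hd hF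
  unfold rest
  fun_prop

theorem rest_slice {d : ℕ} (hd : 2 ≤ d) {F : ℝ × Sph d → ℝ} (hF : Continuous F) (s : ℝ) :
    ∫ ω, rest F (s, ω) ^ 2 ∂(sphMeasure d) =
      ∫ ω, F (s, ω) ^ 2 ∂(sphMeasure d) - ∑ k, coef F k s ^ 2 :=
  bessel hd (f := fun ω => F (s, ω)) (by fun_prop)

theorem integrable_coef_sq {d : ℕ} (hd : 2 ≤ d) {F : ℝ × Sph d → ℝ} (hF : Continuous F)
    (hF2 : Integrable (fun p => F p ^ 2) (cylMeasure d)) (k : Bool ⊕ Fin d) :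
    Integrable fun s => coef F k s ^ 2 := by
  refine (cyl_integrable_left hF2).mono' ((continuous_coef hd hF k).pow 2).aestronglyMeasurable
    (Eventually.of_forall fun s => ?_)
  rw [norm_of_nonneg (sq_nonneg _)]
  have h1 := rest_slice hd hF s
  have h2 : 0 ≤ ∫ ω, rest F (s, ω) ^ 2 ∂(sphMeasure d) := integral_nonneg fun ω => sq_nonneg _
  have h3 := Finset.single_le_sum (f := fun k => coef F k s ^ 2) (fun i _ => sq_nonneg _)
    (Finset.mem_univ k)
  linarith

theorem integrable_rest_sq {d : ℕ} (hd : 2 ≤ d) {F : ℝ × Sph d → ℝ} (hF : Continuous F)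
    (hF2 : Integrable (fun p => F p ^ 2) (cylMeasure d)) :
    Integrable (fun p => rest F p ^ 2) (cylMeasure d) := by
  have hr := continuous_rest hd hF
  unfold cylMeasure
  rw [integrable_prod_iff (Continuous.aestronglyMeasurable (by fun_prop))]
  refine ⟨Eventually.of_forall fun s => sph_integrable (by fun_prop), ?_⟩
  have : ∀ s, ∫ ω, ‖rest F (s, ω) ^ 2‖ ∂(sphMeasure d) =
      ∫ ω, F (s, ω) ^ 2 ∂(sphMeasure d) - ∑ k, coef F k s ^ 2 := fun s => by
    rw [← rest_slice hd hF]
    congr 1; funext ω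
    rw [norm_of_nonneg (sq_nonneg _)]
  simp only [this]
  exact (cyl_integrable_left hF2).sub
    (integrable_finsetSum _ fun k _ => integrable_coef_sq hd hF hF2 k)

/-- Parseval's identity with a bounded weight depending on the axial variable only. -/
theorem parseval {d : ℕ} (hd : 2 ≤ d) {F : ℝ × Sph d → ℝ} (hF : Continuous F)
    (hF2 : Integrable (fun p => F p ^ 2) (cylMeasure d)) {m : ℝ → ℝ} (hm : Continuous m) {B : ℝ}
    (hB : ∀ s, |m s| ≤ B) :
    ∫ p, m p.1 * F p ^ 2 ∂(cylMeasure d) =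
      ∑ k, (∫ s, m s * coef F k s ^ 2) + ∫ p, m p.1 * rest F p ^ 2 ∂(cylMeasure d) := by
  have hmm : AEStronglyMeasurable (fun p : ℝ × Sph d => m p.1) (cylMeasure d) :=
    Continuous.aestronglyMeasurable (by fun_prop)
  have j1 : Integrable (fun p => m p.1 * F p ^ 2) (cylMeasure d) :=
    hF2.bdd_mul hmm (Eventually.of_forall fun p => hB p.1)
  have j2 : Integrable (fun p => m p.1 * rest F p ^ 2) (cylMeasure d) :=
    (integrable_rest_sq hd hF hF2).bdd_mul hmm (Eventually.of_forall fun p => hB p.1)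
  have j3 : ∀ k ∈ (Finset.univ : Finset (Bool ⊕ Fin d)),
      Integrable fun s => m s * coef F k s ^ 2 := fun k _ =>
    (integrable_coef_sq hd hF hF2 k).bdd_mul hm.aestronglyMeasurable (Eventually.of_forall hB)
  rw [cyl_integral j1, cyl_integral j2, ← integral_finsetSum _ j3,
    ← integral_add (integrable_finsetSum _ j3) (cyl_integrable_left j2)]
  congr 1; funext s
  simp only [integral_const_mul, ← Finset.mul_sum]
  rw [rest_slice hd hF]; ring

/-! ### The expansion of a function in `H¹` of the cylinder -/

/-- The axial derivative as a continuous function on the cylinder. -/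
noncomputable def dax {d : ℕ} (R : ℝ × Ed d → ℝ) (p : ℝ × Sph d) : ℝ :=
  fderiv ℝ R (p.1, (p.2 : Ed d)) (1, 0)

theorem dS_eq_dax {d : ℕ} {R : ℝ × Ed d → ℝ} (hR : ContDiff ℝ 1 R) (p : ℝ × Sph d) :
    dS d R p = dax R p := (hasDerivAt_slice hR p.1 p.2).deriv

theorem continuous_dax {d : ℕ} {R : ℝ × Ed d → ℝ} (hR : ContDiff ℝ 1 R) :
    Continuous (dax R : ℝ × Sph d → ℝ) := by
  have := continuous_fderiv_apply hR
  unfold dax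
  fun_prop

theorem continuous_cylVal {d : ℕ} {R : ℝ × Ed d → ℝ} (hR : ContDiff ℝ 1 R) :
    Continuous (cylVal d R) := by
  have := hR.continuous
  unfold cylVal
  fun_prop

theorem hasDerivAt_coef {d : ℕ} (hd : 2 ≤ d) {R : ℝ × Ed d → ℝ} (hR : ContDiff ℝ 1 R)
    (k : Bool ⊕ Fin d) (s : ℝ) : HasDerivAt (coef (cylVal d R) k) (coef (dax R) k s) s :=
  hasDerivAt_sph_integral hR (continuous_Yfam hd k) s

theorem hasDerivAt_rest {d : ℕ} (hd : 2 ≤ d) {R : ℝ × Ed d → ℝ} (hR : ContDiff ℝ 1 R)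
    (ω : Sph d) (s : ℝ) :
    HasDerivAt (fun s => rest (cylVal d R) (s, ω)) (rest (dax R) (s, ω)) s :=
  (hasDerivAt_slice hR s ω).sub
    (HasDerivAt.fun_sum fun k _ => (hasDerivAt_coef hd hR k s).mul_const (Yfam d k ω))

theorem continuous_norm_sgrad_sq {d : ℕ} {R : ℝ × Ed d → ℝ} (hR : ContDiff ℝ 1 R) :
    Continuous fun p => ‖sgrad d R p‖ ^ 2 := by
  have := continuous_Lop_slice hR
  simp only [norm_sgrad_sq]
  fun_prop

theorem memH1_parts {d : ℕ} {Λ q : ℝ} (hΛ : 0 < Λ) {R : ℝ × Ed d → ℝ} (hR : MemH1 d Λ q R) :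
    Integrable (fun p => dax R p ^ 2) (cylMeasure d) ∧
    Integrable (fun p => ‖sgrad d R p‖ ^ 2) (cylMeasure d) ∧
    Integrable (fun p => cylVal d R p ^ 2) (cylMeasure d) := by
  obtain ⟨h1, h2, -⟩ := hR
  have c1 := continuous_dax h1
  have c2 := continuous_norm_sgrad_sq h1
  have c3 := continuous_cylVal h1
  simp only [dS_eq_dax h1] at h2
  refine ⟨h2.mono' (Continuous.aestronglyMeasurable (by fun_prop)) (Eventually.of_forall fun p => ?_),
    h2.mono' c2.aestronglyMeasurable (Eventually.of_forall fun p => ?_),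
    (h2.const_mul Λ⁻¹).mono' (Continuous.aestronglyMeasurable (by fun_prop))
      (Eventually.of_forall fun p => ?_)⟩ <;>
    have e1 := sq_nonneg (dax R p) <;> have e2 := sq_nonneg ‖sgrad d R p‖ <;>
    have e3 := mul_nonneg hΛ.le (sq_nonneg (cylVal d R p)) <;>
    rw [norm_of_nonneg (sq_nonneg _)]
  · linarith
  · linarith
  · rw [inv_mul_eq_div, le_div_iff₀ hΛ]; linarith

theorem h1NormSq_eq {d : ℕ} {Λ q : ℝ} (hΛ : 0 < Λ) {R : ℝ × Ed d → ℝ} (hR : MemH1 d Λ q R) :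
    h1NormSq d Λ R = (∫ p, dax R p ^ 2 ∂(cylMeasure d)) +
      (∫ p, ‖sgrad d R p‖ ^ 2 ∂(cylMeasure d)) + Λ * ∫ p, cylVal d R p ^ 2 ∂(cylMeasure d) := by
  obtain ⟨i1, i2, i3⟩ := memH1_parts hΛ hR
  unfold h1NormSq
  simp only [dS_eq_dax hR.1]
  rw [← integral_const_mul, ← integral_add i1 i2,
    ← integral_add (f := fun p => dax R p ^ 2 + ‖sgrad d R p‖ ^ 2) (i1.add i2) (i3.const_mul Λ)]

/-- The sharp bound on the angular energy, integrated along the axis. -/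
theorem angular_bound {d : ℕ} (hd : 2 ≤ d) {Λ q : ℝ} (hΛ : 0 < Λ) {R : ℝ × Ed d → ℝ}
    (hR : MemH1 d Λ q R) :
    2 * d * (∫ p, cylVal d R p ^ 2 ∂(cylMeasure d)) ≤ (∫ p, ‖sgrad d R p‖ ^ 2 ∂(cylMeasure d))
      + 2 * d * (∫ s, coef (cylVal d R) (Sum.inl false) s ^ 2)
      + (d + 1) * ∑ i, ∫ s, coef (cylVal d R) (Sum.inr i) s ^ 2 := by
  obtain ⟨i1, i2, i3⟩ := memH1_parts hΛ hR
  have hV := sphVol_pos d hd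
  have hc := integrable_coef_sq hd (continuous_cylVal hR.1) i3
  have hsum : ∀ i ∈ (Finset.univ : Finset (Fin d)),
      Integrable fun s => coef (cylVal d R) (Sum.inr i) s ^ 2 := fun i _ => hc _
  rw [cyl_integral i2, cyl_integral i3, ← integral_finsetSum _ hsum, ← integral_const_mul,
    ← integral_const_mul, ← integral_const_mul]
  rw [← integral_add (cyl_integrable_left i2) ((hc _).const_mul _),
    ← integral_add (f := fun s => (∫ ω, ‖sgrad d R (s, ω)‖ ^ 2 ∂(sphMeasure d)) +
      2 * d * coef (cylVal d R) (Sum.inl false) s ^ 2)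
      ((cyl_integrable_left i2).add ((hc _).const_mul _))
      ((integrable_finsetSum _ hsum).const_mul _)]
  refine integral_mono ((cyl_integrable_left i3).const_mul _)
    (((cyl_integrable_left i2).add ((hc _).const_mul _)).add
      ((integrable_finsetSum _ hsum).const_mul _)) fun s => ?_
  have hp := sph_poincare hd (contDiff_sliceX hR.1 s)
  have e1 : ∫ ω, ‖sgrad d R (s, ω)‖ ^ 2 ∂(sphMeasure d) =
      (∫ ω : Sph d, ∑ i, ∑ j, Lop i j (fun x => R (s, x)) ω ^ 2 ∂(sphMeasure d)) / 2 := by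
    simp only [norm_sgrad_sq]
    rw [integral_div]
  have e2 : coef (cylVal d R) (Sum.inl false) s ^ 2 =
      (∫ ω : Sph d, R (s, ω) ∂(sphMeasure d)) ^ 2 / sphVol d := by
    simp only [coef, Yfam, Y00, cylVal]
    rw [integral_mul_const, mul_pow, inv_pow, sq_sqrt hV.le, div_eq_mul_inv]
  have e3 : ∑ i, coef (cylVal d R) (Sum.inr i) s ^ 2 =
      d / sphVol d * ∑ i, (∫ ω : Sph d, R (s, ω) * (ω : Ed d) i ∂(sphMeasure d)) ^ 2 := by
    rw [Finset.mul_sum]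
    refine Finset.sum_congr rfl fun i _ => ?_
    simp only [coef, Yfam, cylVal]
    rw [← sq_sqrt (show 0 ≤ (d : ℝ) / sphVol d by positivity), ← mul_pow, ← integral_const_mul]
    congr 2; funext ω; ring_nf
    rw [sq_sqrt (show 0 ≤ (d : ℝ) * (sphVol d)⁻¹ by positivity)]
  simp only [e1, e2, e3]
  simp only [cylVal]
  linarith

/-! ### Estimates of the modes -/

theorem sph_coord_sq_le {d : ℕ} (ω : Sph d) (i : Fin d) : (ω : Ed d) i ^ 2 ≤ 1 := by
  rw [← sum_sq_sph ω]
  exact Finset.single_le_sum (f := fun i => (ω : Ed d) i ^ 2) (fun i _ => sq_nonneg _)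
    (Finset.mem_univ i)

theorem axial_mul {d : ℕ} {w : ℝ → ℝ} (hw : Continuous w) (hw2 : Integrable fun s => w s ^ 2)
    {F : ℝ × Sph d → ℝ} (hF : Continuous F)
    (hF2 : Integrable (fun p => F p ^ 2) (cylMeasure d)) :
    Integrable (fun p => w p.1 * F p) (cylMeasure d) :=
  integrable_mul_of_sq (Continuous.aestronglyMeasurable (by fun_prop)) hF.aestronglyMeasurable
    (hw2.comp_fst (sphMeasure d)) hF2

theorem integrable_sq_mul_coord {d : ℕ} {F : ℝ × Sph d → ℝ} (hF : Continuous F)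
    (hF2 : Integrable (fun p => F p ^ 2) (cylMeasure d)) (i : Fin d) :
    Integrable (fun p => (F p * (p.2 : Ed d) i) ^ 2) (cylMeasure d) := by
  refine hF2.mono' (Continuous.aestronglyMeasurable (by fun_prop))
    (Eventually.of_forall fun p => ?_)
  rw [norm_of_nonneg (sq_nonneg _), mul_pow]
  exact mul_le_of_le_one_right (sq_nonneg _) (sph_coord_sq_le p.2 i)

/-- The angular part of the pairing of `R` with a function of the form `w(s) ω_i`, without the
factor `w`. -/
noncomputable def angPair {d : ℕ} (R : ℝ × Ed d → ℝ) (i : Fin d) (p : ℝ × Sph d) : ℝ :=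
  ∑ j, (p.2 : Ed d) j * Lop j i (fun x => R (p.1, x)) (p.2 : Ed d)

theorem continuous_angPair {d : ℕ} {R : ℝ × Ed d → ℝ} (hR : ContDiff ℝ 1 R) (i : Fin d) :
    Continuous (angPair R i) := by
  have cL := fun j => continuous_Lop_slice hR j i
  unfold angPair
  fun_prop

theorem integrable_angPair_sq {d : ℕ} {Λ q : ℝ} (hΛ : 0 < Λ) {R : ℝ × Ed d → ℝ}
    (hR : MemH1 d Λ q R) (i : Fin d) :
    Integrable (fun p => angPair R i p ^ 2) (cylMeasure d) := by
  refine ((memH1_parts hΛ hR).2.1.const_mul 2).mono'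
    ((continuous_angPair hR.1 i).pow 2).aestronglyMeasurable (Eventually.of_forall fun p => ?_)
  rw [norm_of_nonneg (sq_nonneg _), norm_sgrad_sq, mul_div_cancel₀ _ two_ne_zero]
  refine (Finset.sum_mul_sq_le_sq_mul_sq _ _ _).trans ?_
  rw [sum_sq_sph, one_mul]
  refine Finset.sum_le_sum fun j _ => ?_
  exact Finset.single_le_sum (f := fun i => Lop j i (fun x => R (p.1, x)) (p.2 : Ed d) ^ 2)
    (fun i _ => sq_nonneg _) (Finset.mem_univ i)

theorem coef_coord {d : ℕ} (F : ℝ × Sph d → ℝ) (i : Fin d) (s : ℝ) : coef F (Sum.inr i) s =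
    √(d / sphVol d) * ∫ ω, F (s, ω) * (ω : Ed d) i ∂(sphMeasure d) := by
  simp only [coef, Yfam]
  rw [← integral_const_mul]
  congr 1; funext ω; ring

/-- The inner product in `H¹` of the cylinder of `R` with `w(s) ω_i` reduces to an inner product
on the line between `w` and the coefficient of `R` along `ω_i`. -/
theorem h1Inner_coord {d : ℕ} {q Λ : ℝ} (hΛ : 0 < Λ) {R : ℝ × Ed d → ℝ} (hR : MemH1 d Λ q R)
    (i : Fin d) {w w' : ℝ → ℝ} (hw : ∀ s, HasDerivAt w (w' s) s) (cw : Continuous w)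
    (cw' : Continuous w') (hw2 : Integrable fun s => w s ^ 2)
    (hw2' : Integrable fun s => w' s ^ 2) :
    ∫ s, (coef (dax R) (Sum.inr i) s * w' s
      + ((d : ℝ) - 1 + Λ) * (coef (cylVal d R) (Sum.inr i) s * w s)) =
      √(d / sphVol d) * h1Inner d Λ R (fun z => w z.1 * z.2 i) := by
  obtain ⟨i1, i2, i3⟩ := memH1_parts hΛ hR
  have cR := continuous_cylVal hR.1
  have cD := continuous_dax hR.1
  have cA := continuous_angPair hR.1 i
  have k1 := axial_mul cw' hw2' (F := fun p => dax R p * (p.2 : Ed d) i) (by fun_prop)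
    (integrable_sq_mul_coord cD i1 i)
  have k2 := axial_mul cw hw2 cA (integrable_angPair_sq hΛ hR i)
  have k3 := axial_mul cw hw2 (F := fun p => cylVal d R p * (p.2 : Ed d) i) (by fun_prop)
    (integrable_sq_mul_coord cR i3 i)
  have hintg : ∀ p : ℝ × Sph d,
      dS d R p * dS d (fun z => w z.1 * z.2 i) p
        + ⟪sgrad d R p, sgrad d (fun z => w z.1 * z.2 i) p⟫
        + Λ * cylVal d R p * cylVal d (fun z => w z.1 * z.2 i) p =
      w' p.1 * (dax R p * (p.2 : Ed d) i) + w p.1 * angPair R i p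
        + Λ * (w p.1 * (cylVal d R p * (p.2 : Ed d) i)) := fun p => by
    have hd1 : dS d (fun z => w z.1 * z.2 i) p = w' p.1 * (p.2 : Ed d) i :=
      ((hw p.1).mul_const ((p.2 : Ed d) i)).deriv
    rw [inner_sgrad_coord, hd1, dS_eq_dax hR.1, ← angPair]
    simp only [cylVal]
    ring
  unfold h1Inner
  simp only [hintg]
  have k4 : Integrable (fun p : ℝ × Sph d => w' p.1 * (dax R p * (p.2 : Ed d) i)
      + w p.1 * angPair R i p + Λ * (w p.1 * (cylVal d R p * (p.2 : Ed d) i))) (cylMeasure d) :=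
    (k1.add k2).add (k3.const_mul Λ)
  rw [cyl_integral k4, ← integral_const_mul]
  congr 1; funext s
  have n1 : Integrable (fun ω : Sph d => w' s * (dax R (s, ω) * (ω : Ed d) i))
    (sphMeasure d) := sph_integrable (by fun_prop)
  have n2 : Integrable (fun ω : Sph d => w s * angPair R i (s, ω)) (sphMeasure d) :=
    sph_integrable (by fun_prop)
  have n3 : Integrable (fun ω : Sph d => Λ * (w s * (cylVal d R (s, ω) * (ω : Ed d) i)))
    (sphMeasure d) := sph_integrable (by fun_prop)
  have n12 : Integrable (fun ω : Sph d => w' s * (dax R (s, ω) * (ω : Ed d) i)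
    + w s * angPair R i (s, ω)) (sphMeasure d) := n1.add n2
  have hL : ∫ ω, angPair R i (s, ω) ∂(sphMeasure d) =
      (d - 1) * ∫ ω, cylVal d R (s, ω) * (ω : Ed d) i ∂(sphMeasure d) :=
    integral_Lop_coord (contDiff_sliceX hR.1 s) i
  simp only
  rw [integral_add n12 n3, integral_add n1 n2]
  simp only [integral_const_mul]
  rw [hL, coef_coord, coef_coord]
  ring

/-- Orthogonality of `R` in `H¹` of the cylinder to the zero mode `u^{q/2} ω_i` descends to
orthogonality in `H¹(ℝ)` of its coefficient along `ω_i` to `u^{q/2}`. Under the Felli–Schneider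
condition the zeroth-order coefficient `d - 1 + Λ` equals `q² Λ / 4`. -/
theorem coef_orth {d : ℕ} {q Λ : ℝ} (hq : 2 < q) (hΛ : 0 < Λ)
    (hFS : q ^ 2 * Λ / 4 = (d : ℝ) - 1 + Λ) {R : ℝ × Ed d → ℝ} (hR : MemH1 d Λ q R) (i : Fin d)
    (ho : h1Inner d Λ R (fun z => Ufun q Λ z.1 ^ (q / 2) * z.2 i) = 0) :
    ∫ s, (coef (dax R) (Sum.inr i) s * (-(q * √Λ / 2 * tht q Λ s) * Ufun q Λ s ^ (q / 2))
      + q ^ 2 * Λ / 4 * (coef (cylVal d R) (Sum.inr i) s * Ufun q Λ s ^ (q / 2))) = 0 := by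
  have cw := continuous_Ufun_rpow hq hΛ (q / 2)
  have ct := continuous_tht q Λ
  have hw2 := integrable_zeroMode_sq hq hΛ
  have cw' : Continuous fun s => -(q * √Λ / 2 * tht q Λ s) * Ufun q Λ s ^ (q / 2) := by fun_prop
  have hw2' : Integrable fun s => (-(q * √Λ / 2 * tht q Λ s) * Ufun q Λ s ^ (q / 2)) ^ 2 := by
    refine (hw2.const_mul ((q * √Λ / 2) ^ 2)).mono'
      (cw'.pow 2).aestronglyMeasurable (Eventually.of_forall fun s => ?_)
    rw [norm_of_nonneg (sq_nonneg _), mul_pow, neg_sq, mul_pow]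
    have := (sq_le_one_iff_abs_le_one _).2 (abs_tht_le q Λ s)
    gcongr
    exact mul_le_of_le_one_right (sq_nonneg _) this
  rw [hFS, h1Inner_coord hΛ hR i (hasDerivAt_zeroMode hq hΛ) cw cw' hw2 hw2', ho, mul_zero]

/-- The damped quadratic form with zeroth-order coefficient `κ` above the critical value is
nonnegative on the part of `R` outside the split-off family: this is `pt_high` on almost every
line of the cylinder. -/
theorem rest_bound {d : ℕ} (hd : 2 ≤ d) {q Λ : ℝ} (hq : 2 < q) (hΛ : 0 < Λ)
    {R : ℝ × Ed d → ℝ} (hR : MemH1 d Λ q R) {c κ : ℝ} (hc0 : 0 ≤ c) (hc1 : c ≤ 1)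
    (hc : c * ((q - 1) * (q * Λ / 2)) ≤ (1 - c) * (κ - q ^ 2 * Λ / 4)) :
    (q - 1) * ∫ p, Ufun q Λ p.1 ^ (q - 2) * rest (cylVal d R) p ^ 2 ∂(cylMeasure d) ≤
      (1 - c) * ((∫ p, rest (dax R) p ^ 2 ∂(cylMeasure d)) +
        κ * ∫ p, rest (cylVal d R) p ^ 2 ∂(cylMeasure d)) := by
  obtain ⟨i1, i2, i3⟩ := memH1_parts hΛ hR
  have j1 := integrable_rest_sq hd (continuous_dax hR.1) i1
  have j3 := integrable_rest_sq hd (continuous_cylVal hR.1) i3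
  have jV := integrable_potential_mul_sq hq hΛ (r := q - 2) (by linarith)
    (measurable_fst (α := ℝ) (β := Sph d)) j3
  have j4 : Integrable (fun p => (1 - c) *
      (rest (dax R) p ^ 2 + κ * rest (cylVal d R) p ^ 2)) (cylMeasure d) :=
    (j1.add (j3.const_mul κ)).const_mul (1 - c)
  rw [← integral_const_mul, ← integral_const_mul, ← integral_add j1 (j3.const_mul κ),
    ← integral_const_mul, cyl_integral_symm (jV.const_mul _), cyl_integral_symm j4]
  refine integral_mono_ae (jV.const_mul _).integral_prod_right j4.integral_prod_right ?_
  filter_upwards [Integrable.prod_left_ae j1, Integrable.prod_left_ae j3] with ω h1 h3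
  have cr := continuous_rest hd (continuous_dax hR.1)
  have := pt_high hq hΛ (fun s => hasDerivAt_rest hd hR.1 ω s) (by fun_prop) h3 h1 hc0 hc1 hc
  rw [integral_const_mul, integral_const_mul]
  refine this.trans_eq ?_
  rw [← integral_const_mul κ, ← integral_add h1 (h3.const_mul κ)]

/-! ### The linear term, scaling of the energies, and the combined bound -/

theorem K20_pos {d : ℕ} (hd : 2 ≤ d) : 0 < K20 d := by
  have hV := sphVol_pos d hd
  have hd' : (2 : ℝ) ≤ d := by exact_mod_cast hd
  have h1 : (0 : ℝ) < d - 1 := by linarith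
  exact sqrt_pos.2 (by positivity)

/-- The constants in `f2fun` combine to the inverse of the normalization of `Y_{2,0}`. -/
theorem inv_K20 {d : ℕ} (hd : 2 ≤ d) :
    √(sphVol d) / d * √(2 * ((d : ℝ) - 1) / ((d : ℝ) + 2)) = (K20 d)⁻¹ := by
  have hV := sphVol_pos d hd
  have hd' : (2 : ℝ) ≤ d := by exact_mod_cast hd
  have h1 : (0 : ℝ) < d - 1 := by linarith
  have hK := K20_pos hd
  refine (sq_eq_sq₀ (by positivity) (by positivity)).1 ?_
  rw [mul_pow, div_pow, sq_sqrt hV.le, sq_sqrt (by positivity), inv_pow, sq_K20 hd]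
  field_simp

theorem integrable_source_sq {q Λ : ℝ} (hq : 2 < q) (hΛ : 0 < Λ) :
    Integrable fun s => (Ufun q Λ s ^ (2 * q - 3)) ^ 2 := by
  have h := integrable_Ufun_rpow hq hΛ (r := (2 * q - 3) * (2 : ℕ)) (by push_cast; linarith)
  simpa only [rpow_mul_natCast (Ufun_pos hq hΛ _).le] using h

theorem integrable_linear {d : ℕ} (hd : 2 ≤ d) {q Λ : ℝ} (hq : 2 < q) (hΛ : 0 < Λ)
    {R : ℝ × Ed d → ℝ} (hR : MemH1 d Λ q R) :
    Integrable (fun p : ℝ × Sph d => Ufun q Λ p.1 ^ (2 * q - 3) *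
      (cylVal d R p * coordLast d (p.2 : Ed d) * coordLast d (p.2 : Ed d))) (cylMeasure d) := by
  have cR := continuous_cylVal hR.1
  simp only [coordLast_eq hd]
  have h1 := integrable_sq_mul_coord cR (memH1_parts hΛ hR).2.2 (lastIx hd)
  have h2 := integrable_sq_mul_coord (F := fun p => cylVal d R p * (p.2 : Ed d) (lastIx hd))
    (by fun_prop) h1 (lastIx hd)
  exact axial_mul (continuous_Ufun_rpow hq hΛ _) (integrable_source_sq hq hΛ)
    (F := fun p => cylVal d R p * (p.2 : Ed d) (lastIx hd) * (p.2 : Ed d) (lastIx hd))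
    (by fun_prop) h2

theorem integrable_source_coef {d : ℕ} (hd : 2 ≤ d) {q Λ : ℝ} (hq : 2 < q) (hΛ : 0 < Λ)
    {R : ℝ × Ed d → ℝ} (hR : MemH1 d Λ q R) (k : Bool ⊕ Fin d) :
    Integrable fun s => Ufun q Λ s ^ (2 * q - 3) * coef (cylVal d R) k s :=
  integrable_mul_of_sq (continuous_Ufun_rpow hq hΛ _).aestronglyMeasurable
    (continuous_coef hd (continuous_cylVal hR.1) k).aestronglyMeasurable
    (integrable_source_sq hq hΛ)
    (integrable_coef_sq hd (continuous_cylVal hR.1) (memH1_parts hΛ hR).2.2 k)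

/-- Since `ω_d²` is a combination of `Y_{0,0}` and `Y_{2,0}`, the linear term only sees the two
corresponding coefficients. -/
theorem linear_eq {d : ℕ} (hd : 2 ≤ d) {q Λ : ℝ} (hq : 2 < q) (hΛ : 0 < Λ)
    {R : ℝ × Ed d → ℝ} (hR : MemH1 d Λ q R) :
    ∫ p : ℝ × Sph d, Ufun q Λ p.1 ^ (2 * q - 3) *
      (cylVal d R p * coordLast d (p.2 : Ed d) * coordLast d (p.2 : Ed d)) ∂(cylMeasure d) =
      √(sphVol d) / d *
          (∫ s, Ufun q Λ s ^ (2 * q - 3) * coef (cylVal d R) (Sum.inl false) s) +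
        (K20 d)⁻¹ * ∫ s, Ufun q Λ s ^ (2 * q - 3) * coef (cylVal d R) (Sum.inl true) s := by
  have hV := sphVol_pos d hd
  have hK := K20_pos hd
  have cR := continuous_cylVal hR.1
  have cY := continuous_Yfam hd
  rw [cyl_integral (integrable_linear hd hq hΛ hR), ← integral_const_mul, ← integral_const_mul,
    ← integral_add ((integrable_source_coef hd hq hΛ hR _).const_mul _)
      ((integrable_source_coef hd hq hΛ hR _).const_mul _)]
  congr 1; funext s
  have n : ∀ (x : ℝ) k, Integrable (fun ω => x * (cylVal d R (s, ω) * Yfam d k ω))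
      (sphMeasure d) := fun x k => sph_integrable (by fun_prop)
  dsimp only
  rw [integral_const_mul, mul_left_comm, mul_left_comm (K20 d)⁻¹, ← mul_add]
  congr 1
  unfold coef
  rw [← integral_const_mul, ← integral_const_mul, ← integral_add (n _ _) (n _ _)]
  congr 1; funext ω
  have e1 : Yfam d (Sum.inl false) ω = (√(sphVol d))⁻¹ := rfl
  have e2 : Yfam d (Sum.inl true) ω = K20 d * (coordLast d (ω : Ed d) ^ 2 - 1 / (d : ℝ)) := rfl
  have hs := sqrt_pos.2 hV
  rw [e1, e2]
  field_simp
  ring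

/-- The energies of the rescaled coefficients, without the rescaling. -/
theorem energy_scale {q Λ c κ μ : ℝ} (hq : 2 < q) (hΛ : 0 < Λ) (hμ : μ ≠ 0) {f a a' : ℝ → ℝ}
    (ha : ∀ s, HasDerivAt a (a' s) s) (i1 : Integrable fun s => a' s ^ 2)
    (i2 : Integrable fun s => a s ^ 2) (i3 : Integrable fun s => f s * a s) :
    μ ^ 4 * Energy q Λ c κ f (fun s => a s / μ) =
      μ ^ 2 * ((1 - c) * ((∫ s, a' s ^ 2) + κ * ∫ s, a s ^ 2)
        - (q - 1) * (∫ s, Ufun q Λ s ^ (q - 2) * a s ^ 2) - 2 * μ * ∫ s, f s * a s) := by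
  have hder : ∀ s, deriv (fun s => a s / μ) s = a' s / μ := fun s => ((ha s).div_const μ).deriv
  have iV : Integrable fun s => Ufun q Λ s ^ (q - 2) * a s ^ 2 :=
    integrable_potential_mul_sq hq hΛ (by linarith) measurable_id i2
  have i12 : Integrable fun s => a' s ^ 2 + κ * a s ^ 2 := i1.add (i2.const_mul κ)
  have i4 : Integrable fun s => (1 - c) * (a' s ^ 2 + κ * a s ^ 2)
      - (q - 1) * (Ufun q Λ s ^ (q - 2) * a s ^ 2) :=
    (i12.const_mul _).sub (iV.const_mul _)
  unfold Energy
  rw [← integral_const_mul κ, ← integral_add i1 (i2.const_mul κ), ← integral_const_mul (1 - c),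
    ← integral_const_mul (q - 1), ← integral_const_mul (2 * μ),
    ← integral_sub (i12.const_mul _) (iV.const_mul _), ← integral_sub i4 (i3.const_mul _),
    ← integral_const_mul, ← integral_const_mul]
  congr 1; funext s
  rw [hder]
  field_simp

/-- The lower bound on (A), for a fixed damping constant `c` that is small enough. -/
theorem main_bound {d : ℕ} (hd : 2 ≤ d) {q Λ : ℝ} (hq : 2 < q) (hΛ : 0 < Λ)
    (hFS : q ^ 2 * Λ / 4 = (d : ℝ) - 1 + Λ) {R : ℝ × Ed d → ℝ} (hR : MemH1 d Λ q R)
    (ho : ∀ i, h1Inner d Λ R (fun z => Ufun q Λ z.1 ^ (q / 2) * z.2 i) = 0)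
    {c μ : ℝ} (hμ : μ ≠ 0) (hc0 : 0 ≤ c) (hc1 : c ≤ 1)
    (hcr : c * ((q - 1) * (q * Λ / 2)) ≤ (1 - c) * (2 * d + Λ - q ^ 2 * Λ / 4))
    (hco : c * (q - 1) ≤ (1 - c) * (alphaV q Λ ^ 2 / (2 * q * Λ))) :
    μ ^ 4 * (Energy q Λ c Λ (f0fun d q Λ) (fun s => sphCoef d R (Y00 d) s / μ) +
        Energy q Λ c (2 * d + Λ) (f2fun d q Λ) (fun s => sphCoef d R (Y20 d) s / μ)) ≤
      μ ^ 2 * ((1 - c) * h1NormSq d Λ R - (q - 1) * ∫ p,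
        (Ufun q Λ p.1 ^ (q - 2) * cylVal d R p ^ 2 +
          (q - 2) * μ * Ufun q Λ p.1 ^ (2 * q - 3) * coordLast d (p.2 : Ed d) ^ 2 *
            cylVal d R p) ∂(cylMeasure d)) := by
  obtain ⟨i1, i2, i3⟩ := memH1_parts hΛ hR
  have cR := continuous_cylVal hR.1
  have cD := continuous_dax hR.1
  have j1 := integrable_coef_sq hd cD i1
  have j3 := integrable_coef_sq hd cR i3
  have s0 : sphCoef d R (Y00 d) = coef (cylVal d R) (Sum.inl false) := rfl
  have s2 : sphCoef d R (Y20 d) = coef (cylVal d R) (Sum.inl true) := rfl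
  -- the inhomogeneities against the coefficients
  have p0 : ∀ s, f0fun d q Λ s * coef (cylVal d R) (Sum.inl false) s = Mconst d q *
      (Ufun q Λ s ^ (2 * q - 3) * coef (cylVal d R) (Sum.inl false) s) := fun s => by
    unfold f0fun; ring
  have p2 : ∀ s, f2fun d q Λ s * coef (cylVal d R) (Sum.inl true) s =
      (Mconst d q * √(2 * ((d : ℝ) - 1) / ((d : ℝ) + 2))) *
      (Ufun q Λ s ^ (2 * q - 3) * coef (cylVal d R) (Sum.inl true) s) := fun s => by
    unfold f2fun; ring
  have l0 : Integrable fun s => f0fun d q Λ s * coef (cylVal d R) (Sum.inl false) s := by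
    simp only [p0]; exact (integrable_source_coef hd hq hΛ hR _).const_mul _
  have l2 : Integrable fun s => f2fun d q Λ s * coef (cylVal d R) (Sum.inl true) s := by
    simp only [p2]; exact (integrable_source_coef hd hq hΛ hR _).const_mul _
  rw [s0, s2, mul_add, energy_scale hq hΛ hμ (hasDerivAt_coef hd hR.1 _) (j1 _) (j3 _) l0,
    energy_scale hq hΛ hμ (hasDerivAt_coef hd hR.1 _) (j1 _) (j3 _) l2, ← mul_add]
  refine mul_le_mul_of_nonneg_left ?_ (sq_nonneg μ)
  simp only [p0, p2]
  rw [integral_const_mul, integral_const_mul]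
  -- the right-hand side, split into its quadratic and its linear part
  have iV := integrable_potential_mul_sq hq hΛ (r := q - 2) (by linarith)
    (measurable_fst (α := ℝ) (β := Sph d)) i3
  have hsplit : ∫ p : ℝ × Sph d, (Ufun q Λ p.1 ^ (q - 2) * cylVal d R p ^ 2 +
          (q - 2) * μ * Ufun q Λ p.1 ^ (2 * q - 3) * coordLast d (p.2 : Ed d) ^ 2 *
            cylVal d R p) ∂(cylMeasure d) =
      (∫ p, Ufun q Λ p.1 ^ (q - 2) * cylVal d R p ^ 2 ∂(cylMeasure d)) +
      (q - 2) * μ * ∫ p : ℝ × Sph d, Ufun q Λ p.1 ^ (2 * q - 3) *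
      (cylVal d R p * coordLast d (p.2 : Ed d) * coordLast d (p.2 : Ed d)) ∂(cylMeasure d) := by
    rw [← integral_const_mul, ← integral_add iV ((integrable_linear hd hq hΛ hR).const_mul _)]
    congr 1; funext p; ring
  have hVb : ∀ s, |Ufun q Λ s ^ (q - 2)| ≤ betaV q Λ ^ (q - 2) := fun s => by
    rw [abs_of_nonneg (rpow_nonneg (Ufun_pos hq hΛ s).le _)]
    exact Ufun_rpow_le hq hΛ (by linarith) s
  have pv := parseval hd cR i3 (continuous_Ufun_rpow hq hΛ (q - 2)) hVb
  have pR := parseval hd cR i3 (m := fun _ => 1) continuous_const (B := 1) (by simp)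
  have pD := parseval hd cD i1 (m := fun _ => 1) continuous_const (B := 1) (by simp)
  simp only [one_mul, Fintype.sum_sum_type, Fintype.sum_bool] at pv pR pD
  have ab := angular_bound hd hΛ hR
  have rb := rest_bound hd hq hΛ hR hc0 hc1 hcr
  -- the modes of degree one, using the orthogonality to the zero modes
  have ob := Finset.sum_le_sum fun (i : Fin d) (_ : i ∈ Finset.univ) =>
    pt_orth_loss hq hΛ (hasDerivAt_coef hd hR.1 (Sum.inr i)) (continuous_coef hd cD _) (j3 _)
      (j1 _) (coef_orth hq hΛ hFS hR i (ho i)) hc1 hco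
  rw [← Finset.mul_sum, ← Finset.mul_sum, Finset.sum_add_distrib, ← Finset.mul_sum, hFS] at ob
  rw [hsplit, linear_eq hd hq hΛ hR, h1NormSq_eq hΛ hR, pv, pD]
  rw [pR] at ab ⊢
  have hM1 : 2 * Mconst d q = (q - 1) * (q - 2) * (√(sphVol d) / d) := by
    unfold Mconst; ring
  have hM2 : 2 * (Mconst d q * √(2 * ((d : ℝ) - 1) / ((d : ℝ) + 2))) =
      (q - 1) * (q - 2) * (K20 d)⁻¹ := by
    rw [← mul_assoc, hM1, ← inv_K20 hd]; ring
  have ab' := mul_le_mul_of_nonneg_left ab (sub_nonneg.2 hc1)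
  linear_combination ab' + rb + ob
    - μ * (∫ s, Ufun q Λ s ^ (2 * q - 3) * coef (cylVal d R) (Sum.inl false) s) * hM1
    - μ * (∫ s, Ufun q Λ s ^ (2 * q - 3) * coef (cylVal d R) (Sum.inl true) s) * hM2

/-- Negligible energies. Under the Felli–Schneider condition and in the
setting of the quartic expansion lemma with constant `C`, expanding `R_n` in spherical
harmonics, for large n the term (A) is bounded from below by
`μ_n⁴ (𝓔⁽⁰⁾(a_{0,0}/μ_n) + 𝓔⁽²⁾(a_{2,0}/μ_n))`. -/
theorem negligible_energies (d : ℕ) (hd : 2 ≤ d) (q Λ : ℝ) (hq : 2 < q)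
    (hq' : d = 2 ∨ q < 2 * d / ((d : ℝ) - 2)) (hΛ : 0 < Λ)
    (hFS : Λ = 4 * ((d : ℝ) - 1) / (q ^ 2 - 4))
    (u : ℕ → ℝ × Ed d → ℝ) (hu : ∀ n, MemH1 d Λ q (u n))
    (hnorm : Filter.Tendsto (fun n => lqNorm d q (u n) ^ 2) Filter.atTop (𝓝 1))
    (henergy : Filter.Tendsto (fun n => h1NormSq d Λ (u n)) Filter.atTop (𝓝 (Cstar d Λ q)))
    (hvan : Filter.Tendsto (fun n => deficitF d Λ q (u n) / distM d Λ q (u n) ^ 2)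
      Filter.atTop (𝓝 0))
    (lam t μ : ℕ → ℝ) (D : ℕ → (Ed d ≃ₗᵢ[ℝ] Ed d)) (R : ℕ → ℝ × Ed d → ℝ)
    (hlam : ∀ n, lam n ≠ 0) (hR : ∀ n, MemH1 d Λ q (R n))
    (hdec : ∀ n, ∀ s : ℝ, ∀ ω : Sph d,
      u n (s, (ω : Ed d)) = lam n * (Ufun q Λ (s - t n) +
        μ n * (Ufun q Λ (s - t n) ^ (q / 2) * coordLast d (D n (ω : Ed d)) +
          R n (s - t n, D n (ω : Ed d)))))
    (hμ : Filter.Tendsto μ Filter.atTop (𝓝 0))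
    (hRn : Filter.Tendsto (fun n => Real.sqrt (h1NormSq d Λ (R n))) Filter.atTop (𝓝 0))
    (ho1 : ∀ n, h1Inner d Λ (R n) (Ucyl d q Λ) = 0)
    (ho2 : ∀ n, h1Inner d Λ (R n) (fun z => deriv (Ufun q Λ) z.1) = 0)
    (ho3 : ∀ n, ∀ i : Fin d,
      h1Inner d Λ (R n) (fun z => Ufun q Λ z.1 ^ (q / 2) * z.2 i) = 0)
    (C : ℝ) (hC : 0 ≤ C) :
    ∀ᶠ n in Filter.atTop,
      μ n ^ 4 *
        (Energy q Λ (C * |μ n| ^ min (q - 2) 1) Λ (f0fun d q Λ)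
            (fun s => sphCoef d (R n) (Y00 d) s / μ n) +
          Energy q Λ (C * |μ n| ^ min (q - 2) 1) (2 * d + Λ) (f2fun d q Λ)
            (fun s => sphCoef d (R n) (Y20 d) s / μ n)) ≤
        Aterm d q Λ C (μ n) (R n) := by
  have hd' : (2 : ℝ) ≤ d := by exact_mod_cast hd
  have hq2 : 0 < q ^ 2 - 4 := by nlinarith
  have hκ : q ^ 2 * Λ / 4 = (d : ℝ) - 1 + Λ := by
    have : Λ * (q ^ 2 - 4) = 4 * ((d : ℝ) - 1) := by rw [hFS]; field_simp
    linarith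
  -- the damping constant tends to zero
  have hc : Tendsto (fun n => C * |μ n| ^ min (q - 2) 1) atTop (𝓝 0) := by
    have h1 : Tendsto (fun n => |μ n| ^ min (q - 2) 1) atTop (𝓝 (|0| ^ min (q - 2) 1)) :=
      (hμ.abs).rpow_const (Or.inr (le_min (by linarith) zero_le_one))
    have hp : min (q - 2) 1 ≠ 0 := (lt_min (by linarith) one_pos).ne'
    rw [abs_zero, zero_rpow hp] at h1
    simpa using h1.const_mul C
  have hα := alphaV_pos hq hΛ
  have hr : ∀ᶠ c : ℝ in 𝓝 0, c * ((q - 1) * (q * Λ / 2)) <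
      (1 - c) * (2 * d + Λ - q ^ 2 * Λ / 4) := by
    refine ContinuousAt.eventually_lt (by fun_prop) (by fun_prop) ?_
    rw [hκ]; linarith
  have ho : ∀ᶠ c : ℝ in 𝓝 0, c * (q - 1) < (1 - c) * (alphaV q Λ ^ 2 / (2 * q * Λ)) := by
    refine ContinuousAt.eventually_lt (by fun_prop) (by fun_prop) ?_
    rw [zero_mul, sub_zero, one_mul]
    have : 0 < q := by linarith
    positivity
  filter_upwards [hc.eventually hr, hc.eventually ho, hc.eventually (gt_mem_nhds one_pos)]
    with n h1 h2 h3
  unfold Aterm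
  rcases eq_or_ne (μ n) 0 with h0 | h0
  · simp [h0]
  · exact main_bound hd hq hΛ hκ (hR n) (ho3 n) h0
      (mul_nonneg hC (rpow_nonneg (abs_nonneg _) _)) h3.le h1.le h2.le
end

section
/- Let d > 2 be an integer and 2 < q < 2d/(d−2), or d = 2 and 2.8 < q < ∞. Then the function P is strictly convex on the interval [−1, ∞). -/
/-!
`P` is even logarithmically strictly convex. Write `𝔟 - 𝔞 = ξ`. The Gamma factors pair up as

`P(x) = Γ(x+3/2)/Γ(x+ξ+1) * Γ(x+2𝔟-1)/Γ(x+2𝔟-ξ+1) * Γ(x+2𝔟)/Γ(x+2𝔟+1/2)`,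

and in each quotient the argument of the denominator exceeds that of the numerator by a constant
`δ > 0`, namely `ξ - 1/2`, `2 - ξ` and `1/2`. The inequalities `1/2 < ξ < 2` are elementary
(`half_lt_sub_afrak`, `sub_afrak_lt_two`); the restriction `q > 2.8` for `d = 2` is exactly
`1/2 < ξ`.

For `δ > 0`, Euler's limit formula exhibits `log Γ(x) - log Γ(x+δ)` as a pointwise limit of sums of
the convex functions `log(x+δ+m) - log(x+m)` and constants, so it is convex on `(0, ∞)`. Splitting
off the `m = 0` term by the functional equation of `Γ` gives strict convexity
(`strictConvexOn_log_Gamma_sub`). Hence `log P` is strictly convex, and so is `P = exp (log P)`.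
-/

noncomputable section

/-- 𝔞 = √(1 + 2d/Λ)/(q-2). -/
def afrak (d : ℕ) (q Λ : ℝ) : ℝ := Real.sqrt (1 + 2 * d / Λ) / (q - 2)

/-- 𝔟 = (2q-3)/(q-2). -/
def bfrak (q : ℝ) : ℝ := (2 * q - 3) / (q - 2)

/-- ξ = 𝔟 - 𝔞. -/
def xiV (d : ℕ) (q Λ : ℝ) : ℝ := bfrak q - afrak d q Λ

/-- The function P built from Gamma factors. -/
def Pfun (d : ℕ) (q Λ : ℝ) (x : ℝ) : ℝ :=
  Real.Gamma (x + 3 / 2) * Real.Gamma (x + 2 * bfrak q - 1) * Real.Gamma (x + 2 * bfrak q) /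
    (Real.Gamma (x + bfrak q - afrak d q Λ + 1) * Real.Gamma (x + bfrak q + afrak d q Λ + 1) *
      Real.Gamma (x + 2 * bfrak q + 1 / 2))

/-- The constant J(q,d). -/
def Jconst (d : ℕ) (q Λ : ℝ) : ℝ :=
  (q - 2) * (3 * q - 2) / (2 * (5 * q - 6)) *
    ((3 * q - 4) / (4 * (q - 1)) - (q - 3) * d / (q * (d + 2)) -
      (d - 1) / (d + 2) *
        ∑' k : ℕ, (Pfun d q Λ ((k : ℝ) - xiV d q Λ) - Pfun d q Λ (k : ℝ)) / Pfun d q Λ (-1))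

end

open Real Set Filter Topology

lemma strictConvexOn_log_add_sub_log {δ : ℝ} (hδ : 0 < δ) :
    StrictConvexOn ℝ (Ioi 0) (fun x : ℝ => log (x + δ) - log x) := by
  have hd : ∀ x ∈ Ioi (0 : ℝ),
      HasDerivAt (fun x : ℝ => log (x + δ) - log x) (1 / (x + δ) - 1 / x) x := by
    intro x hx
    have hx : 0 < x := hx
    exact (((hasDerivAt_id x).add_const δ).log (by simp; positivity)).sub
      ((hasDerivAt_id x).log hx.ne')
  refine StrictMonoOn.strictConvexOn_of_deriv (convex_Ioi 0)
    (fun x hx => (hd x hx).continuousAt.continuousWithinAt) ?_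
  rw [interior_Ioi]
  intro x hx y hy hxy
  rw [(hd x hx).deriv, (hd y hy).deriv]
  have hx : 0 < x := hx
  have hy : 0 < y := hy
  have e : ∀ z : ℝ, 0 < z → 1 / (z + δ) - 1 / z = -(δ / (z * (z + δ))) := by
    intro z hz
    field_simp
    ring
  rw [e x hx, e y hy]
  apply neg_lt_neg
  gcongr

/-- Convexity passes to the limit in Euler's formula
`log Γ(x) = lim (x log n + log n! - ∑ m ≤ n, log (x + m))`. -/
lemma convexOn_log_Gamma_sub {δ : ℝ} (hδ : 0 < δ) :
    ConvexOn ℝ (Ioi 0) (fun x : ℝ => log (Gamma x) - log (Gamma (x + δ))) := by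
  have hlim : ∀ x : ℝ, 0 < x → Tendsto
      (fun n => BohrMollerup.logGammaSeq x n - BohrMollerup.logGammaSeq (x + δ) n) atTop
      (𝓝 (log (Gamma x) - log (Gamma (x + δ)))) := fun x hx =>
    (BohrMollerup.tendsto_log_gamma hx).sub (BohrMollerup.tendsto_log_gamma (by positivity))
  have hseq : ∀ (x : ℝ) (n : ℕ),
      BohrMollerup.logGammaSeq x n - BohrMollerup.logGammaSeq (x + δ) n =
        -(δ * log n) + ∑ m ∈ Finset.range (n + 1), (log (x + m + δ) - log (x + m)) := by
    intro x n
    simp only [BohrMollerup.logGammaSeq, Finset.sum_sub_distrib, add_right_comm x δ]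
    ring
  refine ⟨convex_Ioi 0, fun x hx y hy a b ha hb hab => ?_⟩
  have hz : 0 < a • x + b • y := convex_Ioi 0 hx hy ha hb hab
  refine le_of_tendsto_of_tendsto' (hlim _ hz)
    (((hlim x hx).const_smul a).add ((hlim y hy).const_smul b)) fun n => ?_
  simp only [hseq, smul_eq_mul]
  have hterm : ∀ m ∈ Finset.range (n + 1),
      log (a * x + b * y + m + δ) - log (a * x + b * y + m) ≤
        a * (log (x + m + δ) - log (x + m)) + b * (log (y + m + δ) - log (y + m)) := by
    intro m _
    have hx' : (x + m) ∈ Ioi (0 : ℝ) := mem_Ioi.2 (add_pos_of_pos_of_nonneg hx m.cast_nonneg)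
    have hy' : (y + m) ∈ Ioi (0 : ℝ) := mem_Ioi.2 (add_pos_of_pos_of_nonneg hy m.cast_nonneg)
    have h := (strictConvexOn_log_add_sub_log hδ).convexOn.2 hx' hy' ha hb hab
    have e : a * x + b * y + m = a * (x + m) + b * (y + m) := by
      linear_combination (-(m : ℝ)) * hab
    rw [e]
    exact h
  have hsum := Finset.sum_le_sum hterm
  rw [Finset.sum_add_distrib, ← Finset.mul_sum, ← Finset.mul_sum] at hsum
  have hc : -(δ * log n) = a * -(δ * log n) + b * -(δ * log n) := by
    linear_combination (δ * log n) * hab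
  linarith

lemma strictConvexOn_log_Gamma_sub {δ : ℝ} (hδ : 0 < δ) :
    StrictConvexOn ℝ (Ioi 0) (fun x : ℝ => log (Gamma x) - log (Gamma (x + δ))) := by
  have hshift : ConvexOn ℝ (Ioi 0)
      (fun x : ℝ => log (Gamma (x + 1)) - log (Gamma (x + 1 + δ))) :=
    ((convexOn_log_Gamma_sub hδ).translate_left 1).subset
      (fun x (hx : 0 < x) => show 0 < 1 + x by positivity) (convex_Ioi 0)
  refine ((strictConvexOn_log_add_sub_log hδ).add_convexOn hshift).congr fun x hx => ?_
  have hx : 0 < x := hx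
  have hxδ : 0 < x + δ := by positivity
  simp only [Pi.add_apply]
  rw [add_right_comm x 1 δ, Gamma_add_one hx.ne', Gamma_add_one hxδ.ne',
    log_mul hx.ne' (Gamma_pos_of_pos hx).ne', log_mul hxδ.ne' (Gamma_pos_of_pos hxδ).ne']
  ring

lemma strictConvexOn_log_Gamma_shift {c c' : ℝ} (hc : 1 < c) (h : c < c') :
    StrictConvexOn ℝ (Ici (-1)) (fun x : ℝ => log (Gamma (x + c)) - log (Gamma (x + c'))) := by
  have := ((strictConvexOn_log_Gamma_sub (sub_pos.2 h)).translate_left c).subset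
      (fun x (hx : -1 ≤ x) => show 0 < c + x by linarith) (convex_Ici (-1))
  refine this.congr fun x _ => ?_
  simp only [Function.comp_apply]
  rw [show x + c + (c' - c) = x + c' by ring]

lemma StrictConvexOn.real_exp {s : Set ℝ} {f : ℝ → ℝ} (hf : StrictConvexOn ℝ s f) :
    StrictConvexOn ℝ s (fun x => exp (f x)) :=
  ⟨hf.1, fun _ hx _ hy hxy _ _ ha hb hab =>
    (exp_lt_exp.2 (hf.2 hx hy hxy ha hb hab)).trans_le
      (convexOn_exp.2 (mem_univ _) (mem_univ _) ha.le hb.le hab)⟩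

/-- The radicand `1 + 2d/Λ` at `Λ = 4(d-1)/(q²-4)`. -/
lemma one_add_two_mul_div_eq (d : ℕ) (hd : 2 ≤ d) {q : ℝ} (hq : 2 < q) :
    1 + 2 * (d : ℝ) / (4 * ((d : ℝ) - 1) / (q ^ 2 - 4)) =
      1 + d / (2 * ((d : ℝ) - 1)) * (q ^ 2 - 4) := by
  have h1 : (2 : ℝ) ≤ d := by exact_mod_cast hd
  have h2 : (d : ℝ) - 1 ≠ 0 := by linarith
  have h3 : q ^ 2 - 4 ≠ 0 := by nlinarith
  field_simp
  ring

lemma half_lt_sub_afrak (d : ℕ) (q : ℝ) (hq : 2 < q) (h : 2 < d ∨ (d = 2 ∧ 2.8 < q)) :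
    1 / 2 < bfrak q - afrak d q (4 * ((d : ℝ) - 1) / (q ^ 2 - 4)) := by
  have hq2 : 0 < q - 2 := by linarith
  rw [bfrak, afrak, ← sub_div, lt_div_iff₀ hq2, one_add_two_mul_div_eq d (by omega) hq]
  suffices √(1 + d / (2 * ((d : ℝ) - 1)) * (q ^ 2 - 4)) < (3 * q - 4) / 2 by linarith
  rw [sqrt_lt' (by linarith)]
  rcases h with hd | ⟨rfl, hq'⟩
  · have h1 : (3 : ℝ) ≤ d := by exact_mod_cast hd
    have h2 : (d : ℝ) / (2 * ((d : ℝ) - 1)) ≤ 3 / 4 := by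
      rw [div_le_div_iff₀ (by linarith) (by norm_num)]
      linarith
    have h3 := mul_le_mul_of_nonneg_right h2 (show 0 ≤ q ^ 2 - 4 by nlinarith)
    nlinarith
  · norm_num at hq' ⊢
    nlinarith

lemma sub_afrak_lt_two (d : ℕ) (q : ℝ) (hq : 2 < q) (hd : 2 ≤ d) :
    bfrak q - afrak d q (4 * ((d : ℝ) - 1) / (q ^ 2 - 4)) < 2 := by
  have hq2 : 0 < q - 2 := by linarith
  rw [bfrak, afrak, ← sub_div, div_lt_iff₀ hq2, one_add_two_mul_div_eq d hd hq]
  suffices 1 < √(1 + d / (2 * ((d : ℝ) - 1)) * (q ^ 2 - 4)) by linarith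
  have h1 : (2 : ℝ) ≤ d := by exact_mod_cast hd
  have h2 : 0 < (d : ℝ) / (2 * ((d : ℝ) - 1)) := div_pos (by linarith) (by linarith)
  have h3 := mul_pos h2 (show 0 < q ^ 2 - 4 by nlinarith)
  rw [lt_sqrt zero_le_one]
  linarith

/-- Strict convexity of P. For `d > 2`, `2 < q < 2d/(d-2)`, or `d = 2`,
`2.8 < q`, with Λ the Felli–Schneider value, the function P is strictly convex on `[-1, ∞)`. -/
theorem strict_convexity_of_P (d : ℕ) (q : ℝ)
    (h : (2 < d ∧ 2 < q ∧ q < 2 * d / ((d : ℝ) - 2)) ∨ ((d = 2) ∧ 2.8 < q)) :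
    StrictConvexOn ℝ (Set.Ici (-1 : ℝ)) (Pfun d q (4 * ((d : ℝ) - 1) / (q ^ 2 - 4))) := by
  have hq : 2 < q := by
    rcases h with h | h
    · exact h.2.1
    · linarith [h.2]
  have hξ := half_lt_sub_afrak d q hq (h.imp (fun h => h.1) id)
  have hξ' := sub_afrak_lt_two d q hq (by omega)
  have hb : 2 < bfrak q := by
    rw [bfrak, lt_div_iff₀ (by linarith)]
    linarith
  set Λ := 4 * ((d : ℝ) - 1) / (q ^ 2 - 4)
  set a := afrak d q Λ with ha
  set b := bfrak q with hb'
  have h1 := strictConvexOn_log_Gamma_shift (c := 3 / 2) (c' := b - a + 1)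
    (by norm_num) (by linarith)
  have h2 := strictConvexOn_log_Gamma_shift (c := 2 * b - 1) (c' := b + a + 1)
    (by linarith) (by linarith)
  have h3 := strictConvexOn_log_Gamma_shift (c := 2 * b) (c' := 2 * b + 1 / 2)
    (by linarith) (by linarith)
  refine ((h1.add h2).add h3).real_exp.congr fun x hx => ?_
  have hx : -1 ≤ x := hx
  have hG : ∀ c : ℝ, 1 < c → exp (log (Gamma (x + c))) = Gamma (x + c) := fun c hc =>
    exp_log (Gamma_pos_of_pos (by linarith))
  simp only [Pi.add_apply, exp_add, exp_sub]
  rw [hG (3 / 2) (by norm_num), hG (b - a + 1) (by linarith), hG (2 * b - 1) (by linarith),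
    hG (b + a + 1) (by linarith), hG (2 * b) (by linarith), hG (2 * b + 1 / 2) (by linarith),
    div_mul_div_comm, div_mul_div_comm, Pfun, ← ha, ← hb']
  simp only [add_sub_assoc, add_assoc, sub_add]
end

section
/- Let d ≥ 2 be an integer and 2 < q < 2d/(d−2) (2 < q < ∞ if d = 2). Then (3q−4)(d+2)/(4(q−1)(d−1)) − (q−3)d/(q(d−1)) − (1/P(−1)) Σ_{k=0}^∞ (P(k−ξ) − P(k)) > 0. Equivalently, the constant J(q,d) := ((q−2)(3q−2)/(2(5q−6))) · ((3q−4)/(4(q−1)) − (q−3)d/(q(d+2)) − ((d−1)/(d+2)) Σ_{k=0}^∞ (P(k−ξ) − P(k))/P(−1)) is strictly positive. -/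
open Filter Topology

/-! ### Monotonicity and log-convexity of Gamma quotients -/

/-- The quotient `Γ(x)/Γ(x+c)`. -/
noncomputable def gammaQuot (c x : ℝ) : ℝ := Real.Gamma x / Real.Gamma (x + c)

lemma gammaQuot_pos {c x : ℝ} (hc : 0 ≤ c) (hx : 0 < x) : 0 < gammaQuot c x :=
  div_pos (Real.Gamma_pos_of_pos hx) (Real.Gamma_pos_of_pos (by linarith))

lemma gammaQuot_add_one {c x : ℝ} (hc : 0 ≤ c) (hx : 0 < x) :
    gammaQuot c (x + 1) = gammaQuot c x * (x / (x + c)) := by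
  have h := (Real.Gamma_pos_of_pos (show 0 < x + c by linarith)).ne'
  have hxc : x + c ≠ 0 := by linarith
  unfold gammaQuot
  rw [show x + 1 + c = (x + c) + 1 by ring, Real.Gamma_add_one hx.ne', Real.Gamma_add_one hxc]
  field_simp

/-- Gauss's limit formula for the logarithm of `Γ(x)/Γ(x+c)`. -/
lemma tendsto_log_gammaQuot {c x : ℝ} (hc : 0 ≤ c) (hx : 0 < x) :
    Tendsto (fun n : ℕ => -c * Real.log n +
      ∑ m ∈ Finset.range (n + 1), Real.log ((x + m + c) / (x + m))) atTop
      (𝓝 (Real.log (gammaQuot c x))) := by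
  have hxc : 0 < x + c := by linarith
  have h := (Real.BohrMollerup.tendsto_log_gamma hx).sub (Real.BohrMollerup.tendsto_log_gamma hxc)
  rw [← Real.log_div (Real.Gamma_pos_of_pos hx).ne' (Real.Gamma_pos_of_pos hxc).ne'] at h
  refine h.congr fun n => ?_
  have hs : ∑ m ∈ Finset.range (n + 1), Real.log ((x + m + c) / (x + m)) =
      ∑ m ∈ Finset.range (n + 1), Real.log (x + c + m) -
        ∑ m ∈ Finset.range (n + 1), Real.log (x + m) := by
    rw [← Finset.sum_sub_distrib]
    refine Finset.sum_congr rfl fun m _ => ?_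
    have : 0 < x + m := by positivity
    rw [Real.log_div (by linarith) this.ne', show x + m + c = x + c + m by ring]
  rw [hs]
  unfold Real.BohrMollerup.logGammaSeq
  ring

lemma gammaQuot_anti {c x s : ℝ} (hc : 0 ≤ c) (hx : 0 < x) (hs : 0 ≤ s) :
    gammaQuot c (x + s) ≤ gammaQuot c x := by
  have hxs : 0 < x + s := by linarith
  rw [← Real.log_le_log_iff (gammaQuot_pos hc hxs) (gammaQuot_pos hc hx)]
  refine le_of_tendsto_of_tendsto' (tendsto_log_gammaQuot hc hxs) (tendsto_log_gammaQuot hc hx)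
    fun n => ?_
  refine add_le_add_right (Finset.sum_le_sum fun m _ => ?_) _
  have h1 : 0 < x + m := by positivity
  refine Real.log_le_log (div_pos (by linarith) (by linarith)) ?_
  rw [div_le_div_iff₀ (by linarith) h1]
  nlinarith [mul_nonneg hc hs]

/-- Convexity of `w ↦ log ((w+c)/w)` on `(0,∞)`, between `w` and `w+1`: it is minus the
composition of the increasing concave `log` with the concave `w ↦ w/(w+c)`. -/
lemma log_quot_convex {c w t : ℝ} (hc : 0 ≤ c) (hw : 0 < w) (ht : 0 ≤ t) (ht1 : t ≤ 1) :
    Real.log ((w + t + c) / (w + t)) ≤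
      (1 - t) * Real.log ((w + c) / w) + t * Real.log ((w + 1 + c) / (w + 1)) := by
  have h0 : 0 < w + c := by linarith
  have h1 : 0 < w + 1 + c := by linarith
  have h2 : 0 < w + t := by linarith
  have h3 : 0 < w + t + c := by linarith
  have hp : 0 < w / (w + c) := by positivity
  have hq : 0 < (w + 1) / (w + 1 + c) := by positivity
  have hlog := strictConcaveOn_log_Ioi.concaveOn.2 (x := w / (w + c))
    (y := (w + 1) / (w + 1 + c)) hp hq (sub_nonneg.2 ht1) ht (by ring)
  simp only [smul_eq_mul] at hlog
  have hmid : (1 - t) * (w / (w + c)) + t * ((w + 1) / (w + 1 + c)) ≤ (w + t) / (w + t + c) := by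
    have key : (w + t) / (w + t + c) - ((1 - t) * (w / (w + c)) + t * ((w + 1) / (w + 1 + c))) =
        c * (t * (1 - t)) / ((w + t + c) * (w + c) * (w + 1 + c)) := by
      field_simp
      ring
    have : 0 ≤ c * (t * (1 - t)) / ((w + t + c) * (w + c) * (w + 1 + c)) :=
      div_nonneg (mul_nonneg hc (mul_nonneg ht (sub_nonneg.2 ht1))) (by positivity)
    linarith
  have hpos : 0 < (1 - t) * (w / (w + c)) + t * ((w + 1) / (w + 1 + c)) := by
    rcases ht.eq_or_lt with rfl | ht'
    · simpa using hp
    · have := mul_nonneg (sub_nonneg.2 ht1) hp.le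
      have := mul_pos ht' hq
      linarith
  have hlog2 := Real.log_le_log hpos hmid
  rw [← inv_div (w + t), ← inv_div w, ← inv_div (w + 1), Real.log_inv, Real.log_inv, Real.log_inv]
  linarith

/-- Log-convexity of `x ↦ Γ(x)/Γ(x+c)` between `x` and `x+1`. -/
lemma log_gammaQuot_convex {c x t : ℝ} (hc : 0 ≤ c) (hx : 0 < x) (ht : 0 ≤ t) (ht1 : t ≤ 1) :
    Real.log (gammaQuot c (x + t)) ≤
      (1 - t) * Real.log (gammaQuot c x) + t * Real.log (gammaQuot c (x + 1)) := by
  refine le_of_tendsto_of_tendsto' (tendsto_log_gammaQuot hc (by linarith : 0 < x + t))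
    (((tendsto_log_gammaQuot hc hx).const_mul (1 - t)).add
      ((tendsto_log_gammaQuot hc (by linarith : 0 < x + 1)).const_mul t)) fun n => ?_
  have h : ∑ m ∈ Finset.range (n + 1), Real.log ((x + t + m + c) / (x + t + m)) ≤
      (1 - t) * ∑ m ∈ Finset.range (n + 1), Real.log ((x + m + c) / (x + m)) +
        t * ∑ m ∈ Finset.range (n + 1), Real.log ((x + 1 + m + c) / (x + 1 + m)) := by
    rw [Finset.mul_sum, Finset.mul_sum, ← Finset.sum_add_distrib]
    refine Finset.sum_le_sum fun m _ => ?_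
    have := log_quot_convex (w := x + m) hc (by positivity) ht ht1
    rwa [show x + m + t = x + t + m by ring, show x + m + 1 = x + 1 + m by ring] at this
  linarith

/-- Weighted AM-GM, with the geometric mean written through logarithms. -/
lemma le_of_log_le {u v w t : ℝ} (hu : 0 < u) (hv : 0 < v) (hw : 0 < w) (ht : 0 ≤ t) (ht1 : t ≤ 1)
    (h : Real.log u ≤ (1 - t) * Real.log v + t * Real.log w) : u ≤ (1 - t) * v + t * w := by
  have hlog := strictConcaveOn_log_Ioi.concaveOn.2 (x := v) (y := w) hv hw (sub_nonneg.2 ht1) ht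
    (by ring)
  simp only [smul_eq_mul] at hlog
  have hpos : 0 < (1 - t) * v + t * w := by
    rcases ht.eq_or_lt with rfl | ht'
    · simpa using hv
    · have := mul_nonneg (sub_nonneg.2 ht1) hv.le
      have := mul_pos ht' hw
      linarith
  exact (Real.log_le_log_iff hu hpos).1 (h.trans hlog)

/-! ### The two factors of `P` -/

/-- The factor `A(x) = Γ(x+3/2)/Γ(x+ξ+1)` of `P`. -/
noncomputable def Afac (ξ x : ℝ) : ℝ := Real.Gamma (x + 3 / 2) / Real.Gamma (x + ξ + 1)

/-- The factor `B(x) = Γ(x+β-1)Γ(x+β)/(Γ(x+β-ξ+1)Γ(x+β+1/2))` of `P`, where `β = 2𝔟`. -/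
noncomputable def Bfac (β ξ x : ℝ) : ℝ := gammaQuot (2 - ξ) (x + β - 1) * gammaQuot (1 / 2) (x + β)

lemma Afac_pos {ξ x : ℝ} (hx : -1 ≤ x) (hξ : 0 < ξ) : 0 < Afac ξ x :=
  div_pos (Real.Gamma_pos_of_pos (by linarith)) (Real.Gamma_pos_of_pos (by linarith))

lemma Bfac_pos {β ξ x : ℝ} (hβ : 4 < β) (hx : -1 ≤ x) (hξ1 : ξ ≤ 1) : 0 < Bfac β ξ x :=
  mul_pos (gammaQuot_pos (by linarith) (by linarith)) (gammaQuot_pos (by norm_num) (by linarith))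

lemma Bfac_anti {β ξ x s : ℝ} (hβ : 4 < β) (hx : -1 ≤ x) (hξ1 : ξ ≤ 1) (hs : 0 ≤ s) :
    Bfac β ξ (x + s) ≤ Bfac β ξ x := by
  have h1 := gammaQuot_anti (c := 2 - ξ) (x := x + β - 1) (by linarith) (by linarith) hs
  have h2 := gammaQuot_anti (c := 1 / 2) (x := x + β) (by norm_num) (by linarith) hs
  rw [show x + β - 1 + s = x + s + β - 1 by ring] at h1
  rw [show x + β + s = x + s + β by ring] at h2
  exact mul_le_mul h1 h2 (gammaQuot_pos (by norm_num) (by linarith)).le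
    (gammaQuot_pos (by linarith) (by linarith)).le

lemma Bfac_convex {β ξ x t : ℝ} (hβ : 4 < β) (hx : -1 ≤ x) (hξ1 : ξ ≤ 1) (ht : 0 ≤ t)
    (ht1 : t ≤ 1) : Bfac β ξ (x + t) ≤ (1 - t) * Bfac β ξ x + t * Bfac β ξ (x + 1) := by
  refine le_of_log_le (Bfac_pos hβ (by linarith) hξ1) (Bfac_pos hβ hx hξ1)
    (Bfac_pos hβ (by linarith) hξ1) ht ht1 ?_
  have hlog : ∀ y, -1 ≤ y → Real.log (Bfac β ξ y) =
      Real.log (gammaQuot (2 - ξ) (y + β - 1)) + Real.log (gammaQuot (1 / 2) (y + β)) :=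
    fun y hy => Real.log_mul (gammaQuot_pos (by linarith) (by linarith)).ne'
      (gammaQuot_pos (by norm_num) (by linarith)).ne'
  rw [hlog _ hx, hlog (x + t) (by linarith), hlog (x + 1) (by linarith)]
  have h1 := log_gammaQuot_convex (c := 2 - ξ) (x := x + β - 1) (by linarith) (by linarith) ht ht1
  have h2 := log_gammaQuot_convex (c := 1 / 2) (x := x + β) (by norm_num) (by linarith) ht ht1
  rw [show x + β - 1 + t = x + t + β - 1 by ring,
    show x + β - 1 + 1 = x + 1 + β - 1 by ring] at h1
  rw [show x + β + t = x + t + β by ring, show x + β + 1 = x + 1 + β by ring] at h2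
  linarith

lemma Afac_add_one {ξ x : ℝ} (hx : -1 ≤ x) (hξ : 0 < ξ) :
    Afac ξ (x + 1) = Afac ξ x * ((x + 3 / 2) / (x + ξ + 1)) := by
  have h := (Real.Gamma_pos_of_pos (show 0 < x + ξ + 1 by linarith)).ne'
  have h2 : x + ξ + 1 ≠ 0 := by linarith
  have h3 : x + 3 / 2 ≠ 0 := by linarith
  unfold Afac
  rw [show x + 1 + 3 / 2 = (x + 3 / 2) + 1 by ring, show x + 1 + ξ + 1 = (x + ξ + 1) + 1 by ring,
    Real.Gamma_add_one h2, Real.Gamma_add_one h3]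
  field_simp

/-- The one-sided concavity estimate `A(x) - A(x-ξ) ≥ ξ (A(x+1) - A(x))`. The quotient
`A(x-ξ)/A(x)` equals `g(y+1/2-ξ)/g(y)` with `g(y) = Γ(y)/Γ(y+ξ)` and `y = x+1`, so the estimate
is the convexity of `g`. -/
lemma Afac_concave {ξ x : ℝ} (hx : 0 ≤ x) (hξ : 0 < ξ) (hξ2 : ξ < 1 / 2) :
    Afac ξ (x - ξ) ≤ Afac ξ x - ξ * (Afac ξ (x + 1) - Afac ξ x) := by
  have hy : 0 < x + 1 := by linarith
  have ht : 0 ≤ 1 / 2 - ξ := by linarith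
  have ht1 : 1 / 2 - ξ ≤ 1 := by linarith
  have hg := le_of_log_le (gammaQuot_pos hξ.le (by linarith)) (gammaQuot_pos hξ.le hy)
    (gammaQuot_pos hξ.le (by linarith)) ht ht1 (log_gammaQuot_convex hξ.le hy ht ht1)
  rw [gammaQuot_add_one hξ.le hy] at hg
  have hA := Afac_pos (x := x) (by linarith) hξ
  have g1 := Real.Gamma_pos_of_pos hy
  have g2 := Real.Gamma_pos_of_pos (show 0 < x + ξ + 1 by linarith)
  have g3 := Real.Gamma_pos_of_pos (show 0 < x + 3 / 2 by linarith)
  have hq : Afac ξ (x - ξ) =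
      Afac ξ x * (gammaQuot ξ (x + 1 + (1 / 2 - ξ)) / gammaQuot ξ (x + 1)) := by
    unfold Afac gammaQuot
    rw [show x + 1 + (1 / 2 - ξ) + ξ = x + 3 / 2 by ring,
      show x + 1 + (1 / 2 - ξ) = x - ξ + 3 / 2 by ring, show x - ξ + ξ + 1 = x + 1 by ring,
      show x + 1 + ξ = x + ξ + 1 by ring]
    field_simp
  have hr : gammaQuot ξ (x + 1 + (1 / 2 - ξ)) / gammaQuot ξ (x + 1) ≤
      (1 - (1 / 2 - ξ)) + (1 / 2 - ξ) * ((x + 1) / (x + 1 + ξ)) := by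
    rw [div_le_iff₀ (gammaQuot_pos hξ.le hy)]
    linarith
  have hd : x + ξ + 1 ≠ 0 := by linarith
  have hd' : x + 1 + ξ ≠ 0 := by linarith
  rw [hq, Afac_add_one (by linarith) hξ]
  refine (mul_le_mul_of_nonneg_left hr hA.le).trans (le_of_eq ?_)
  field_simp
  ring

/-! ### Telescoping bounds for the partial sums -/

/-- Partial-sum bound for `ξ < 1/2`. -/
lemma sum_le_of_lt_half {β ξ : ℝ} (hβ : 4 < β) (hξ : 0 < ξ) (hξ2 : ξ < 1 / 2) (n : ℕ) :
    ∑ k ∈ Finset.range n, (Afac ξ (k - ξ) * Bfac β ξ (k - ξ) - Afac ξ k * Bfac β ξ k) ≤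
      Afac ξ (-1) * Bfac β ξ (-1) := by
  have hξ1 : ξ ≤ 1 := by linarith
  have hA1 := Afac_pos (ξ := ξ) (le_refl (-1 : ℝ)) hξ
  have hB1 := Bfac_pos hβ (le_refl (-1 : ℝ)) hξ1
  have step : ∀ k : ℕ, Afac ξ (k - ξ) * Bfac β ξ (k - ξ) - Afac ξ k * Bfac β ξ k ≤
      ξ * (Afac ξ k * Bfac β ξ ((k : ℝ) - 1)) -
        ξ * (Afac ξ ((k + 1 : ℕ) : ℝ) * Bfac β ξ (((k + 1 : ℕ) : ℝ) - 1)) := by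
    intro k
    have hk : (0 : ℝ) ≤ k := k.cast_nonneg
    push_cast
    rw [add_sub_cancel_right]
    have hA := Afac_concave hk hξ hξ2
    have hB := Bfac_convex (x := (k : ℝ) - 1) (t := 1 - ξ) hβ (by linarith) hξ1 (by linarith)
      (by linarith)
    have hBa := Bfac_anti (x := (k : ℝ) - 1) (s := 1) hβ (by linarith) hξ1 zero_le_one
    rw [sub_add_cancel] at hB hBa
    rw [show (k : ℝ) - 1 + (1 - ξ) = k - ξ by ring] at hB
    have hAp := Afac_pos (x := (k : ℝ) - ξ) (by linarith) hξ
    have hAk := Afac_pos (x := (k : ℝ)) (by linarith) hξ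
    have hBk := Bfac_pos (x := (k : ℝ)) hβ (by linarith) hξ1
    have hAmono : Afac ξ k ≤ Afac ξ (k + 1) := by
      rw [Afac_add_one (by linarith) hξ]
      refine le_mul_of_one_le_right hAk.le ?_
      rw [one_le_div (by linarith)]
      linarith
    have hAle : Afac ξ (k - ξ) ≤ Afac ξ k := by
      have := mul_nonneg hξ.le (sub_nonneg.2 hAmono)
      linarith
    have e1 := mul_le_mul_of_nonneg_left hB hAp.le
    have e2 := mul_le_mul_of_nonneg_right hA hBk.le
    have e3 := mul_le_mul_of_nonneg_right hAle (mul_nonneg hξ.le (sub_nonneg.2 hBa))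
    linarith
  refine (Finset.sum_le_sum fun k _ => step k).trans ?_
  rw [Finset.sum_range_sub' (fun k : ℕ => ξ * (Afac ξ k * Bfac β ξ ((k : ℝ) - 1)))]
  have hn : (0 : ℝ) ≤ n := n.cast_nonneg
  have hpos := mul_pos hξ (mul_pos (Afac_pos (x := (n : ℝ)) (by linarith) hξ)
    (Bfac_pos (x := (n : ℝ) - 1) hβ (by linarith) hξ1))
  have h0 : Afac ξ 0 = Afac ξ (-1) * ((1 / 2) / ξ) := by
    have := Afac_add_one (le_refl (-1 : ℝ)) hξ
    rw [show (-1 : ℝ) + 1 = 0 by ring, show (-1 : ℝ) + 3 / 2 = 1 / 2 by ring,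
      show -1 + ξ + 1 = ξ by ring] at this
    exact this
  have h1 : ξ * (Afac ξ ((0 : ℕ) : ℝ) * Bfac β ξ (((0 : ℕ) : ℝ) - 1)) =
      Afac ξ (-1) * Bfac β ξ (-1) / 2 := by
    rw [Nat.cast_zero, zero_sub, h0]
    field_simp
  have := mul_pos hA1 hB1
  rw [h1]
  linarith

/-- Partial-sum bound for `ξ ≥ 1/2`, where `A` itself is decreasing. -/
lemma sum_le_of_half_le {β ξ : ℝ} (hβ : 4 < β) (hξ : 1 / 2 ≤ ξ) (hξ1 : ξ ≤ 1) (n : ℕ) :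
    ∑ k ∈ Finset.range n, (Afac ξ (k - ξ) * Bfac β ξ (k - ξ) - Afac ξ k * Bfac β ξ k) ≤
      Afac ξ (-1) * Bfac β ξ (-1) := by
  have hξ0 : 0 < ξ := by linarith
  have step : ∀ k : ℕ, Afac ξ (k - ξ) * Bfac β ξ (k - ξ) - Afac ξ k * Bfac β ξ k ≤
      Afac ξ ((k : ℝ) - 1) * Bfac β ξ ((k : ℝ) - 1) -
        Afac ξ (((k + 1 : ℕ) : ℝ) - 1) * Bfac β ξ (((k + 1 : ℕ) : ℝ) - 1) := by
    intro k
    have hk : (0 : ℝ) ≤ k := k.cast_nonneg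
    push_cast
    rw [add_sub_cancel_right]
    have hA := gammaQuot_anti (c := ξ - 1 / 2) (x := (k : ℝ) + 1 / 2) (s := 1 - ξ) (by linarith)
      (by linarith) (by linarith)
    have hB := Bfac_anti (x := (k : ℝ) - 1) (s := 1 - ξ) hβ (by linarith) hξ1 (by linarith)
    rw [show (k : ℝ) - 1 + (1 - ξ) = k - ξ by ring] at hB
    have hA' : Afac ξ (k - ξ) ≤ Afac ξ ((k : ℝ) - 1) := by
      convert! hA using 1
      · unfold Afac gammaQuot
        congr 2 <;> ring
      · unfold Afac gammaQuot
        congr 2 <;> ring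
    have := mul_le_mul hA' hB (Bfac_pos hβ (by linarith) hξ1).le (Afac_pos (by linarith) hξ0).le
    linarith
  refine (Finset.sum_le_sum fun k _ => step k).trans ?_
  rw [Finset.sum_range_sub' (fun k : ℕ => Afac ξ ((k : ℝ) - 1) * Bfac β ξ ((k : ℝ) - 1))]
  have hn : (0 : ℝ) ≤ n := n.cast_nonneg
  have hpos := mul_pos (Afac_pos (x := (n : ℝ) - 1) (by linarith) hξ0)
    (Bfac_pos (x := (n : ℝ) - 1) hβ (by linarith) hξ1)
  rw [Nat.cast_zero, zero_sub]
  linarith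

lemma Pfun_eq (d : ℕ) (q Λ x : ℝ) :
    Pfun d q Λ x = Afac (xiV d q Λ) x * Bfac (2 * bfrak q) (xiV d q Λ) x := by
  unfold Pfun Afac Bfac gammaQuot xiV
  rw [div_mul_div_comm, div_mul_div_comm, mul_assoc, mul_assoc,
    show x + (bfrak q - afrak d q Λ) + 1 = x + bfrak q - afrak d q Λ + 1 by ring,
    show x + 2 * bfrak q - 1 + (2 - (bfrak q - afrak d q Λ)) =
      x + bfrak q + afrak d q Λ + 1 by ring]

/-- For a sum that need not converge, bounds on the partial sums still bound `∑'`, provided the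
bound is nonnegative, since the junk value is `0`. -/
lemma tsum_le_of_partial {f : ℕ → ℝ} {c : ℝ} (hc : 0 ≤ c)
    (h : ∀ n, ∑ k ∈ Finset.range n, f k ≤ c) : ∑' k, f k ≤ c := by
  by_cases hf : Summable f
  · exact le_of_tendsto' hf.hasSum.tendsto_sum_nat h
  · rwa [tsum_eq_zero_of_not_summable hf]

/-! ### Estimates for the parameters -/

lemma two_lt_bfrak {q : ℝ} (hq : 2 < q) : 2 < bfrak q := by
  unfold bfrak
  rw [lt_div_iff₀ (by linarith)]
  linarith

/-- Subcriticality in a form free of the case distinction on `d`. -/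
lemma subcritical {d : ℕ} (hd : 2 ≤ d) {q : ℝ} (hq' : d = 2 ∨ q < 2 * d / ((d : ℝ) - 2)) :
    ((d : ℝ) - 2) * q < 2 * d := by
  rcases hd.eq_or_lt with h | h
  · rw [← h]
    norm_num
  · have h2 : (2 : ℝ) < d := by exact_mod_cast h
    rcases hq' with h' | h'
    · omega
    · rw [lt_div_iff₀ (by linarith)] at h'
      linarith

lemma xiV_bounds {d : ℕ} (hd : 2 ≤ d) {q : ℝ} (hq : 2 < q) (hsub : ((d : ℝ) - 2) * q < 2 * d) :
    0 < xiV d q (4 * ((d : ℝ) - 1) / (q ^ 2 - 4)) ∧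
      xiV d q (4 * ((d : ℝ) - 1) / (q ^ 2 - 4)) ≤ 1 := by
  have hd' : (2 : ℝ) ≤ d := by exact_mod_cast hd
  have h1 : 0 < (d : ℝ) - 1 := by linarith
  have hq2 : 0 < q - 2 := by linarith
  have hq4 : 0 < q ^ 2 - 4 := by nlinarith
  have harg : 1 + 2 * (d : ℝ) / (4 * ((d : ℝ) - 1) / (q ^ 2 - 4)) =
      1 + d * (q ^ 2 - 4) / (2 * ((d : ℝ) - 1)) := by
    field_simp
    ring
  have hxi : xiV d q (4 * ((d : ℝ) - 1) / (q ^ 2 - 4)) =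
      (2 * q - 3 - Real.sqrt (1 + d * (q ^ 2 - 4) / (2 * ((d : ℝ) - 1)))) / (q - 2) := by
    unfold xiV bfrak afrak
    rw [harg, ← sub_div]
  rw [hxi]
  constructor
  · refine div_pos (sub_pos.2 ?_) hq2
    rw [Real.sqrt_lt' (by linarith)]
    have : d * (q ^ 2 - 4) / (2 * ((d : ℝ) - 1)) ≤ q ^ 2 - 4 := by
      rw [div_le_iff₀ (by linarith)]
      nlinarith
    nlinarith [mul_pos hq2 hq2]
  · rw [div_le_one hq2]
    have : q - 1 ≤ Real.sqrt (1 + d * (q ^ 2 - 4) / (2 * ((d : ℝ) - 1))) := by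
      refine Real.le_sqrt_of_sq_le ?_
      have : q * (q - 2) ≤ d * (q ^ 2 - 4) / (2 * ((d : ℝ) - 1)) := by
        rw [le_div_iff₀ (by linarith)]
        nlinarith
      linarith
    linarith

/-- The part of the expression outside the series exceeds `1`. -/
lemma one_lt_main {d : ℕ} (hd : 2 ≤ d) {q : ℝ} (hq : 2 < q) (hsub : ((d : ℝ) - 2) * q < 2 * d) :
    1 < (3 * q - 4) * ((d : ℝ) + 2) / (4 * (q - 1) * ((d : ℝ) - 1)) -
        (q - 3) * (d : ℝ) / (q * ((d : ℝ) - 1)) := by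
  have hd' : (2 : ℝ) ≤ d := by exact_mod_cast hd
  have h1 : 0 < (d : ℝ) - 1 := by linarith
  have hq1 : 0 < q - 1 := by linarith
  have hq0 : 0 < q := by linarith
  have key : (3 * q - 4) * ((d : ℝ) + 2) / (4 * (q - 1) * ((d : ℝ) - 1)) -
        (q - 3) * (d : ℝ) / (q * ((d : ℝ) - 1)) =
      1 + (5 * q - 6) * (2 * d - (d - 2) * q) / (4 * q * (q - 1) * ((d : ℝ) - 1)) := by
    field_simp
    ring
  have : 0 < (5 * q - 6) * (2 * d - (d - 2) * q) / (4 * q * (q - 1) * ((d : ℝ) - 1)) :=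
    div_pos (mul_pos (by linarith) (by linarith)) (by positivity)
  linarith

/-- Positivity of the constant J(q,d). For an integer `d ≥ 2` and
`2 < q < 2d/(d-2)` (`2 < q` if `d = 2`), with Λ the Felli–Schneider value, one has
`(3q-4)(d+2)/(4(q-1)(d-1)) - (q-3)d/(q(d-1)) - (1/P(-1)) Σ (P(k-ξ)-P(k)) > 0`, and
equivalently `J(q,d) > 0`. -/
theorem J_positive (d : ℕ) (hd : 2 ≤ d) (q : ℝ) (hq : 2 < q)
    (hq' : d = 2 ∨ q < 2 * d / ((d : ℝ) - 2)) :
    (0 : ℝ) <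
      (3 * q - 4) * ((d : ℝ) + 2) / (4 * (q - 1) * ((d : ℝ) - 1)) -
        (q - 3) * (d : ℝ) / (q * ((d : ℝ) - 1)) -
        (∑' k : ℕ, (Pfun d q (4 * ((d : ℝ) - 1) / (q ^ 2 - 4)) ((k : ℝ) - xiV d q (4 * ((d : ℝ) - 1) / (q ^ 2 - 4)))
            - Pfun d q (4 * ((d : ℝ) - 1) / (q ^ 2 - 4)) (k : ℝ))) /
          Pfun d q (4 * ((d : ℝ) - 1) / (q ^ 2 - 4)) (-1) ∧
    (0 : ℝ) < Jconst d q (4 * ((d : ℝ) - 1) / (q ^ 2 - 4)) := by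
  have hsub := subcritical hd hq'
  obtain ⟨hξ, hξ1⟩ := xiV_bounds hd hq hsub
  have hmain := one_lt_main hd hq hsub
  have hβ : 4 < 2 * bfrak q := by linarith [two_lt_bfrak hq]
  have hd' : (2 : ℝ) ≤ d := by exact_mod_cast hd
  have h1 : 0 < (d : ℝ) - 1 := by linarith
  have hq1 : 0 < q - 1 := by linarith
  have hq0 : 0 < q := by linarith
  unfold Jconst
  rw [tsum_div_const]
  generalize 4 * ((d : ℝ) - 1) / (q ^ 2 - 4) = Λ at *
  have hP : 0 < Pfun d q Λ (-1) := by
    rw [Pfun_eq]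
    exact mul_pos (Afac_pos le_rfl hξ) (Bfac_pos hβ le_rfl hξ1)
  have hsum : ∑' k : ℕ, (Pfun d q Λ ((k : ℝ) - xiV d q Λ) - Pfun d q Λ (k : ℝ)) ≤
      Pfun d q Λ (-1) := by
    refine tsum_le_of_partial hP.le fun n => ?_
    simp only [Pfun_eq]
    rcases lt_or_ge (xiV d q Λ) (1 / 2) with h | h
    · exact sum_le_of_lt_half hβ hξ h n
    · exact sum_le_of_half_le hβ h hξ1 n
  have hdiv := (div_le_one hP).2 hsum
  generalize (∑' k : ℕ, (Pfun d q Λ ((k : ℝ) - xiV d q Λ) - Pfun d q Λ (k : ℝ))) /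
    Pfun d q Λ (-1) = S at *
  have hfirst : 0 < (3 * q - 4) * ((d : ℝ) + 2) / (4 * (q - 1) * ((d : ℝ) - 1)) -
        (q - 3) * (d : ℝ) / (q * ((d : ℝ) - 1)) - S := by linarith
  refine ⟨hfirst, mul_pos (div_pos (mul_pos (by linarith) (by linarith)) (by linarith)) ?_⟩
  -- the bracket in `J` is `(d-1)/(d+2)` times the first expression
  have hscale : (3 * q - 4) / (4 * (q - 1)) - (q - 3) * d / (q * (d + 2)) -
      ((d : ℝ) - 1) / (d + 2) * S = ((d : ℝ) - 1) / (d + 2) *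
        ((3 * q - 4) * ((d : ℝ) + 2) / (4 * (q - 1) * ((d : ℝ) - 1)) -
          (q - 3) * (d : ℝ) / (q * ((d : ℝ) - 1)) - S) := by
    field_simp
  rw [hscale]
  exact mul_pos (div_pos h1 (by linarith)) hfirst
end
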